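/- There exist a Borel probability measure μ on [0,1] and a sequence (m^k,q^k)_{k≥1}, where each (m^k,q^k) minimizes P(·;β) among discrete order parameters with at most k atoms, such that the probability measures on [0,1] assigning mass m^k_l − m^k_{l−1} to the point q^k_l (1 ≤ l ≤ k) converge weakly to μ, P(m^k,q^k;β) → P(β), and for every p ∈ S the partial derivative ∂P(β)/∂β_p exists and equals β_p (1 − ∫_0^1 q^p dμ(q)). -/

import Mathlib

open MeasureTheory ProbabilityTheory Real Filter Topology

noncomputable section

/-- The centered Gaussian measure on `ℝ` with variance `v` (Dirac at `0` if `v ≤ 0`). -/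
def gauss (v : ℝ) : Measure ℝ := gaussianReal 0 v.toNNReal

/-- `ξ(x) = Σ_{p ∈ S} β_p^2 x^p`. -/
def xiFn (S : Finset ℕ) (β : ℕ → ℝ) (x : ℝ) : ℝ := ∑ p ∈ S, β p ^ 2 * x ^ p

/-- `ξ'(x) = Σ_{p ∈ S} β_p^2 p x^(p-1)`. -/
def xiFn' (S : Finset ℕ) (β : ℕ → ℝ) (x : ℝ) : ℝ := ∑ p ∈ S, β p ^ 2 * p * x ^ (p - 1)

/-- `θ(x) = x ξ'(x) - ξ(x)`. -/
def thetaFn (S : Finset ℕ) (β : ℕ → ℝ) (x : ℝ) : ℝ := x * xiFn' S β x - xiFn S β x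

/-- A discrete order parameter with at most `k` atoms:
`0 = m_0 ≤ m_1 ≤ ⋯ ≤ m_k = 1` with `m_l > 0` for `1 ≤ l ≤ k`,
and `0 = q_0 ≤ q_1 ≤ ⋯ ≤ q_k ≤ q_{k+1} = 1`. -/
structure OrderParam (k : ℕ) where
  m : ℕ → ℝ
  q : ℕ → ℝ
  m_zero : m 0 = 0
  m_last : m k = 1
  m_mono : ∀ l, l < k → m l ≤ m (l + 1)
  m_pos : ∀ l, 1 ≤ l → l ≤ k → 0 < m l
  q_zero : q 0 = 0
  q_last : q (k + 1) = 1
  q_mono : ∀ l, l ≤ k → q l ≤ q (l + 1)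

/-- The recursively defined functions of the Parisi functional:
`parisiB m v k j = A_{k-j}`, so `parisiB m v k 0 = A_k = log cosh` and
`parisiB m v k k = A_0`, where
`A_{l-1}(x) = (1/m_l) log ∫ exp (m_l A_l (x+y)) dγ_{v_l}(y)`. -/
def parisiB (m v : ℕ → ℝ) (k : ℕ) : ℕ → ℝ → ℝ
  | 0, x => Real.log (Real.cosh x)
  | j + 1, x =>
      (1 / m (k - j)) *
        Real.log (∫ y, Real.exp (m (k - j) * parisiB m v k j (x + y)) ∂(gauss (v (k - j))))

/-- The variances `v_0 = ξ'(q_1)` and `v_l = ξ'(q_{l+1}) - ξ'(q_l)` for `l ≥ 1`. -/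
def opVar (S : Finset ℕ) (β : ℕ → ℝ) {k : ℕ} (op : OrderParam k) : ℕ → ℝ := fun l =>
  if l = 0 then xiFn' S β (op.q 1) else xiFn' S β (op.q (l + 1)) - xiFn' S β (op.q l)

/-- The discrete Parisi functional
`P(m,q;β) = ∫ A_0(h+y) dγ_{v_0}(y) - (1/2) Σ_{1≤l≤k} m_l (θ(q_{l+1}) - θ(q_l))`. -/
def parisiP (S : Finset ℕ) (h : ℝ) (β : ℕ → ℝ) {k : ℕ} (op : OrderParam k) : ℝ :=
  (∫ y, parisiB op.m (opVar S β op) k k (h + y) ∂(gauss (opVar S β op 0))) -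
    (1 / 2) * ∑ l ∈ Finset.Icc 1 k, op.m l * (thetaFn S β (op.q (l + 1)) - thetaFn S β (op.q l))

/-- The Parisi formula: infimum over `k ≥ 1` and discrete order parameters with at
most `k` atoms. -/
def parisiF (S : Finset ℕ) (h : ℝ) (β : ℕ → ℝ) : ℝ :=
  sInf {x : ℝ | ∃ k : ℕ, 1 ≤ k ∧ ∃ op : OrderParam k, x = parisiP S h β op}

namespace PF

/-- The standard Gaussian measure. -/
abbrev gam : Measure ℝ := gaussianReal 0 1

/-- Measurable functions of at most exponential growth. -/
def EB (f : ℝ → ℝ) : Prop :=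
  Measurable f ∧ ∃ C c : ℝ, 0 ≤ C ∧ 0 ≤ c ∧ ∀ g, |f g| ≤ C * exp (c * |g|)

lemma integrable_exp_abs (c : ℝ) : Integrable (fun g : ℝ => exp (c * |g|)) gam := by
  have h1 : Integrable (fun g : ℝ => exp (c * g) + exp (-c * g)) gam :=
    (integrable_exp_mul_gaussianReal c).add (integrable_exp_mul_gaussianReal (-c))
  refine h1.mono (by fun_prop) (Eventually.of_forall fun g => ?_)
  rw [norm_of_nonneg (exp_pos _).le, norm_of_nonneg (by positivity)]
  rcases abs_cases g with ⟨h, _⟩ | ⟨h, _⟩ <;> rw [h]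
  · linarith [exp_pos (-c * g)]
  · have : c * -g = -c * g := by ring
    rw [this]; linarith [exp_pos (c * g)]

lemma EB.integrable {f : ℝ → ℝ} (h : EB f) : Integrable f gam := by
  obtain ⟨hm, C, c, hC, hc, hb⟩ := h
  refine ((integrable_exp_abs c).const_mul C).mono hm.aestronglyMeasurable
    (Eventually.of_forall fun g => ?_)
  rw [norm_eq_abs, norm_of_nonneg (by positivity)]
  exact hb g

lemma EB.const (a : ℝ) : EB (fun _ => a) :=
  ⟨measurable_const, |a|, 0, abs_nonneg _, le_rfl, fun g => by simp⟩

lemma EB.add {f g : ℝ → ℝ} (hf : EB f) (hg : EB g) : EB (fun x => f x + g x) := by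
  obtain ⟨hm, C, c, hC, hc, hb⟩ := hf
  obtain ⟨hm', C', c', hC', hc', hb'⟩ := hg
  refine ⟨hm.add hm', C + C', c + c', by positivity, by positivity, fun x => ?_⟩
  calc |f x + g x| ≤ |f x| + |g x| := abs_add_le _ _
    _ ≤ C * exp (c * |x|) + C' * exp (c' * |x|) := add_le_add (hb x) (hb' x)
    _ ≤ C * exp ((c + c') * |x|) + C' * exp ((c + c') * |x|) := by
      gcongr <;> linarith
    _ = _ := by ring

lemma EB.mul {f g : ℝ → ℝ} (hf : EB f) (hg : EB g) : EB (fun x => f x * g x) := by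
  obtain ⟨hm, C, c, hC, hc, hb⟩ := hf
  obtain ⟨hm', C', c', hC', hc', hb'⟩ := hg
  refine ⟨hm.mul hm', C * C', c + c', by positivity, by positivity, fun x => ?_⟩
  calc |f x * g x| = |f x| * |g x| := abs_mul _ _
    _ ≤ (C * exp (c * |x|)) * (C' * exp (c' * |x|)) := by gcongr; exacts [hb x, hb' x]
    _ = _ := by rw [add_mul, exp_add]; ring

lemma EB.neg {f : ℝ → ℝ} (hf : EB f) : EB (fun x => - f x) := by
  obtain ⟨hm, C, c, hC, hc, hb⟩ := hf
  exact ⟨hm.neg, C, c, hC, hc, fun x => by rw [abs_neg]; exact hb x⟩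

lemma EB.sub {f g : ℝ → ℝ} (hf : EB f) (hg : EB g) : EB (fun x => f x - g x) := by
  simpa [sub_eq_add_neg] using hf.add hg.neg

lemma EB.abs {f : ℝ → ℝ} (hf : EB f) : EB (fun x => |f x|) := by
  obtain ⟨hm, C, c, hC, hc, hb⟩ := hf
  exact ⟨hm.abs, C, c, hC, hc, fun x => by rw [abs_abs]; exact hb x⟩

lemma EB.pow {f : ℝ → ℝ} (hf : EB f) (n : ℕ) : EB (fun x => f x ^ n) := by
  induction n with
  | zero => simpa using EB.const 1
  | succ n ih => simpa [pow_succ] using ih.mul hf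

lemma EB.id : EB (fun x => x) := by
  refine ⟨measurable_id, 1, 1, by norm_num, by norm_num, fun g => ?_⟩
  have := add_one_le_exp |g|
  simp only [one_mul]; linarith

lemma EB.constmul {f : ℝ → ℝ} (a : ℝ) (hf : EB f) : EB (fun x => a * f x) := (EB.const a).mul hf

lemma EB.divconst {f : ℝ → ℝ} (hf : EB f) (a : ℝ) : EB (fun x => f x / a) := by
  simpa [div_eq_mul_inv] using hf.mul (EB.const a⁻¹)

lemma EB.affine {f : ℝ → ℝ} (hf : EB f) (a s : ℝ) : EB (fun g => f (a + s * g)) := by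
  obtain ⟨hm, C, c, hC, hc, hb⟩ := hf
  refine ⟨hm.comp (by fun_prop), C * exp (c * |a|), c * |s|, by positivity, by positivity,
    fun g => (hb _).trans ?_⟩
  rw [mul_assoc, ← exp_add]
  gcongr
  have : |a + s * g| ≤ |a| + |s| * |g| := (abs_add_le _ _).trans (by rw [abs_mul])
  calc c * |a + s * g| ≤ c * (|a| + |s| * |g|) := by gcongr
    _ = _ := by ring

/-- exponentials of functions with linear growth -/
lemma EB.exp {f : ℝ → ℝ} (hm : Measurable f) (C c : ℝ) (hc : 0 ≤ c)
    (hb : ∀ g, f g ≤ C + c * |g|) : EB (fun g => exp (f g)) := by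
  refine ⟨measurable_exp.comp hm, Real.exp C, c, by positivity, hc, fun g => ?_⟩
  rw [abs_of_pos (exp_pos _), ← exp_add]
  exact exp_le_exp.2 (hb g)

lemma EB.of_bound {f g : ℝ → ℝ} (hm : Measurable f) (hg : EB g) (h : ∀ x, |f x| ≤ g x) :
    EB f := by
  obtain ⟨_, C, c, hC, hc, hb⟩ := hg
  exact ⟨hm, C, c, hC, hc, fun x => (h x).trans ((le_abs_self _).trans (hb x))⟩

/-- 1-Lipschitz functions. -/
def L1 (A : ℝ → ℝ) : Prop := ∀ x y, |A x - A y| ≤ |x - y|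

lemma L1.continuous {A : ℝ → ℝ} (h : L1 A) : Continuous A := by
  have : LipschitzWith 1 A := LipschitzWith.of_dist_le_mul fun x y => by
    simpa [Real.dist_eq] using h x y
  exact this.continuous

lemma L1.measurable {A : ℝ → ℝ} (h : L1 A) : Measurable A := h.continuous.measurable

lemma L1.bound {A : ℝ → ℝ} (h : L1 A) (x y : ℝ) : |A (x + y)| ≤ |A x| + |y| := by
  have := h (x + y) x
  rw [add_sub_cancel_left] at this
  have h2 := abs_add_le (A (x + y) - A x) (A x)
  rw [sub_add_cancel] at h2
  linarith

lemma L1.EB {A : ℝ → ℝ} (h : L1 A) : EB A :=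
  EB.of_bound (g := fun x => |A 0| + |x|) h.measurable ((EB.const _).add EB.id.abs)
    (fun x => by simpa using h.bound 0 x)

lemma L1.EBexp {A : ℝ → ℝ} (h : L1 A) (m : ℝ) : PF.EB (fun g => exp (m * A g)) := by
  refine EB.exp (h.measurable.const_mul m) (|m| * |A 0|) |m| (abs_nonneg _) (fun g => ?_)
  have := h.bound 0 g
  simp only [zero_add] at this
  calc m * A g ≤ |m * A g| := le_abs_self _
    _ = |m| * |A g| := abs_mul _ _
    _ ≤ |m| * (|A 0| + |g|) := by gcongr
    _ = _ := by ring

lemma L1.shift {A : ℝ → ℝ} (h : L1 A) (a : ℝ) : L1 (fun x => A (x + a)) := fun x y => by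
  simpa using h (x + a) (y + a)

/- Gaussian identities -/

lemma gauss_eq_map (v : ℝ) : gauss v = gam.map (fun g => √v * g) := by
  rw [gauss, gaussianReal_map_const_mul]
  congr 1
  · simp
  · ext
    rcases le_total 0 v with h | h
    · simp [Real.coe_toNNReal _ h, Real.sq_sqrt h]
    · simp [Real.toNNReal_of_nonpos h, Real.sqrt_eq_zero_of_nonpos h]

lemma integral_gauss {f : ℝ → ℝ} (hf : Measurable f) (v : ℝ) :
    ∫ y, f y ∂(gauss v) = ∫ g, f (√v * g) ∂gam := by
  rw [gauss_eq_map, integral_map (by fun_prop) hf.aestronglyMeasurable]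

lemma girsanov (f : ℝ → ℝ) (s : ℝ) :
    ∫ g, f (g + s) ∂gam = ∫ g, exp (s * g - s ^ 2 / 2) * f g ∂gam := by
  rw [integral_gaussianReal_eq_integral_smul one_ne_zero,
    integral_gaussianReal_eq_integral_smul one_ne_zero,
    ← integral_add_right_eq_self _ s]
  conv_rhs => rw [← integral_add_right_eq_self _ s]
  rw [integral_add_right_eq_self (fun x => gaussianPDFReal 0 1 x • f (x + s)) s]
  congr 1; ext x
  simp only [smul_eq_mul, gaussianPDFReal]
  rw [← mul_assoc, mul_assoc _ (rexp _) (rexp _), ← exp_add]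
  congr 4
  simp; ring

lemma integral_neg_gam (f : ℝ → ℝ) : ∫ g, f (-g) ∂gam = ∫ g, f g ∂gam := by
  rw [integral_gaussianReal_eq_integral_smul one_ne_zero,
    integral_gaussianReal_eq_integral_smul one_ne_zero,
    ← integral_neg_eq_self]
  congr 1; ext x
  simp [gaussianPDFReal]

lemma conv_gam {f : ℝ → ℝ} (hf : EB f) {v w : ℝ} (hv : 0 ≤ v) (hw : 0 ≤ w) (x : ℝ) :
    ∫ g, ∫ g', f (x + √v * g + √w * g') ∂gam ∂gam = ∫ g, f (x + √(v + w) * g) ∂gam := by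
  have hf' : Measurable (fun y => f (x + y)) := hf.1.comp (by fun_prop)
  have h1 : gauss (v + w) = gauss v ∗ gauss w := by
    rw [gauss, gauss, gauss, gaussianReal_conv_gaussianReal, Real.toNNReal_add hv hw]; simp
  have h2 := integral_gauss hf' (v + w)
  have hIntg : Integrable (fun y => f (x + y)) (gauss (v + w)) := by
    rw [gauss_eq_map, integrable_map_measure hf'.aestronglyMeasurable (by fun_prop)]
    exact (hf.affine x _).integrable
  haveI : IsProbabilityMeasure (gauss w) := by unfold gauss; infer_instance
  haveI : IsProbabilityMeasure (gauss v) := by unfold gauss; infer_instance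
  rw [h1, integral_conv (by rw [← h1]; exact hIntg)] at h2
  rw [← h2, integral_gauss (f := fun y => ∫ z, f (x + (y + z)) ∂gauss w)]
  · congr 1; ext g
    rw [integral_gauss (f := fun z => f (x + (√v * g + z))) (hf.1.comp (by fun_prop))]
    simp [add_assoc]
  · have : Measurable (Function.uncurry fun y z : ℝ => f (x + (y + z))) :=
      hf.1.comp (by fun_prop)
    exact (this.stronglyMeasurable.integral_prod_right).measurable

lemma integral_id_gam : ∫ g, g ∂gam = 0 := integral_id_gaussianReal

lemma integral_sq_gam : ∫ g, g ^ 2 ∂gam = 1 := by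
  have h := variance_id_gaussianReal (μ := 0) (v := 1)
  rw [variance_eq_integral (by fun_prop)] at h
  simpa using h

lemma integral_exp_gam (s : ℝ) : ∫ g, exp (s * g) ∂gam = exp (s ^ 2 / 2) := by
  have := congrFun (mgf_id_gaussianReal (μ := 0) (v := 1)) s
  simp [mgf] at this
  rw [this]

end PF

namespace PF

/-- One step of the Parisi recursion. -/
def T (m v : ℝ) (A : ℝ → ℝ) (x : ℝ) : ℝ :=
  if m = 0 then ∫ g, A (x + √v * g) ∂gam
  else (1 / m) * log (∫ g, exp (m * A (x + √v * g)) ∂gam)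

/-- Partition function. -/
def Zt (m v : ℝ) (A : ℝ → ℝ) (x : ℝ) : ℝ := ∫ g, exp (m * A (x + √v * g)) ∂gam

/-- Tilted expectation. -/
def Ev (m v : ℝ) (A f : ℝ → ℝ) (x : ℝ) : ℝ :=
  (∫ g, exp (m * A (x + √v * g)) * f (x + √v * g) ∂gam) / Zt m v A x

lemma T_zero (v : ℝ) (A : ℝ → ℝ) (x : ℝ) : T 0 v A x = ∫ g, A (x + √v * g) ∂gam := by simp [T]

lemma T_ne {m : ℝ} (hm : m ≠ 0) (v : ℝ) (A : ℝ → ℝ) (x : ℝ) :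
    T m v A x = (1 / m) * log (Zt m v A x) := by simp [T, hm, Zt]

lemma L1.EBs {A : ℝ → ℝ} (h : L1 A) (x s : ℝ) : PF.EB (fun g => A (x + s * g)) := h.EB.affine x s

lemma L1.EBe {A : ℝ → ℝ} (h : L1 A) (m x s : ℝ) : PF.EB (fun g => exp (m * A (x + s * g))) :=
  (h.EBexp m).affine x s

lemma Zt_pos {A : ℝ → ℝ} (h : L1 A) (m v x : ℝ) : 0 < Zt m v A x :=
  integral_exp_pos (h.EBe m x _).integrable

lemma exp_T {A : ℝ → ℝ} (h : L1 A) {m : ℝ} (hm : m ≠ 0) (v x : ℝ) :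
    exp (m * T m v A x) = Zt m v A x := by
  rw [T_ne hm, ← mul_assoc, mul_one_div_cancel hm, one_mul, exp_log (Zt_pos h m v x)]

lemma T_shift (m v : ℝ) (A : ℝ → ℝ) (x y : ℝ) :
    T m v A (x + y) = T m v (fun z => A (z + y)) x := by
  have : ∀ g, x + y + √v * g = x + √v * g + y := fun g => by ring
  simp [T, this]

lemma Ev_nonneg {A f : ℝ → ℝ} (h : L1 A) (m v x : ℝ) (hf : ∀ y, 0 ≤ f y) : 0 ≤ Ev m v A f x :=
  div_nonneg (integral_nonneg fun g => mul_nonneg (exp_pos _).le (hf _)) (Zt_pos h m v x).le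

lemma Ev_mul_Zt {A f : ℝ → ℝ} (h : L1 A) (m v x : ℝ) :
    Ev m v A f x * Zt m v A x = ∫ g, exp (m * A (x + √v * g)) * f (x + √v * g) ∂gam := by
  rw [Ev, div_mul_cancel₀ _ (Zt_pos h m v x).ne']

lemma Ev_sub {A f f' : ℝ → ℝ} (h : L1 A) (m v x : ℝ) (hf : EB f) (hf' : EB f') :
    Ev m v A (fun y => f y - f' y) x = Ev m v A f x - Ev m v A f' x := by
  rw [Ev, Ev, Ev, ← sub_div, ← integral_sub ((h.EBe m x _).mul (hf.affine x _)).integrable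
    ((h.EBe m x _).mul (hf'.affine x _)).integrable]
  simp [mul_sub]

lemma Ev_mono {A f f' : ℝ → ℝ} (h : L1 A) (m v x : ℝ) (hf : EB f) (hf' : EB f')
    (hle : ∀ y, f y ≤ f' y) : Ev m v A f x ≤ Ev m v A f' x := by
  have := Ev_nonneg (f := fun y => f' y - f y) h m v x (fun y => sub_nonneg.2 (hle y))
  rw [Ev_sub h m v x hf' hf] at this
  linarith

lemma Ev_const {A : ℝ → ℝ} (h : L1 A) (m v x c : ℝ) : Ev m v A (fun _ => c) x = c := by
  rw [Ev, integral_mul_const, ← Zt, mul_div_cancel_left₀ _ (Zt_pos h m v x).ne']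

lemma Ev_constmul {A : ℝ → ℝ} (f : ℝ → ℝ) (m v x c : ℝ) :
    Ev m v A (fun y => c * f y) x = c * Ev m v A f x := by
  rw [Ev, Ev, ← mul_div_assoc, ← integral_const_mul]
  congr 2; ext g; ring

lemma Ev_add {A f f' : ℝ → ℝ} (h : L1 A) (m v x : ℝ) (hf : EB f) (hf' : EB f') :
    Ev m v A (fun y => f y + f' y) x = Ev m v A f x + Ev m v A f' x := by
  rw [Ev, Ev, Ev, ← add_div, ← integral_add ((h.EBe m x _).mul (hf.affine x _)).integrable
    ((h.EBe m x _).mul (hf'.affine x _)).integrable]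
  simp [mul_add]

lemma Ev_zero (v : ℝ) (A f : ℝ → ℝ) (x : ℝ) : Ev 0 v A f x = ∫ g, f (x + √v * g) ∂gam := by
  simp [Ev, Zt]

/-- Gibbs variational inequality. -/
lemma gibbs {A B : ℝ → ℝ} (hA : L1 A) (hB : L1 B) {m : ℝ} (hm : 0 ≤ m) (v x : ℝ) :
    T m v A x + Ev m v A (fun y => B y - A y) x ≤ T m v B x := by
  rcases hm.eq_or_lt with rfl | hm
  · rw [Ev_zero, T_zero, T_zero, integral_sub (hB.EBs x _).integrable (hA.EBs x _).integrable]
    linarith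
  set c := Ev m v A (fun y => B y - A y) x with hc
  have key : exp (m * c) * Zt m v A x ≤ Zt m v B x := by
    have h1 : exp (m * c) * Zt m v A x = ∫ g, exp (m * c) * (exp (m * A (x + √v * g)) +
        (m * (exp (m * A (x + √v * g)) * (B (x + √v * g) - A (x + √v * g)))
          - m * c * exp (m * A (x + √v * g)))) ∂gam := by
      rw [integral_const_mul, integral_add, integral_sub, integral_const_mul, integral_const_mul,
        ← Ev_mul_Zt (f := fun y => B y - A y) hA, ← hc, ← Zt]
      · ring
      · exact (((hA.EBe m x _).mul ((hB.EBs x _).sub (hA.EBs x _))).constmul m).integrable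
      · exact ((hA.EBe m x _).constmul _).integrable
      · exact (hA.EBe m x _).integrable
      · exact ((((hA.EBe m x _).mul ((hB.EBs x _).sub (hA.EBs x _))).constmul m).sub
          ((hA.EBe m x _).constmul _)).integrable
    rw [h1]
    refine integral_mono ?_ (hB.EBe m x _).integrable (fun g => ?_)
    · exact (((hA.EBe m x _).add ((((hA.EBe m x _).mul ((hB.EBs x _).sub (hA.EBs x _))).constmul
        m).sub ((hA.EBe m x _).constmul _))).constmul _).integrable
    · dsimp only
      set a := A (x + √v * g)
      set b := B (x + √v * g)
      have h2 : exp (m * b) = exp (m * c) * (exp (m * a) * exp (m * (b - a) - m * c)) := by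
        rw [← exp_add, ← exp_add]; congr 1; ring
      rw [h2]
      have h3 := add_one_le_exp (m * (b - a) - m * c)
      have h4 : exp (m * a) + (m * (exp (m * a) * (b - a)) - m * c * exp (m * a)) =
        exp (m * a) * (m * (b - a) - m * c + 1) := by ring
      rw [h4]
      gcongr
  have hl := log_le_log (mul_pos (exp_pos _) (Zt_pos hA m v x)) key
  rw [log_mul (exp_pos _).ne' (Zt_pos hA m v x).ne', log_exp] at hl
  rw [T_ne hm.ne', T_ne hm.ne']
  have : c = 1 / m * (m * c) := by field_simp
  rw [this, ← mul_add]
  gcongr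
  linarith

lemma T_mono {A B : ℝ → ℝ} (hA : L1 A) (hB : L1 B) {m : ℝ} (hm : 0 ≤ m) (v x : ℝ)
    (h : ∀ y, A y ≤ B y) : T m v A x ≤ T m v B x := by
  have := gibbs hA hB hm v x
  have h2 := Ev_nonneg (f := fun y => B y - A y) hA m v x (fun y => sub_nonneg.2 (h y))
  linarith

lemma L1.addconst {A : ℝ → ℝ} (h : L1 A) (c : ℝ) : L1 (fun x => A x + c) := fun x y => by
  simpa using h x y

lemma T_addconst {A : ℝ → ℝ} (hA : L1 A) (m v x c : ℝ) :
    T m v (fun y => A y + c) x = T m v A x + c := by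
  by_cases hm : m = 0
  · subst hm
    rw [T_zero, T_zero, integral_add (hA.EBs x _).integrable (integrable_const _)]
    simp
  · rw [T_ne hm, T_ne hm]
    have : Zt m v (fun y => A y + c) x = Zt m v A x * exp (m * c) := by
      rw [Zt, Zt, ← integral_mul_const]
      congr 1; ext g; rw [← exp_add]; congr 1; ring
    rw [this, log_mul (Zt_pos hA m v x).ne' (exp_pos _).ne', log_exp]
    field_simp

lemma T_L1 {A : ℝ → ℝ} (hA : L1 A) {m : ℝ} (hm : 0 ≤ m) (v : ℝ) : L1 (T m v A) := by
  have key : ∀ x d, T m v A (x + d) ≤ T m v A x + |d| := fun x d => by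
    rw [T_shift, ← T_addconst hA]
    refine T_mono (hA.shift d) (hA.addconst _) hm v x (fun y => ?_)
    have := hA (y + d) y
    rw [add_sub_cancel_left] at this
    linarith [le_abs_self (A (y + d) - A y)]
  intro x y
  rw [abs_sub_le_iff]
  constructor
  · have := key y (x - y); rw [add_sub_cancel] at this; linarith
  · have := key x (y - x); rw [add_sub_cancel, abs_sub_comm] at this; linarith

lemma T_zerovar (m : ℝ) (A : ℝ → ℝ) (x : ℝ) : T m 0 A x = A x := by
  by_cases hm : m = 0
  · subst hm; simp [T_zero]
  · rw [T_ne hm, Zt]; simp [hm]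

lemma T_zerovar' (m : ℝ) (A : ℝ → ℝ) : T m 0 A = A := funext (T_zerovar m A)

lemma T_semigroup {A : ℝ → ℝ} (hA : L1 A) (m : ℝ) {v w : ℝ} (hv : 0 ≤ v) (hw : 0 ≤ w) (x : ℝ) :
    T m v (T m w A) x = T m (v + w) A x := by
  by_cases hm : m = 0
  · subst hm
    simp only [T_zero]
    exact conv_gam hA.EB hv hw x
  · rw [T_ne hm, T_ne hm]
    congr 2
    rw [Zt]
    simp_rw [exp_T hA hm]
    exact conv_gam (hA.EBexp m) hv hw x

lemma T_zero_le {A : ℝ → ℝ} (hA : L1 A) {m : ℝ} (hm : 0 ≤ m) (v x : ℝ) :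
    T 0 v A x ≤ T m v A x := by
  rcases hm.eq_or_lt with rfl | hm
  · rfl
  rw [T_ne hm.ne', T_zero]
  set c := ∫ g, A (x + √v * g) ∂gam with hc
  have key : exp (m * c) ≤ Zt m v A x := by
    have h1 : exp (m * c) = ∫ g, exp (m * c) * (1 + (m * A (x + √v * g) - m * c)) ∂gam := by
      rw [integral_const_mul, integral_add (integrable_const _)
        (((hA.EBs x _).constmul m).sub (EB.const _)).integrable,
        integral_sub ((hA.EBs x _).constmul m).integrable (integrable_const _),
        integral_const_mul, ← hc]
      simp
    rw [h1, Zt]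
    refine integral_mono ?_ (hA.EBe m x _).integrable (fun g => ?_)
    · exact (((EB.const 1).add (((hA.EBs x _).constmul m).sub (EB.const _))).constmul _).integrable
    · dsimp only
      have h3 := add_one_le_exp (m * A (x + √v * g) - m * c)
      calc exp (m * c) * (1 + (m * A (x + √v * g) - m * c)) ≤
          exp (m * c) * exp (m * A (x + √v * g) - m * c) := by gcongr; linarith
        _ = _ := by rw [← exp_add]; congr 1; ring
  have hl := log_le_log (exp_pos _) key
  rw [log_exp] at hl
  calc c = 1 / m * (m * c) := by field_simp
    _ ≤ _ := by gcongr

lemma exp_le_quad (y : ℝ) : exp y ≤ 1 + y + y ^ 2 * exp |y| := by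
  have h := Real.abs_exp_sub_one_sub_id_le (x := y)
  by_cases hy : |y| ≤ 1
  · have := h hy
    have h1 : (1:ℝ) ≤ exp |y| := one_le_exp (abs_nonneg _)
    have h2 := le_abs_self (exp y - 1 - y)
    nlinarith [sq_nonneg y]
  · push Not at hy
    rcases le_total 0 y with h0 | h0
    · rw [abs_of_nonneg h0] at hy ⊢
      have := exp_pos y
      nlinarith [mul_pos this (by linarith : 0 < y - 1)]
    · rw [abs_of_nonpos h0] at hy ⊢
      have h1 : exp y ≤ 1 := exp_le_one_iff.2 h0
      have h2 := add_one_le_exp (-y)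
      nlinarith [sq_nonneg y]

lemma exp_abs_EB {f : ℝ → ℝ} (hm : Measurable f) (C c : ℝ) (hc : 0 ≤ c)
    (hb : ∀ g, |f g| ≤ C + c * |g|) : EB (fun g => exp |f g|) :=
  EB.exp hm.abs C c hc hb

lemma T_le {A : ℝ → ℝ} (hA : L1 A) {m : ℝ} (hm : 0 ≤ m) (hm1 : m ≤ 1) (v x : ℝ) :
    T m v A x ≤ (∫ g, A (x + √v * g) ∂gam) +
      m * ∫ g, A (x + √v * g) ^ 2 * exp |A (x + √v * g)| ∂gam := by
  rcases hm.eq_or_lt with rfl | hm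
  · simp [T_zero]
  have hE : EB (fun g => exp |A (x + √v * g)|) := by
    refine exp_abs_EB (hA.EBs x _).1 |A x| (√v) (sqrt_nonneg _) (fun g => ?_)
    have := hA.bound x (√v * g)
    rwa [abs_mul, abs_of_nonneg (sqrt_nonneg v)] at this
  rw [T_ne hm.ne']
  have h1 : Zt m v A x ≤ 1 + m * ((∫ g, A (x + √v * g) ∂gam) +
      m * ∫ g, A (x + √v * g) ^ 2 * exp |A (x + √v * g)| ∂gam) := by
    have : (1 + m * ((∫ g, A (x + √v * g) ∂gam) +
      m * ∫ g, A (x + √v * g) ^ 2 * exp |A (x + √v * g)| ∂gam)) = ∫ g, (1 + m * (A (x + √v * g) +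
      m * (A (x + √v * g) ^ 2 * exp |A (x + √v * g)|))) ∂gam := by
      rw [integral_add (integrable_const _) (((hA.EBs x _).add
        (((hA.EBs x _).pow 2).mul hE |>.constmul m)).constmul m).integrable,
        integral_const_mul, integral_add (hA.EBs x _).integrable
        ((((hA.EBs x _).pow 2).mul hE).constmul m).integrable, integral_const_mul]
      simp
    rw [this]
    refine integral_mono (hA.EBe m x _).integrable ((EB.const 1).add ((((hA.EBs x _).add
        (((hA.EBs x _).pow 2).mul hE |>.constmul m)).constmul m))).integrable (fun g => ?_)
    dsimp only
    set a := A (x + √v * g)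
    have h2 := exp_le_quad (m * a)
    have h3 : exp |m * a| ≤ exp |a| := by
      rw [exp_le_exp, abs_mul, abs_of_pos hm]
      exact mul_le_of_le_one_left (abs_nonneg _) hm1
    have h4 : (m * a) ^ 2 * exp |m * a| ≤ (m * a) ^ 2 * exp |a| := by gcongr
    nlinarith
  have h2 := log_le_sub_one_of_pos (Zt_pos hA m v x)
  calc 1 / m * log (Zt m v A x) ≤ 1 / m * (m * ((∫ g, A (x + √v * g) ∂gam) +
      m * ∫ g, A (x + √v * g) ^ 2 * exp |A (x + √v * g)| ∂gam)) := by gcongr; linarith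
    _ = _ := by field_simp

lemma T_tendsto {ι : Type*} {l : Filter ι} [l.IsCountablyGenerated] {m v x : ι → ℝ}
    {A : ι → ℝ → ℝ} {m' v' x' : ℝ} {A' : ℝ → ℝ} (hm0 : ∀ i, 0 ≤ m i) (hm1 : ∀ i, m i ≤ 1)
    (hA : ∀ i, L1 (A i)) (hA' : L1 A') (hm : Tendsto m l (𝓝 m')) (hv : Tendsto v l (𝓝 v'))
    (hx : Tendsto x l (𝓝 x')) (hAA : ∀ y, Tendsto (fun i => A i y) l (𝓝 (A' y))) :
    Tendsto (fun i => T (m i) (v i) (A i) (x i)) l (𝓝 (T m' v' A' x')) := by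
  have hs : Tendsto (fun i => √(v i)) l (𝓝 (√v')) := (continuous_sqrt.tendsto _).comp hv
  have hpt : ∀ g, Tendsto (fun i => A i (x i + √(v i) * g)) l (𝓝 (A' (x' + √v' * g))) := by
    intro g
    have h1 : Tendsto (fun i => x i + √(v i) * g) l (𝓝 (x' + √v' * g)) :=
      hx.add (hs.mul_const g)
    have h2 : Tendsto (fun i => A i (x i + √(v i) * g) - A i (x' + √v' * g)) l (𝓝 0) := by
      refine squeeze_zero_norm (fun i => hA i _ _) ?_
      have := (h1.sub_const (x' + √v' * g)).abs
      simpa using this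
    simpa using h2.add (hAA (x' + √v' * g))
  set K : ℝ := |A' 0| + 1 + (|x'| + 1) with hK
  set s : ℝ := √v' + 1 with hs'
  have hs0 : 0 ≤ s := by positivity
  have hbd : ∀ᶠ i in l, ∀ g, |A i (x i + √(v i) * g)| ≤ K + s * |g| := by
    have e1 : ∀ᶠ i in l, |A i 0| < |A' 0| + 1 := (hAA 0).abs.eventually_lt_const (by linarith)
    have e2 : ∀ᶠ i in l, |x i| < |x'| + 1 := hx.abs.eventually_lt_const (by linarith)
    have e3 : ∀ᶠ i in l, √(v i) < √v' + 1 := hs.eventually_lt_const (by linarith)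
    filter_upwards [e1, e2, e3] with i h1 h2 h3 g
    have h4 := (hA i).bound 0 (x i + √(v i) * g)
    rw [zero_add] at h4
    have h5 := abs_add_le (x i) (√(v i) * g)
    rw [abs_mul, abs_of_nonneg (sqrt_nonneg _)] at h5
    have h6 : √(v i) * |g| ≤ s * |g| := by gcongr
    linarith
  have hbE : EB (fun g => K + s * |g|) := (EB.const K).add (EB.id.abs.constmul s)
  have hexpE : EB (fun g => exp (K + s * |g|)) :=
    EB.exp (by fun_prop) K s hs0 (fun g => le_rfl)
  by_cases h0 : m' = 0
  · subst h0
    have l1 : Tendsto (fun i => ∫ g, A i (x i + √(v i) * g) ∂gam) l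
        (𝓝 (∫ g, A' (x' + √v' * g) ∂gam)) := by
      refine tendsto_integral_filter_of_dominated_convergence (fun g => K + s * |g|) ?_ ?_
        hbE.integrable (Eventually.of_forall hpt)
      · exact Eventually.of_forall fun i => ((hA i).EBs _ _).1.aestronglyMeasurable
      · filter_upwards [hbd] with i hi
        exact Eventually.of_forall hi
    have l2 : Tendsto (fun i => ∫ g, A i (x i + √(v i) * g) ^ 2 * exp |A i (x i + √(v i) * g)| ∂gam)
        l (𝓝 (∫ g, A' (x' + √v' * g) ^ 2 * exp |A' (x' + √v' * g)| ∂gam)) := by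
      refine tendsto_integral_filter_of_dominated_convergence
        (fun g => (K + s * |g|) ^ 2 * exp (K + s * |g|)) ?_ ?_
        ((hbE.pow 2).mul hexpE).integrable (Eventually.of_forall fun g => ?_)
      · refine Eventually.of_forall fun i => Measurable.aestronglyMeasurable ?_
        have := ((hA i).EBs (x i) (√(v i))).1
        exact (this.pow_const 2).mul (measurable_exp.comp this.abs)
      · filter_upwards [hbd] with i hi
        refine Eventually.of_forall fun g => ?_
        rw [norm_mul, norm_of_nonneg (exp_pos _).le, norm_pow, norm_eq_abs]
        gcongr
        · exact hi g
        · exact hi g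
      · exact ((hpt g).pow 2).mul ((continuous_exp.tendsto _).comp (hpt g).abs)
    have l3 : Tendsto (fun i => (∫ g, A i (x i + √(v i) * g) ∂gam) + m i *
        ∫ g, A i (x i + √(v i) * g) ^ 2 * exp |A i (x i + √(v i) * g)| ∂gam) l
        (𝓝 (∫ g, A' (x' + √v' * g) ∂gam)) := by
      simpa using l1.add (hm.mul l2)
    rw [T_zero]
    refine tendsto_of_tendsto_of_tendsto_of_le_of_le l1 l3 (fun i => ?_) (fun i => ?_)
    · have := T_zero_le (hA i) (hm0 i) (v i) (x i)
      rwa [T_zero] at this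
    · exact T_le (hA i) (hm0 i) (hm1 i) _ _
  · have l1 : Tendsto (fun i => Zt (m i) (v i) (A i) (x i)) l (𝓝 (Zt m' v' A' x')) := by
      refine tendsto_integral_filter_of_dominated_convergence (fun g => exp (K + s * |g|)) ?_ ?_
        hexpE.integrable (Eventually.of_forall fun g => ?_)
      · exact Eventually.of_forall fun i => ((hA i).EBe _ _ _).1.aestronglyMeasurable
      · filter_upwards [hbd] with i hi
        refine Eventually.of_forall fun g => ?_
        rw [norm_of_nonneg (exp_pos _).le, exp_le_exp]
        refine le_trans (le_abs_self _) (le_trans ?_ (hi g))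
        rw [abs_mul, abs_of_nonneg (hm0 i)]
        exact mul_le_of_le_one_left (abs_nonneg _) (hm1 i)
      · exact (continuous_exp.tendsto _).comp (hm.mul (hpt g))
    have l2 := ((tendsto_const_nhds (x := (1:ℝ))).div hm h0).mul
      (l1.log (Zt_pos hA' _ _ _).ne')
    rw [T_ne h0]
    refine l2.congr' ?_
    filter_upwards [hm.eventually_ne h0] with i hi
    rw [T_ne hi]; rfl

end PF

namespace PF

/-- log cosh -/
def lc (x : ℝ) : ℝ := log (cosh x)

lemma exp_lc (x : ℝ) : exp (lc x) = cosh x := exp_log (cosh_pos x)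

lemma lc_nonneg (x : ℝ) : 0 ≤ lc x := log_nonneg (one_le_cosh x)

lemma lc_zero : lc 0 = 0 := by simp [lc]

lemma lc_L1 : L1 lc := by
  have key : ∀ x d, lc (x + d) ≤ lc x + |d| := fun x d => by
    rw [← exp_le_exp, exp_add, exp_lc, exp_lc, cosh_eq, cosh_eq]
    have h1 : exp (x + d) ≤ exp x * exp |d| := by
      rw [← exp_add, exp_le_exp]; linarith [le_abs_self d]
    have h2 : exp (-(x + d)) ≤ exp (-x) * exp |d| := by
      rw [← exp_add, exp_le_exp]; linarith [neg_abs_le d]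
    linarith
  intro x y
  rw [abs_sub_le_iff]
  constructor
  · have := key y (x - y); rw [add_sub_cancel] at this; linarith
  · have := key x (y - x); rw [add_sub_cancel, abs_sub_comm] at this; linarith

lemma cosh_add_ratio (x y : ℝ) :
    cosh (x + y) = cosh x * ((1 + tanh x) / 2 * exp y + (1 - tanh x) / 2 * exp (-y)) := by
  rw [cosh_add, tanh_eq_sinh_div_cosh, ← cosh_add_sinh y, ← cosh_sub_sinh y]
  field_simp [(cosh_pos x).ne']
  ring

lemma abs_tanh_le (x : ℝ) : |tanh x| ≤ 1 := by
  rw [abs_le]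
  rw [tanh_eq_sinh_div_cosh]
  have h := cosh_pos x
  constructor
  · rw [le_div_iff₀ h]; linarith [cosh_add_sinh x, exp_pos x]
  · rw [div_le_iff₀ h]; linarith [cosh_sub_sinh x, exp_pos (-x)]

lemma lc_sub (x y : ℝ) : lc x + tanh x * y ≤ lc (x + y) := by
  rw [← exp_le_exp, exp_add, exp_lc, exp_lc, cosh_add_ratio]
  have ht := abs_le.1 (abs_tanh_le x)
  refine mul_le_mul_of_nonneg_left ?_ (cosh_pos x).le
  have := convexOn_exp.2 (Set.mem_univ y) (Set.mem_univ (-y))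
    (show 0 ≤ (1 + tanh x) / 2 by linarith) (show 0 ≤ (1 - tanh x) / 2 by linarith) (by ring)
  simp only [smul_eq_mul] at this
  refine le_trans (le_of_eq ?_) this
  congr 1; ring

/-- The class of functions `A` (with a subgradient `u`) met along the recursion. -/
structure Cls (A u : ℝ → ℝ) : Prop where
  lip : L1 A
  sub : ∀ x y, A x + u x * y ≤ A (x + y)
  semi : ∀ x y, exp (A (x + y)) + exp (A (x - y)) ≤ 2 * cosh y * exp (A x)

lemma Cls_lc : Cls lc tanh := by
  refine ⟨lc_L1, lc_sub, fun x y => ?_⟩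
  simp only [exp_lc]
  rw [cosh_add, cosh_sub]
  apply le_of_eq; ring

namespace Cls
variable {A u : ℝ → ℝ}

lemma mono (h : Cls A u) : Monotone u := by
  intro x y hxy
  rcases hxy.eq_or_lt with rfl | hxy
  · rfl
  have h1 := h.sub x (y - x)
  have h2 := h.sub y (x - y)
  rw [add_sub_cancel] at h1 h2
  nlinarith

lemma ub (h : Cls A u) (x : ℝ) : |u x| ≤ 1 := by
  rw [abs_le]
  have h1 := h.sub x 1
  have h2 := h.sub x (-1)
  have h3 := abs_le.1 (h.lip (x + 1) x)
  have h4 := abs_le.1 (h.lip (x + -1) x)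
  simp at h3 h4
  constructor <;> linarith [h3.1, h3.2, h4.1, h4.2]

lemma EBu (h : Cls A u) : EB u :=
  EB.of_bound h.mono.measurable (EB.const 1) h.ub

lemma gap (h : Cls A u) (x y : ℝ) : A (x + y) + A (x - y) - 2 * A x ≤ y ^ 2 := by
  have h1 := h.semi x y
  have h2 : 2 * exp ((A (x + y) + A (x - y)) / 2) ≤ exp (A (x + y)) + exp (A (x - y)) := by
    have e1 : exp (A (x + y)) = exp (A (x + y) / 2) ^ 2 := by rw [← exp_nat_mul]; congr 1; ring
    have e2 : exp (A (x - y)) = exp (A (x - y) / 2) ^ 2 := by rw [← exp_nat_mul]; congr 1; ring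
    rw [add_div, exp_add, e1, e2]
    nlinarith [sq_nonneg (exp (A (x + y) / 2) - exp (A (x - y) / 2))]
  have h3 : exp ((A (x + y) + A (x - y)) / 2) ≤ exp (y ^ 2 / 2 + A x) := by
    rw [exp_add]
    have := cosh_le_exp_half_sq y
    nlinarith [exp_pos (A x)]
  rw [exp_le_exp] at h3
  linarith

lemma R_nonneg (h : Cls A u) (x y : ℝ) : 0 ≤ A (x + y) - A x - u x * y := by
  linarith [h.sub x y]

lemma R_le_sq (h : Cls A u) (x y : ℝ) : A (x + y) - A x - u x * y ≤ y ^ 2 := by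
  have h1 := h.gap x y
  have h2 := h.sub x (-y)
  rw [← sub_eq_add_neg] at h2
  linarith

lemma R_le_abs (h : Cls A u) (x y : ℝ) : A (x + y) - A x - u x * y ≤ 2 * |y| := by
  have h1 := h.lip (x + y) x
  rw [add_sub_cancel_left] at h1
  have h2 := h.ub x
  have h3 : |u x * y| ≤ |y| := by rw [abs_mul]; exact mul_le_of_le_one_left (abs_nonneg _) h2
  linarith [le_abs_self (A (x + y) - A x), neg_abs_le (u x * y)]

lemma u_lip_aux (h : Cls A u) (x y : ℝ) (hy : 0 < y) : u (x + y) - u x ≤ 4 * y := by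
  have h1 := h.sub (x + y) y
  have h2 := h.sub x y
  have h3 := h.R_le_sq x (y + y)
  rw [← add_assoc] at h3
  have h4 : (u (x + y) - u x) * y ≤ 4 * y * y := by nlinarith
  exact le_of_mul_le_mul_right h4 hy

lemma u_lip (h : Cls A u) (x y : ℝ) : |u (x + y) - u x| ≤ 4 * |y| := by
  rcases lt_trichotomy y 0 with hy | rfl | hy
  · have h1 := h.u_lip_aux (x + y) (-y) (by linarith)
    have h2 := h.mono (show x + y ≤ x by linarith)
    rw [add_neg_cancel_right] at h1
    rw [abs_of_neg hy, abs_of_nonpos (by linarith)]; linarith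
  · simp
  · have h1 := h.u_lip_aux x y hy
    have h2 := h.mono (show x ≤ x + y by linarith)
    rw [abs_of_pos hy, abs_of_nonneg (by linarith)]; linarith

end Cls

lemma T_semi {A : ℝ → ℝ} (hA : L1 A)
    (hs : ∀ x y, exp (A (x + y)) + exp (A (x - y)) ≤ 2 * cosh y * exp (A x))
    {m : ℝ} (hm : 0 < m) (hm1 : m ≤ 1) (v x y : ℝ) :
    exp (T m v A (x + y)) + exp (T m v A (x - y)) ≤ 2 * cosh y * exp (T m v A x) := by
  set tp := T m v A (x + y) with htp
  set tn := T m v A (x - y) with htn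
  set d := log (exp tp + exp tn) with hd
  have hD : exp d = exp tp + exp tn := exp_log (by positivity)
  set lam := exp (tp - d) with hlam
  set mu := exp (tn - d) with hmu
  have hsum : lam + mu = 1 := by
    rw [hlam, hmu, exp_sub, exp_sub, ← add_div, hD, div_self (by positivity)]
  have h2c : (0:ℝ) < 2 * cosh y := by have := cosh_pos y; positivity
  have hpt : ∀ g, lam * exp (m * (A (x + y + √v * g) - (tp - d))) +
      mu * exp (m * (A (x - y + √v * g) - (tn - d))) ≤
      exp (m * A (x + √v * g)) * exp (m * log (2 * cosh y)) := by
    intro g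
    set ap := A (x + y + √v * g)
    set an := A (x - y + √v * g)
    set a := A (x + √v * g)
    have h1 : exp ap + exp an ≤ 2 * cosh y * exp a := by
      have := hs (x + √v * g) y
      rwa [show x + √v * g + y = x + y + √v * g by ring,
        show x + √v * g - y = x - y + √v * g by ring] at this
    have hc := (concaveOn_rpow hm.le hm1).2 (Set.mem_Ici.2 (exp_pos (ap - (tp - d))).le)
      (Set.mem_Ici.2 (exp_pos (an - (tn - d))).le) (exp_pos _).le (exp_pos _).le hsum
    simp only [smul_eq_mul] at hc
    have q1 : exp (tp - d) * exp (ap - (tp - d)) = exp ap := by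
      rw [← exp_add, add_sub_cancel]
    have q2 : exp (tn - d) * exp (an - (tn - d)) = exp an := by
      rw [← exp_add, add_sub_cancel]
    rw [q1, q2, ← exp_mul, ← exp_mul] at hc
    rw [mul_comm m, mul_comm m]
    refine hc.trans ((rpow_le_rpow (by positivity) h1 hm.le).trans (le_of_eq ?_))
    rw [mul_rpow h2c.le (exp_pos _).le, ← exp_mul, rpow_def_of_pos h2c, mul_comm, mul_comm a,
      mul_comm m (log _)]
  have hi : lam * exp (m * d) + mu * exp (m * d) ≤ exp (m * T m v A x) * exp (m * log (2 * cosh y)) := by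
    have e : ∀ t b, exp (m * (t - b)) * exp 0 = exp (m * t) * exp (-(m * b)) := fun t b => by
      rw [← exp_add, ← exp_add]; congr 1; ring
    have i1 : ∫ g, exp (m * (A (x + y + √v * g) - (tp - d))) ∂gam = exp (m * d) := by
      have : ∀ g, exp (m * (A (x + y + √v * g) - (tp - d))) =
          exp (m * A (x + y + √v * g)) * exp (-(m * (tp - d))) := fun g => by
        rw [← exp_add]; congr 1; ring
      simp_rw [this]
      rw [integral_mul_const, ← Zt, ← exp_T hA hm.ne', ← htp, ← exp_add]; congr 1; ring
    have i2 : ∫ g, exp (m * (A (x - y + √v * g) - (tn - d))) ∂gam = exp (m * d) := by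
      have : ∀ g, exp (m * (A (x - y + √v * g) - (tn - d))) =
          exp (m * A (x - y + √v * g)) * exp (-(m * (tn - d))) := fun g => by
        rw [← exp_add]; congr 1; ring
      simp_rw [this]
      rw [integral_mul_const, ← Zt, ← exp_T hA hm.ne', ← htn, ← exp_add]; congr 1; ring
    have hEp : ∀ z b, EB (fun g => exp (m * (A (z + √v * g) - b))) := fun z b => by
      have : ∀ g, exp (m * (A (z + √v * g) - b)) =
          exp (m * A (z + √v * g)) * exp (-(m * b)) := fun g => by
        rw [← exp_add]; congr 1; ring
      simp_rw [this]
      exact (hA.EBe m z _).mul (EB.const _)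
    rw [exp_T hA hm.ne', Zt, ← integral_mul_const, ← i1]
    nth_rw 2 [i1]
    rw [← i2, ← integral_const_mul, ← integral_const_mul, ← integral_add]
    · exact integral_mono (((hEp _ _).constmul _).add ((hEp _ _).constmul _)).integrable
        ((hA.EBe m x _).mul (EB.const _)).integrable hpt
    · exact ((hEp _ _).constmul _).integrable
    · exact ((hEp _ _).constmul _).integrable
  rw [← add_mul, hsum, one_mul, ← exp_add, exp_le_exp, ← mul_add] at hi
  have hi' := le_of_mul_le_mul_left hi hm
  rw [← hD]
  calc exp d ≤ exp (T m v A x + log (2 * cosh y)) := exp_le_exp.2 hi'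
    _ = _ := by rw [exp_add, exp_log h2c, mul_comm]

lemma T_tendsto_zero {A : ℝ → ℝ} (hA : L1 A) (v x : ℝ) :
    Tendsto (fun n : ℕ => T (1 / ((n : ℝ) + 1)) v A x) atTop (𝓝 (T 0 v A x)) := by
  refine T_tendsto (fun n => by positivity) (fun n => ?_) (fun _ => hA) hA
    tendsto_one_div_add_atTop_nhds_zero_nat tendsto_const_nhds tendsto_const_nhds
    (fun _ => tendsto_const_nhds)
  rw [div_le_one (by positivity)]; linarith [Nat.cast_nonneg (α := ℝ) n]

lemma Cls.step {A u : ℝ → ℝ} (h : Cls A u) {m : ℝ} (hm : 0 ≤ m) (hm1 : m ≤ 1) (v : ℝ) :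
    Cls (T m v A) (Ev m v A u) := by
  refine ⟨T_L1 h.lip hm v, fun x y => ?_, fun x y => ?_⟩
  · rw [T_shift]
    refine le_trans ?_ (gibbs h.lip (h.lip.shift y) hm v x)
    rw [mul_comm, ← Ev_constmul]
    gcongr
    refine Ev_mono h.lip m v x (h.EBu.constmul y) ((h.lip.shift y).EB.sub h.lip.EB) (fun z => ?_)
    have := h.sub z y
    linarith
  · rcases hm.eq_or_lt with rfl | hm
    · have t := fun z => T_tendsto_zero h.lip v z
      have e := fun z => (continuous_exp.tendsto _).comp (t z)
      refine le_of_tendsto_of_tendsto ((e (x + y)).add (e (x - y)))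
        ((e x).const_mul (2 * cosh y)) (Eventually.of_forall fun n => ?_)
      refine T_semi h.lip h.semi (by positivity) ?_ v x y
      rw [div_le_one (by positivity)]; linarith [Nat.cast_nonneg (α := ℝ) n]
    · exact T_semi h.lip h.semi hm hm1 v x y

/-- lower bound on second differences -/
def Low (c : ℝ) (A : ℝ → ℝ) : Prop :=
  ∀ x y, |y| ≤ 1 → c * y ^ 2 / cosh x ^ 2 ≤ A (x + y) + A (x - y) - 2 * A x

lemma lc_gap (x y : ℝ) : lc (x + y) + lc (x - y) - 2 * lc x = log (1 + sinh y ^ 2 / cosh x ^ 2) := by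
  have h1 := cosh_pos (x + y)
  have h2 := cosh_pos (x - y)
  have h3 := cosh_pos x
  rw [lc, lc, lc, ← log_mul h1.ne' h2.ne', ← Nat.cast_two, ← log_pow, ← log_div (by positivity) (by positivity)]
  congr 1
  rw [cosh_add, cosh_sub]
  field_simp
  nlinarith [cosh_sq x, cosh_sq y]

lemma sq_le_sinh_sq (y : ℝ) : y ^ 2 ≤ sinh y ^ 2 := by
  rw [sq_le_sq]
  rcases le_total 0 y with h | h
  · rw [abs_of_nonneg h, abs_of_nonneg (sinh_nonneg_iff.2 h)]; exact self_le_sinh_iff.2 h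
  · rw [abs_of_nonpos h, abs_of_nonpos (sinh_nonpos_iff.2 h)]
    linarith [sinh_le_self_iff.2 h]

lemma lc_gap_lower (x y Y : ℝ) (hy : |y| ≤ Y) :
    y ^ 2 / cosh x ^ 2 / (1 + sinh Y ^ 2) ≤ lc (x + y) + lc (x - y) - 2 * lc x := by
  rw [lc_gap]
  set t := sinh y ^ 2 / cosh x ^ 2 with ht
  have hc := one_le_cosh x
  have hc2 : 1 ≤ cosh x ^ 2 := one_le_pow₀ hc
  have ht0 : 0 ≤ t := by positivity
  have hyY : sinh y ^ 2 ≤ sinh Y ^ 2 := by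
    rw [sq_le_sq]
    have hY : 0 ≤ Y := (abs_nonneg y).trans hy
    rw [abs_of_nonneg (sinh_nonneg_iff.2 hY), abs_le]
    rw [abs_le] at hy
    constructor
    · rw [← sinh_neg]; exact sinh_le_sinh.2 hy.1
    · exact sinh_le_sinh.2 hy.2
  have htY : t ≤ sinh Y ^ 2 := (div_le_self (sq_nonneg _) hc2).trans hyY
  have h1 : t / (1 + t) ≤ log (1 + t) := by
    have := one_sub_inv_le_log_of_pos (show 0 < 1 + t by linarith)
    refine le_trans (le_of_eq ?_) this
    field_simp; ring
  refine le_trans ?_ h1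
  have h5 : y ^ 2 / cosh x ^ 2 ≤ t := by
    exact div_le_div_of_nonneg_right (sq_le_sinh_sq y) (by positivity)
  gcongr

lemma Low_lc : Low (1 / 3) lc := by
  intro x y hy
  refine le_trans ?_ (lc_gap_lower x y 1 hy)
  have hs : sinh 1 ^ 2 ≤ 2 := by
    have h1 : sinh 1 ≤ 1.4 := by
      rw [sinh_eq]; linarith [exp_one_lt_d9, exp_pos (-1)]
    have h0 : 0 ≤ sinh 1 := sinh_nonneg_iff.2 (by norm_num)
    nlinarith
  have h3 : (1 + sinh 1 ^ 2) ≤ 3 := by linarith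
  calc 1 / 3 * y ^ 2 / cosh x ^ 2 = y ^ 2 / cosh x ^ 2 / 3 := by ring
    _ ≤ _ := by gcongr

end PF

namespace PF

/-- Weight function dominating all small-step errors. -/
def kk (g : ℝ) : ℝ := |g| + 1

lemma kk_ge (g : ℝ) : 1 ≤ kk g := by unfold kk; linarith [abs_nonneg g]

lemma EB_kk : EB kk := EB.id.abs.add (EB.const 1)

lemma EB_ekk : EB (fun g => exp (2 * kk g)) :=
  EB.exp (EB_kk.1.const_mul 2) 2 2 (by norm_num) (fun g => by unfold kk; linarith)

lemma EB_C0 : EB (fun g => kk g ^ 4 * exp (2 * kk g)) := (EB_kk.pow 4).mul EB_ekk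

/-- The universal constant. -/
def C0 : ℝ := ∫ g, kk g ^ 4 * exp (2 * kk g) ∂gam

lemma le_C0_of {f : ℝ → ℝ} (hf : EB f) (h : ∀ g, f g ≤ kk g ^ 4 * exp (2 * kk g)) :
    ∫ g, f g ∂gam ≤ C0 := integral_mono hf.integrable EB_C0.integrable h

lemma one_le_ekk (g : ℝ) : 1 ≤ exp (2 * kk g) := one_le_exp (by linarith [kk_ge g])

lemma one_le_C0 : 1 ≤ C0 := by
  have := le_C0_of (EB.const 1) (fun g => one_le_mul_of_one_le_of_one_le
    (one_le_pow₀ (kk_ge g)) (one_le_ekk g))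
  simpa using this

lemma int_kk_le : ∫ g, kk g ∂gam ≤ C0 := by
  refine le_C0_of EB_kk (fun g => ?_)
  have h1 := kk_ge g
  have h2 := one_le_ekk g
  have h3 : kk g ≤ kk g ^ 4 := le_self_pow₀ h1 (by norm_num)
  nlinarith

lemma w_bound {m v U : ℝ} (hm : 0 ≤ m) (hm1 : m ≤ 1) (hv : 0 ≤ v) (hv1 : v ≤ 1) (hU : |U| ≤ 1)
    (g : ℝ) : |m * v * U + √v * g| ≤ √v * kk g := by
  have h1 : v ≤ √v := by
    rw [Real.le_sqrt hv hv]
    nlinarith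
  calc |m * v * U + √v * g| ≤ |m * v * U| + |√v * g| := abs_add_le _ _
    _ = m * v * |U| + √v * |g| := by
      rw [abs_mul, abs_mul, abs_mul, abs_of_nonneg hm, abs_of_nonneg hv,
        abs_of_nonneg (sqrt_nonneg v)]
    _ ≤ √v + √v * |g| := by
      have : m * v * |U| ≤ 1 * v * 1 := by gcongr
      linarith
    _ = _ := by unfold kk; ring

section small
variable {A u : ℝ → ℝ} (h : Cls A u) {m v : ℝ}
  (x : ℝ)

/-- remainder along the tilted path -/
def Rm (A u : ℝ → ℝ) (m v x g : ℝ) : ℝ :=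
  A (x + m * v * u x + √v * g) - A x - u x * (m * v * u x + √v * g)

lemma Rm_nonneg (h : Cls A u) (x g : ℝ) : 0 ≤ Rm A u m v x g := by
  have := h.R_nonneg x (m * v * u x + √v * g)
  rwa [← add_assoc] at this

lemma Rm_le_sq (h : Cls A u) (hm : 0 ≤ m) (hm1 : m ≤ 1) (hv : 0 ≤ v) (hv1 : v ≤ 1) (x g : ℝ) :
    Rm A u m v x g ≤ v * kk g ^ 2 := by
  have h1 := h.R_le_sq x (m * v * u x + √v * g)
  rw [← add_assoc] at h1
  have h2 := w_bound hm hm1 hv hv1 (h.ub x) g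
  have h3 : (m * v * u x + √v * g) ^ 2 ≤ (√v * kk g) ^ 2 := by
    rw [← sq_abs (m * v * u x + √v * g)]
    exact pow_le_pow_left₀ (abs_nonneg _) h2 2
  rw [mul_pow, sq_sqrt hv] at h3
  unfold Rm; linarith

lemma Rm_le_abs (h : Cls A u) (hm : 0 ≤ m) (hm1 : m ≤ 1) (hv : 0 ≤ v) (hv1 : v ≤ 1) (x g : ℝ) :
    Rm A u m v x g ≤ 2 * kk g := by
  have h1 := h.R_le_abs x (m * v * u x + √v * g)
  rw [← add_assoc] at h1
  have h2 := w_bound hm hm1 hv hv1 (h.ub x) g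
  have h3 : √v * kk g ≤ 1 * kk g := by
    have := kk_ge g
    gcongr
    exact Real.sqrt_le_one.2 hv1
  unfold Rm; linarith

lemma EB_Rm (h : Cls A u) (m v x : ℝ) : EB (Rm A u m v x) := by
  unfold Rm
  exact ((h.lip.EBs _ _).sub (EB.const _)).sub
    (((EB.const _).add (EB.id.constmul _)).constmul _)

lemma EB_eRm (h : Cls A u) (hm : 0 ≤ m) (hm1 : m ≤ 1) (hv : 0 ≤ v) (hv1 : v ≤ 1) (x : ℝ) :
    EB (fun g => exp (m * Rm A u m v x g)) := by
  refine EB.exp ((EB_Rm h m v x).1.const_mul m) 2 2 (by norm_num) (fun g => ?_)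
  have h1 := Rm_le_abs h hm hm1 hv hv1 x g
  have h2 := Rm_nonneg (m := m) (v := v) h x g
  have h3 : m * Rm A u m v x g ≤ Rm A u m v x g := mul_le_of_le_one_left h2 hm1
  unfold kk at h1; linarith

lemma tilt (hv : 0 ≤ v) (A u f : ℝ → ℝ) (m x : ℝ) :
    ∫ g, exp (m * A (x + √v * g)) * f (x + √v * g) ∂gam =
    exp (m * A x + m ^ 2 * u x ^ 2 * v / 2) *
      ∫ g, exp (m * Rm A u m v x g) * f (x + m * v * u x + √v * g) ∂gam := by
  set s := m * u x * √v with hs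
  have hss : s ^ 2 = m ^ 2 * u x ^ 2 * v := by rw [hs]; ring_nf; rw [sq_sqrt hv]
  have hsv : √v * s = m * v * u x := by
    rw [hs]; have := mul_self_sqrt hv; linear_combination (m * u x) * this
  have := girsanov (fun g => exp (m * (A (x + √v * g) - u x * √v * g)) * f (x + √v * g)) s
  have e1 : ∀ g, exp (s * g - s ^ 2 / 2) * (exp (m * (A (x + √v * g) - u x * √v * g)) * f (x + √v * g))
      = exp (- (s ^ 2 / 2)) * (exp (m * A (x + √v * g)) * f (x + √v * g)) := fun g => by
    rw [← mul_assoc, ← mul_assoc, ← exp_add, ← exp_add]; congr 2; rw [hs]; ring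
  have e2 : ∀ g, exp (m * (A (x + √v * (g + s)) - u x * √v * (g + s))) * f (x + √v * (g + s)) =
      exp (m * A x) * (exp (m * Rm A u m v x g) * f (x + m * v * u x + √v * g)) := fun g => by
    rw [show x + √v * (g + s) = x + m * v * u x + √v * g by rw [← hsv]; ring, ← mul_assoc,
      ← exp_add]
    congr 2
    unfold Rm
    linear_combination (-m * u x) * hsv
  simp_rw [e1, e2] at this
  rw [integral_const_mul, integral_const_mul] at this
  rw [exp_add, ← hss, mul_comm (exp (m * A x)), mul_assoc, this, ← mul_assoc, ← exp_add]
  simp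

lemma Zt_tilt (hv : 0 ≤ v) (A u : ℝ → ℝ) (m x : ℝ) :
    Zt m v A x = exp (m * A x + m ^ 2 * u x ^ 2 * v / 2) * ∫ g, exp (m * Rm A u m v x g) ∂gam := by
  have := tilt hv A u (fun _ => 1) m x
  simpa [Zt] using this

lemma Ev_tilt (hv : 0 ≤ v) (A u f : ℝ → ℝ) (m x : ℝ) :
    Ev m v A f x = (∫ g, exp (m * Rm A u m v x g) * f (x + m * v * u x + √v * g) ∂gam) /
      ∫ g, exp (m * Rm A u m v x g) ∂gam := by
  rw [Ev, Zt_tilt hv A u, tilt hv A u, mul_div_mul_left _ _ (exp_pos _).ne']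

lemma eRm_sub_one_le (h : Cls A u) (hm : 0 ≤ m) (hm1 : m ≤ 1) (hv : 0 ≤ v) (hv1 : v ≤ 1) (x g : ℝ) :
    exp (m * Rm A u m v x g) - 1 ≤ v * (kk g ^ 2 * exp (2 * kk g)) := by
  have h1 := Rm_le_abs h hm hm1 hv hv1 x g
  have h2 := Rm_nonneg (m := m) (v := v) h x g
  have h3 := Rm_le_sq h hm hm1 hv hv1 x g
  set R := Rm A u m v x g
  have h4 : exp (m * R) ≤ exp R := exp_le_exp.2 (mul_le_of_le_one_left h2 hm1)
  have h5 : exp R - 1 ≤ R * exp R := by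
    have := add_one_le_exp (-R)
    have h6 : exp R * exp (-R) = 1 := by rw [← exp_add]; simp
    nlinarith [exp_pos R]
  have h6 : exp R ≤ exp (2 * kk g) := exp_le_exp.2 h1
  have h7 : R * exp R ≤ (v * kk g ^ 2) * exp (2 * kk g) := by gcongr
  linarith

lemma Z_bounds (h : Cls A u) (hm : 0 ≤ m) (hm1 : m ≤ 1) (hv : 0 ≤ v) (hv1 : v ≤ 1) (x : ℝ) :
    1 ≤ ∫ g, exp (m * Rm A u m v x g) ∂gam ∧ ∫ g, exp (m * Rm A u m v x g) ∂gam ≤ 1 + C0 * v := by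
  have hE := EB_eRm h hm hm1 hv hv1 x
  constructor
  · have : ∫ g, (1:ℝ) ∂gam ≤ ∫ g, exp (m * Rm A u m v x g) ∂gam :=
      integral_mono (integrable_const _) hE.integrable
        (fun g => one_le_exp (mul_nonneg hm (Rm_nonneg h x g)))
    simpa using this
  · have hk : EB (fun g => kk g ^ 2 * exp (2 * kk g)) := (EB_kk.pow 2).mul EB_ekk
    have h1 : ∫ g, exp (m * Rm A u m v x g) ∂gam ≤ ∫ g, (1 + v * (kk g ^ 2 * exp (2 * kk g))) ∂gam :=
      integral_mono hE.integrable ((EB.const 1).add (hk.constmul v)).integrable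
        (fun g => by have := eRm_sub_one_le h hm hm1 hv hv1 x g; dsimp only; linarith)
    rw [integral_add (integrable_const _) (hk.constmul v).integrable, integral_const_mul] at h1
    have h2 : ∫ g, kk g ^ 2 * exp (2 * kk g) ∂gam ≤ C0 := le_C0_of hk (fun g => by
      gcongr
      · exact kk_ge g
      · norm_num)
    simp at h1
    nlinarith

lemma ss_upper (h : Cls A u) (hm : 0 ≤ m) (hm1 : m ≤ 1) (hv : 0 ≤ v) (hv1 : v ≤ 1) (x : ℝ) :
    T m v A x ≤ (∫ g, A (x + m * v * u x + √v * g) ∂gam) - m * v * u x ^ 2 / 2 + C0 * v ^ 2 := by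
  have hC := one_le_C0
  rcases hm.eq_or_lt with rfl | hm'
  · rw [T_zero]; simp; positivity
  have hE := EB_eRm h hm hm1 hv hv1 x
  have hA : ∫ g, A (x + m * v * u x + √v * g) ∂gam =
      A x + m * v * u x ^ 2 + ∫ g, Rm A u m v x g ∂gam := by
    have e : ∀ g, Rm A u m v x g = A (x + m * v * u x + √v * g) -
      ((A x + m * v * u x ^ 2) + (u x * √v) * g) := fun g => by unfold Rm; ring
    simp_rw [e]
    rw [integral_sub (h.lip.EBs _ _).integrable
      ((EB.const _).add (EB.id.constmul _)).integrable,
      integral_add (integrable_const _) (EB.id.constmul _).integrable, integral_const_mul,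
      integral_id_gam]
    simp
  set Z := ∫ g, exp (m * Rm A u m v x g) ∂gam with hZ
  obtain ⟨hZ1, -⟩ := Z_bounds h hm hm1 hv hv1 x
  have hk : EB (fun g => kk g ^ 4 * exp (2 * kk g)) := EB_C0
  have hZ2 : Z ≤ 1 + m * ((∫ g, Rm A u m v x g ∂gam) + C0 * v ^ 2) := by
    have : (1 + m * ((∫ g, Rm A u m v x g ∂gam) + C0 * v ^ 2)) =
        ∫ g, (1 + m * (Rm A u m v x g + v ^ 2 * (kk g ^ 4 * exp (2 * kk g)))) ∂gam := by
      rw [integral_add (integrable_const _)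
        (((EB_Rm h m v x).add (hk.constmul _)).constmul m).integrable, integral_const_mul,
        integral_add (EB_Rm h m v x).integrable (hk.constmul _).integrable, integral_const_mul,
        ← C0]
      simp [mul_comm]
    rw [this]
    refine integral_mono hE.integrable
      ((EB.const 1).add (((EB_Rm h m v x).add (hk.constmul _)).constmul m)).integrable (fun g => ?_)
    dsimp only
    have h1 := Rm_le_abs h hm hm1 hv hv1 x g
    have h2 := Rm_nonneg (m := m) (v := v) h x g
    have h3 := Rm_le_sq h hm hm1 hv hv1 x g
    set R := Rm A u m v x g
    have h4 := exp_le_quad (m * R)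
    rw [abs_of_nonneg (mul_nonneg hm h2)] at h4
    have h5 : exp (m * R) ≤ exp (2 * kk g) :=
      exp_le_exp.2 ((mul_le_of_le_one_left h2 hm1).trans h1)
    have h6 : (m * R) ^ 2 * exp (m * R) ≤ m * ((v * kk g ^ 2) ^ 2 * exp (2 * kk g)) := by
      have : (m * R) ^ 2 ≤ m * (v * kk g ^ 2) ^ 2 := by
        have a1 : R ^ 2 ≤ (v * kk g ^ 2) ^ 2 := by gcongr
        have a2 : m ^ 2 ≤ m := by nlinarith
        calc (m * R) ^ 2 = m ^ 2 * R ^ 2 := by ring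
          _ ≤ m * (v * kk g ^ 2) ^ 2 := by gcongr
      calc (m * R) ^ 2 * exp (m * R) ≤ (m * (v * kk g ^ 2) ^ 2) * exp (2 * kk g) := by gcongr
        _ = _ := by ring
    calc exp (m * R) ≤ _ := h4
      _ ≤ 1 + m * R + m * ((v * kk g ^ 2) ^ 2 * exp (2 * kk g)) := by linarith
      _ = _ := by ring
  have hZpos : 0 < Z := by linarith
  have hl := log_le_sub_one_of_pos hZpos
  rw [T_ne hm'.ne', Zt_tilt hv A u, log_mul (exp_pos _).ne' hZpos.ne', log_exp, hA]
  have : 1 / m * log Z ≤ (∫ g, Rm A u m v x g ∂gam) + C0 * v ^ 2 := by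
    calc 1 / m * log Z ≤ 1 / m * (m * ((∫ g, Rm A u m v x g ∂gam) + C0 * v ^ 2)) := by
          gcongr; linarith
      _ = _ := by field_simp
  have e : 1 / m * (m * A x + m ^ 2 * u x ^ 2 * v / 2 + log Z) =
      A x + m * u x ^ 2 * v / 2 + 1 / m * log Z := by field_simp
  rw [e]; linarith

lemma ss_lower (hA : L1 A) (hm : 0 ≤ m) (hv : 0 ≤ v) (x U : ℝ) :
    (∫ g, A (x + m * v * U + √v * g) ∂gam) - m * v * U ^ 2 / 2 ≤ T m v A x := by
  rcases hm.eq_or_lt with rfl | hm'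
  · rw [T_zero]; simp
  set c := ∫ g, A (x + m * v * U + √v * g) ∂gam with hc
  set s := m * U * √v with hs
  have hss : s ^ 2 = m ^ 2 * U ^ 2 * v := by rw [hs]; ring_nf; rw [sq_sqrt hv]
  have hsv : √v * s = m * v * U := by
    rw [hs]; have := mul_self_sqrt hv; linear_combination (m * U) * this
  have hg := girsanov (fun g => exp (m * A (x + √v * g) - s * g + s ^ 2 / 2)) s
  have e1 : ∀ g, exp (s * g - s ^ 2 / 2) * exp (m * A (x + √v * g) - s * g + s ^ 2 / 2) =
      exp (m * A (x + √v * g)) := fun g => by rw [← exp_add]; congr 1; ring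
  have e2 : ∀ g, exp (m * A (x + √v * (g + s)) - s * (g + s) + s ^ 2 / 2) =
      exp (m * A (x + m * v * U + √v * g) - s * g - s ^ 2 / 2) := fun g => by
    rw [show x + √v * (g + s) = x + m * v * U + √v * g by rw [← hsv]; ring]
    congr 1; ring
  simp_rw [e1, e2] at hg
  have hEB : EB (fun g => exp (m * A (x + m * v * U + √v * g) - s * g - s ^ 2 / 2)) := by
    have : ∀ g, exp (m * A (x + m * v * U + √v * g) - s * g - s ^ 2 / 2) =
      exp (m * A (x + m * v * U + √v * g)) * exp (-s * g - s ^ 2 / 2) := fun g => by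
      rw [← exp_add]; congr 1; ring
    simp_rw [this]
    refine (hA.EBe m _ _).mul (EB.exp (by fun_prop) 0 |s| (abs_nonneg _) (fun g => ?_))
    have := le_abs_self (-s * g)
    rw [abs_mul, abs_neg] at this
    nlinarith [sq_nonneg s]
  have key : exp (m * c - s ^ 2 / 2) ≤ Zt m v A x := by
    rw [Zt, ← hg]
    have h1 : exp (m * c - s ^ 2 / 2) = ∫ g, exp (m * c - s ^ 2 / 2) *
        (1 + (m * A (x + m * v * U + √v * g) - (s * g + m * c))) ∂gam := by
      rw [integral_const_mul, integral_add (integrable_const _), integral_sub,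
        integral_add, integral_const_mul, integral_const_mul, ← hc, integral_id_gam]
      · simp
      · exact (EB.id.constmul _).integrable
      · exact integrable_const _
      · exact ((hA.EBs _ _).constmul m).integrable
      · exact ((EB.id.constmul _).add (EB.const _)).integrable
      · exact (((hA.EBs _ _).constmul m).sub ((EB.id.constmul _).add (EB.const _))).integrable
    rw [h1]
    refine integral_mono (((EB.const 1).add (((hA.EBs _ _).constmul m).sub
      ((EB.id.constmul _).add (EB.const _)))).constmul _).integrable hEB.integrable (fun g => ?_)
    dsimp only
    set a := A (x + m * v * U + √v * g)
    have h3 := add_one_le_exp (m * a - (s * g + m * c))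
    calc exp (m * c - s ^ 2 / 2) * (1 + (m * a - (s * g + m * c))) ≤
        exp (m * c - s ^ 2 / 2) * exp (m * a - (s * g + m * c)) := by gcongr; linarith
      _ = _ := by rw [← exp_add]; congr 1; ring
  have hl := log_le_log (exp_pos _) key
  rw [log_exp, hss] at hl
  rw [T_ne hm'.ne']
  calc c - m * v * U ^ 2 / 2 = 1 / m * (m * c - m ^ 2 * U ^ 2 * v / 2) := by field_simp
    _ ≤ _ := by gcongr

end small
end PF

namespace PF

variable {A u : ℝ → ℝ} {m v : ℝ}

lemma du_bound (h : Cls A u) (hm : 0 ≤ m) (hm1 : m ≤ 1) (hv : 0 ≤ v) (hv1 : v ≤ 1) (x g : ℝ) :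
    |u (x + m * v * u x + √v * g) - u x| ≤ 4 * √v * kk g := by
  have h1 := h.u_lip x (m * v * u x + √v * g)
  have h2 := w_bound hm hm1 hv hv1 (h.ub x) g
  rw [← add_assoc] at h1
  linarith

lemma mean_u_close (h : Cls A u) (hm : 0 ≤ m) (hm1 : m ≤ 1) (hv : 0 ≤ v) (hv1 : v ≤ 1) (x : ℝ) :
    |(∫ g, u (x + m * v * u x + √v * g) ∂gam) - u x| ≤ 4 * C0 * √v := by
  have e : (∫ g, u (x + m * v * u x + √v * g) ∂gam) - u x =
      ∫ g, (u (x + m * v * u x + √v * g) - u x) ∂gam := by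
    rw [integral_sub (h.EBu.affine _ _).integrable (integrable_const _)]; simp
  rw [e]
  refine (norm_integral_le_of_norm_le (μ := gam)
    (f := fun g => u (x + m * v * u x + √v * g) - u x) (EB_kk.constmul (4 * √v)).integrable
    (Eventually.of_forall fun g => du_bound h hm hm1 hv hv1 x g)).trans ?_
  rw [integral_const_mul]
  have := int_kk_le
  have h4 : 0 ≤ 4 * √v := by positivity
  nlinarith

lemma mean_err (h : Cls A u) (hm : 0 ≤ m) (hm1 : m ≤ 1) (hv : 0 ≤ v) (hv1 : v ≤ 1) (x : ℝ) :
    |Ev m v A u x - ∫ g, u (x + m * v * u x + √v * g) ∂gam| ≤ 8 * C0 ^ 2 * (v * √v) := by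
  have hC := one_le_C0
  rw [Ev_tilt hv A u]
  obtain ⟨hZ1, hZ2⟩ := Z_bounds h hm hm1 hv hv1 x
  have hE := EB_eRm h hm hm1 hv hv1 x
  set Z := ∫ g, exp (m * Rm A u m v x g) ∂gam with hZ
  have hZ0 : 0 < Z := by linarith
  have hf := h.EBu.affine (x + m * v * u x) (√v)
  set f := fun g => u (x + m * v * u x + √v * g) with hfd
  have hfb := mean_u_close h hm hm1 hv hv1 x
  set I := ∫ g, f g ∂gam with hI
  have e1 : (∫ g, exp (m * Rm A u m v x g) * f g ∂gam) =
      (∫ g, (exp (m * Rm A u m v x g) - 1) * (f g - u x) ∂gam) + I - u x + u x * Z := by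
    have : ∀ g, (exp (m * Rm A u m v x g) - 1) * (f g - u x) = exp (m * Rm A u m v x g) * f g -
      (f g + (u x * exp (m * Rm A u m v x g) - u x)) := fun g => by ring
    simp_rw [this]
    rw [integral_sub (hE.mul hf).integrable
      (hf.add ((hE.constmul _).sub (EB.const _))).integrable,
      integral_add hf.integrable ((hE.constmul _).sub (EB.const _)).integrable,
      integral_sub (hE.constmul _).integrable (integrable_const _), integral_const_mul]
    simp; ring
  set J := ∫ g, (exp (m * Rm A u m v x g) - 1) * (f g - u x) ∂gam with hJ
  have hJb : |J| ≤ 4 * C0 * (v * √v) := by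
    have hk : EB (fun g => kk g ^ 3 * exp (2 * kk g)) := (EB_kk.pow 3).mul EB_ekk
    have hk2 : ∫ g, kk g ^ 3 * exp (2 * kk g) ∂gam ≤ C0 := le_C0_of hk (fun g => by
      gcongr
      · exact kk_ge g
      · norm_num)
    have := norm_integral_le_of_norm_le (μ := gam)
      (f := fun g => (exp (m * Rm A u m v x g) - 1) * (f g - u x))
      (hk.constmul (4 * (v * √v))).integrable (Eventually.of_forall fun g => by
        have b1 := eRm_sub_one_le h hm hm1 hv hv1 x g
        have b0 : 0 ≤ exp (m * Rm A u m v x g) - 1 :=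
          sub_nonneg.2 (one_le_exp (mul_nonneg hm (Rm_nonneg h x g)))
        have b2 := du_bound h hm hm1 hv hv1 x g
        rw [norm_mul, norm_of_nonneg b0, norm_eq_abs]
        calc _ ≤ (v * (kk g ^ 2 * exp (2 * kk g))) * (4 * √v * kk g) := by gcongr
          _ = _ := by ring)
    rw [integral_const_mul] at this
    have h4 : 0 ≤ 4 * (v * √v) := by positivity
    rw [norm_eq_abs] at this
    nlinarith
  have e2 : (∫ g, exp (m * Rm A u m v x g) * f g ∂gam) / Z - I =
      (J - (Z - 1) * (I - u x)) / Z := by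
    rw [e1]; field_simp; ring
  rw [e2, abs_div, abs_of_pos hZ0]
  refine (div_le_self (abs_nonneg _) hZ1).trans ((abs_sub _ _).trans ?_)
  rw [abs_mul, abs_of_nonneg (by linarith : 0 ≤ Z - 1)]
  have h5 : (Z - 1) * |I - u x| ≤ (C0 * v) * (4 * C0 * √v) := by
    gcongr
    linarith
  have h6 : C0 * (v * √v) ≤ C0 ^ 2 * (v * √v) := by
    gcongr; nlinarith
  nlinarith

lemma u_step_close (h : Cls A u) (hm : 0 ≤ m) (hm1 : m ≤ 1) (hv : 0 ≤ v) (hv1 : v ≤ 1) (x : ℝ) :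
    |Ev m v A u x - u x| ≤ 12 * C0 ^ 2 * √v := by
  have hC := one_le_C0
  have h1 := mean_err h hm hm1 hv hv1 x
  have h2 := mean_u_close h hm hm1 hv hv1 x
  have h3 := abs_sub_le (Ev m v A u x) (∫ g, u (x + m * v * u x + √v * g) ∂gam) (u x)
  have h4 : 8 * C0 ^ 2 * (v * √v) ≤ 8 * C0 ^ 2 * (1 * √v) := by gcongr
  have h5 : 4 * C0 * √v ≤ 4 * C0 ^ 2 * √v := by gcongr; nlinarith
  linarith

lemma second_moment (hm : 0 ≤ m) (hm1 : m ≤ 1) (hv : 0 ≤ v) (hv1 : v ≤ 1) {U : ℝ}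
    (hU : |U| ≤ 1) (x : ℝ) :
    ∫ g, ((x + m * v * U + √v * g) ^ 2 + 4) ∂gam ≤ (1 + v) * (x ^ 2 + 4) := by
  have e : ∀ g, (x + m * v * U + √v * g) ^ 2 + 4 =
      ((x + m * v * U) ^ 2 + 4) + (2 * (x + m * v * U) * √v) * g + v * g ^ 2 := fun g => by
    nlinarith [mul_self_sqrt hv]
  simp_rw [e]
  rw [integral_add ((EB.const _).add (EB.id.constmul _)).integrable
    ((EB.id.pow 2).constmul _).integrable, integral_add (integrable_const _)
    (EB.id.constmul _).integrable, integral_const_mul, integral_const_mul, integral_id_gam,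
    integral_sq_gam]
  simp
  set w := m * U
  have hw : |w| ≤ 1 := by
    rw [abs_mul, abs_of_nonneg hm]; nlinarith [abs_nonneg U]
  rw [abs_le] at hw
  have e2 : m * v * U = v * w := by ring
  rw [e2]
  have h1 : 2 * x * w ≤ x ^ 2 + 1 := by nlinarith [sq_nonneg (x - w)]
  have h2 : v * w ^ 2 ≤ 1 := by nlinarith
  nlinarith

lemma T_Low {c : ℝ} (hc : 0 ≤ c) (h : Cls A u) (hl : Low c A) (hm : 0 ≤ m) (hm1 : m ≤ 1)
    (hv : 0 ≤ v) (hv1 : (6 + C0) * v ≤ 1) : Low (c * (1 - (6 + C0) * v)) (T m v A) := by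
  intro x y hy
  have hC := one_le_C0
  have hv1' : v ≤ 1 := by nlinarith
  have g1 := gibbs h.lip (h.lip.shift y) hm v x
  have g2 := gibbs h.lip (h.lip.shift (-y)) hm v x
  rw [← T_shift] at g1 g2
  rw [← sub_eq_add_neg] at g2
  have hE1 := (h.lip.shift y).EB.sub h.lip.EB
  have hE2 := (h.lip.shift (-y)).EB.sub h.lip.EB
  have hS : EB (fun z => 1 / cosh z ^ 2) := by
    refine EB.of_bound (g := fun _ => 1) (by
      have := continuous_cosh.measurable
      exact measurable_const.div (this.pow_const 2)) (EB.const 1) (fun z => ?_)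
    have := one_le_pow₀ (n := 2) (one_le_cosh z)
    rw [abs_of_nonneg (by positivity), div_le_one (by positivity)]; exact this
  have k1 : c * y ^ 2 * Ev m v A (fun z => 1 / cosh z ^ 2) x ≤
      T m v A (x + y) + T m v A (x - y) - 2 * T m v A x := by
    rw [← Ev_constmul]
    have : Ev m v A (fun z => c * y ^ 2 * (1 / cosh z ^ 2)) x ≤
        Ev m v A (fun z => (A (z + y) - A z) + (A (z + -y) - A z)) x := by
      refine Ev_mono h.lip m v x (hS.constmul _) (hE1.add hE2) (fun z => ?_)
      have := hl z y hy
      rw [← sub_eq_add_neg]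
      calc c * y ^ 2 * (1 / cosh z ^ 2) = c * y ^ 2 / cosh z ^ 2 := by ring
        _ ≤ _ := this
        _ = _ := by ring
    rw [Ev_add h.lip m v x hE1 hE2] at this
    linarith
  refine le_trans ?_ k1
  have hc2 : 1 ≤ cosh x ^ 2 := one_le_pow₀ (one_le_cosh x)
  have k2 : (1 - (6 + C0) * v) / cosh x ^ 2 ≤ Ev m v A (fun z => 1 / cosh z ^ 2) x := by
    rw [Ev_tilt hv A u]
    obtain ⟨hZ1, hZ2⟩ := Z_bounds h hm hm1 hv hv1' x
    have hE := EB_eRm h hm hm1 hv hv1' x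
    set Z := ∫ g, exp (m * Rm A u m v x g) ∂gam with hZ
    have hZ0 : 0 < Z := by linarith
    rw [le_div_iff₀ hZ0]
    have s1 : ∫ g, 1 / cosh (x + m * v * u x + √v * g) ^ 2 ∂gam ≤
        ∫ g, exp (m * Rm A u m v x g) * (1 / cosh (x + m * v * u x + √v * g) ^ 2) ∂gam := by
      refine integral_mono (hS.affine _ _).integrable (hE.mul (hS.affine _ _)).integrable
        (fun g => ?_)
      dsimp only
      have : 1 ≤ exp (m * Rm A u m v x g) := one_le_exp (mul_nonneg hm (Rm_nonneg h x g))
      exact le_mul_of_one_le_left (by positivity) this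
    refine le_trans ?_ s1
    set t := tanh x with ht
    have htb := abs_le.1 (abs_tanh_le x)
    have hub := abs_le.1 (h.ub x)
    set w0 := m * v * u x with hw0
    have s2 : ∫ g, 1 / cosh x ^ 2 * ((1 - 2 * t * w0 - 2 * w0 ^ 2) - (2 * t + 4 * w0) * √v * g
        - 2 * v * g ^ 2) ∂gam ≤ ∫ g, 1 / cosh (x + w0 + √v * g) ^ 2 ∂gam := by
      refine integral_mono ((((EB.const _).sub (EB.id.constmul _)).sub
        ((EB.id.pow 2).constmul _)).constmul _).integrable (hS.affine _ _).integrable (fun g => ?_)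
      dsimp only
      have r := Cls_lc.R_le_sq x (w0 + √v * g)
      rw [← add_assoc] at r
      set w := w0 + √v * g with hw
      have r2 : cosh (x + w0 + √v * g) ^ 2 ≤ cosh x ^ 2 * exp (2 * t * w + 2 * w ^ 2) := by
        rw [← exp_lc, ← exp_lc, ← exp_nat_mul, ← exp_nat_mul, ← exp_add, exp_le_exp]
        push_cast; linarith
      have r3 : 1 / (cosh x ^ 2 * exp (2 * t * w + 2 * w ^ 2)) ≤ 1 / cosh (x + w0 + √v * g) ^ 2 := by
        have := cosh_pos (x + w0 + √v * g)
        gcongr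
      refine le_trans ?_ r3
      rw [← one_div_mul_one_div]
      gcongr
      rw [one_div, ← exp_neg]
      have := add_one_le_exp (-(2 * t * w + 2 * w ^ 2))
      refine le_trans (le_of_eq ?_) this
      rw [hw]; linear_combination (2 * g ^ 2) * mul_self_sqrt hv
    refine le_trans ?_ s2
    rw [integral_const_mul, integral_sub ((EB.const _).sub (EB.id.constmul _)).integrable
      ((EB.id.pow 2).constmul _).integrable, integral_sub (integrable_const _)
      (EB.id.constmul _).integrable, integral_const_mul, integral_const_mul, integral_id_gam,
      integral_sq_gam]
    simp
    rw [div_mul_eq_mul_div, div_eq_inv_mul]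
    gcongr
    set p := m * u x
    have hp : |p| ≤ 1 := by
      rw [abs_mul, abs_of_nonneg hm]; nlinarith [abs_nonneg (u x), h.ub x]
    rw [abs_le] at hp
    have e2 : w0 = v * p := by rw [hw0]; ring
    have q1 : 2 * t * w0 ≤ 2 * v := by
      rw [e2]
      have : t * p ≤ 1 := by nlinarith
      nlinarith
    have q2 : w0 ^ 2 ≤ v := by
      rw [e2]
      have : p ^ 2 ≤ 1 := by nlinarith
      have : v * p ^ 2 ≤ 1 := by nlinarith
      nlinarith
    have q3 : (1 - (6 + C0) * v) * Z ≤ (1 - (6 + C0) * v) * (1 + C0 * v) := by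
      exact mul_le_mul_of_nonneg_left hZ2 (by linarith)
    have q4 : 0 ≤ C0 * v ^ 2 := by positivity
    have q5 : 0 ≤ C0 ^ 2 * v ^ 2 := by positivity
    nlinarith
  calc c * (1 - (6 + C0) * v) * y ^ 2 / cosh x ^ 2 = c * y ^ 2 * ((1 - (6 + C0) * v) / cosh x ^ 2) := by
        ring
    _ ≤ _ := by gcongr

lemma u_diff_lower {c : ℝ} (h : Cls A u) (hl : Low c A) (a y : ℝ) (hy : |y| ≤ 1) (hy0 : 0 ≤ y) :
    c * y / cosh a ^ 2 ≤ u (a + y) - u (a - y) := by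
  rcases hy0.eq_or_lt with rfl | hy0
  · simp
  have h1 := hl a y hy
  have h2 := h.sub (a + y) (-y)
  have h3 := h.sub (a - y) y
  rw [add_neg_cancel_right] at h2
  rw [sub_add_cancel] at h3
  have h4 : c * y / cosh a ^ 2 * y ≤ (u (a + y) - u (a - y)) * y := by
    calc c * y / cosh a ^ 2 * y = c * y ^ 2 / cosh a ^ 2 := by ring
      _ ≤ _ := h1
      _ ≤ _ := by linarith
  exact le_of_mul_le_mul_right h4 hy0

lemma int_four : ∫ g, g ^ 4 ∂gam ≤ 96 := by
  have hE1 : EB (fun g => exp (1 * g)) := EB.exp (by fun_prop) 0 1 (by norm_num)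
    (fun g => by linarith [le_abs_self g])
  have hE2 : EB (fun g => exp (-1 * g)) := EB.exp (by fun_prop) 0 1 (by norm_num)
    (fun g => by linarith [neg_abs_le g])
  have : ∫ g, g ^ 4 ∂gam ≤ ∫ g, 24 * (exp (1 * g) + exp (-1 * g)) ∂gam := by
    refine integral_mono (EB.id.pow 4).integrable ((hE1.add hE2).constmul 24).integrable
      (fun g => ?_)
    dsimp only
    have h1 := Real.pow_div_factorial_le_exp |g| (abs_nonneg _) 4
    have h2 : |g| ^ 4 = g ^ 4 := by rw [← abs_pow]; exact abs_of_nonneg (by positivity)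
    rw [h2] at h1
    have h3 : exp |g| ≤ exp (1 * g) + exp (-1 * g) := by
      rcases abs_cases g with ⟨h, _⟩ | ⟨h, _⟩ <;> rw [h]
      · simp; positivity
      · simp; positivity
    have h4 : ((Nat.factorial 4 : ℕ) : ℝ) = 24 := by norm_num [Nat.factorial]
    rw [h4, div_le_iff₀ (by norm_num)] at h1
    linarith
  rw [integral_const_mul, integral_add hE1.integrable hE2.integrable, integral_exp_gam,
    integral_exp_gam] at this
  have h5 : exp (1 ^ 2 / 2) ≤ 2 := by
    have : exp ((1:ℝ) ^ 2 / 2) ^ 2 = exp 1 := by rw [← exp_nat_mul]; norm_num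
    have h6 := exp_one_lt_d9
    nlinarith [exp_pos ((1:ℝ) ^ 2 / 2)]
  have h6 : exp ((-1) ^ 2 / 2) ≤ 2 := by norm_num at h5 ⊢; exact h5
  linarith

lemma var_lower {c : ℝ} (hc : 0 ≤ c) (h : Cls A u) (hl : Low c A) (hm : 0 ≤ m) (hm1 : m ≤ 1)
    (hv : 0 ≤ v) (hv1 : v ≤ 1 / 256) (x : ℝ) :
    (∫ g, u (x + m * v * u x + √v * g) ∂gam) ^ 2 + v * (c ^ 2 / 1296 / cosh x ^ 4) ≤
      ∫ g, u (x + m * v * u x + √v * g) ^ 2 ∂gam := by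
  set a := x + m * v * u x with ha
  have hf := h.EBu.affine a (√v)
  have hf' := h.EBu.affine a (-√v)
  set f := fun g => u (a + √v * g) with hfd
  set I := ∫ g, f g ∂gam with hI
  set lam := ∫ g, f g * g ∂gam with hlam
  have key : 0 ≤ ∫ g, (f g - I - lam * g) ^ 2 ∂gam := integral_nonneg fun g => sq_nonneg _
  have e : ∀ g, (f g - I - lam * g) ^ 2 = f g ^ 2 + (I ^ 2 - 2 * I * f g) +
      (lam ^ 2 * g ^ 2 - 2 * lam * (f g * g)) + 2 * I * lam * g := fun g => by ring
  simp_rw [e] at key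
  have i1 := (hf.pow 2)
  have i2 : EB (fun g => I ^ 2 - 2 * I * f g) := (EB.const _).sub (hf.constmul _)
  have i3 : EB (fun g => lam ^ 2 * g ^ 2 - 2 * lam * (f g * g)) :=
    ((EB.id.pow 2).constmul _).sub ((hf.mul EB.id).constmul _)
  have i4 : EB (fun g => 2 * I * lam * g) := EB.id.constmul _
  rw [integral_add ((i1.add i2).add i3).integrable i4.integrable,
    integral_add (i1.add i2).integrable i3.integrable, integral_add i1.integrable i2.integrable,
    integral_sub (integrable_const _) (hf.constmul _).integrable,
    integral_sub ((EB.id.pow 2).constmul _).integrable ((hf.mul EB.id).constmul _).integrable,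
    integral_const_mul, integral_const_mul, integral_const_mul, integral_const_mul,
    integral_id_gam, integral_sq_gam, ← hI, ← hlam] at key
  simp at key
  -- lower bound on the covariance
  have hcov : c * √v / cosh a ^ 2 / 4 ≤ lam := by
    have s1 : lam = (1 / 2) * ∫ g, (u (a + √v * g) - u (a + -√v * g)) * g ∂gam := by
      have n1 := integral_neg_gam (fun g => f g * g)
      have : ∀ g, (u (a + √v * g) - u (a + -√v * g)) * g = f g * g + f (-g) * (-g) := fun g => by
        simp only [hfd]; rw [show a + √v * -g = a + -√v * g by ring]; ring
      simp_rw [this]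
      have hneg : EB (fun g => f (-g) * (-g)) := by
        have e3 : ∀ g, f (-g) * (-g) = u (a + -√v * g) * (-g) := fun g => by
          simp only [hfd]; rw [show a + √v * -g = a + -√v * g by ring]
        simp_rw [e3]
        exact hf'.mul EB.id.neg
      rw [integral_add (hf.mul EB.id).integrable hneg.integrable, n1, ← hlam]; ring
    have s2 : ∫ g, (c * √v / cosh a ^ 2) * (g ^ 2 - 1 / 256 * g ^ 4) ∂gam ≤
        ∫ g, (u (a + √v * g) - u (a + -√v * g)) * g ∂gam := by
      refine integral_mono (((EB.id.pow 2).sub ((EB.id.pow 4).constmul _)).constmul _).integrable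
        ((hf.sub hf').mul EB.id).integrable (fun g => ?_)
      dsimp only
      have hk : 0 ≤ c * √v / cosh a ^ 2 := by positivity
      have hsv : √v ≤ 1 / 16 := by
        rw [Real.sqrt_le_left (by norm_num)]; linarith
      have pos_case : ∀ g, 0 ≤ g → (c * √v / cosh a ^ 2) * (g ^ 2 - 1 / 256 * g ^ 4) ≤
          (u (a + √v * g) - u (a + -√v * g)) * g := by
        intro g hg
        by_cases hg16 : g ≤ 16
        · have hy0 : 0 ≤ √v * g := by positivity
          have hy : |√v * g| ≤ 1 := by
            rw [abs_of_nonneg hy0]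
            calc √v * g ≤ 1 / 16 * 16 := by gcongr
              _ = 1 := by norm_num
          have := u_diff_lower h hl a (√v * g) hy hy0
          rw [sub_eq_add_neg a, ← neg_mul] at this
          calc _ ≤ (c * √v / cosh a ^ 2) * g ^ 2 := by gcongr; nlinarith [sq_nonneg (g ^ 2)]
            _ = c * (√v * g) / cosh a ^ 2 * g := by ring
            _ ≤ _ := by gcongr
        · push Not at hg16
          have m1 := h.mono (show a + -√v * g ≤ a + √v * g by nlinarith [sqrt_nonneg v])
          have m2 : 0 ≤ (u (a + √v * g) - u (a + -√v * g)) * g :=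
            mul_nonneg (by linarith) hg
          have m3 : g ^ 2 - 1 / 256 * g ^ 4 ≤ 0 := by
            have : 256 ≤ g ^ 2 := by nlinarith
            nlinarith
          nlinarith
      rcases le_total 0 g with hg | hg
      · exact pos_case g hg
      · have := pos_case (-g) (by linarith)
        rw [show √v * -g = -√v * g by ring, show -√v * -g = √v * g by ring] at this
        calc _ = (c * √v / cosh a ^ 2) * ((-g) ^ 2 - 1 / 256 * (-g) ^ 4) := by ring
          _ ≤ _ := this
          _ = _ := by ring
    rw [integral_const_mul, integral_sub (EB.id.pow 2).integrable
      ((EB.id.pow 4).constmul _).integrable, integral_const_mul, integral_sq_gam] at s2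
    have s3 := int_four
    have hk : 0 ≤ c * √v / cosh a ^ 2 := by positivity
    rw [s1]
    have : c * √v / cosh a ^ 2 * (1 / 2) ≤ c * √v / cosh a ^ 2 * (1 - 1 / 256 * ∫ g, g ^ 4 ∂gam) := by
      gcongr; linarith
    linarith
  have hcosh : cosh a ≤ 3 * cosh x := by
    have h1 := lc_L1 a x
    have h2 : |a - x| ≤ 1 := by
      rw [ha, add_sub_cancel_left, abs_mul, abs_mul, abs_of_nonneg hm, abs_of_nonneg hv]
      have := h.ub x
      calc m * v * |u x| ≤ 1 * 1 * 1 := by gcongr; linarith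
        _ = 1 := by norm_num
    have h3 : lc a ≤ 1 + lc x := by linarith [le_abs_self (lc a - lc x)]
    have h4 := exp_le_exp.2 h3
    rw [exp_add, exp_lc, exp_lc] at h4
    nlinarith [exp_one_lt_d9, cosh_pos x]
  have hl2 : c * √v / cosh x ^ 2 / 36 ≤ lam := by
    refine le_trans ?_ hcov
    have : cosh a ^ 2 ≤ 9 * cosh x ^ 2 := by nlinarith [cosh_pos a, cosh_pos x]
    have hca := cosh_pos a
    have hcx := cosh_pos x
    have e : c * √v / cosh x ^ 2 / 36 = c * √v / (9 * cosh x ^ 2) / 4 := by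
      field_simp; ring
    rw [e]
    have h9 := div_le_div_of_nonneg_left (mul_nonneg hc (sqrt_nonneg v)) (by positivity) this
    first | linarith | (refine (div_le_div_of_nonneg_right h9 (by norm_num)).trans (le_of_eq ?_); ring)
  have hl3 : (c * √v / cosh x ^ 2 / 36) ^ 2 ≤ lam ^ 2 := by gcongr
  have hl4 : (c * √v / cosh x ^ 2 / 36) ^ 2 = v * (c ^ 2 / 1296 / cosh x ^ 4) := by
    have hcx := (cosh_pos x).ne'
    field_simp
    rw [sq_sqrt hv]; ring
  have hgoal : ∫ g, u (a + √v * g) ^ 2 ∂gam = ∫ g, f g ^ 2 ∂gam := rfl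
  rw [hgoal]
  nlinarith

end PF

namespace PF

/-- A step of the chain: variance and the two values of `m`. -/
structure Stp where
  v : ℝ
  a : ℝ
  b : ℝ

/-- Midpoint weight. -/
def Stp.c (s : Stp) : ℝ := (s.a + s.b) / 2

/-- Admissible step. -/
structure Stp.ok (s : Stp) : Prop where
  v0 : 0 ≤ s.v
  a0 : 0 ≤ s.a
  a1 : s.a ≤ 1
  b0 : 0 ≤ s.b
  b1 : s.b ≤ 1

lemma Stp.ok.c0 {s : Stp} (h : s.ok) : 0 ≤ s.c := by
  have := h.a0; have := h.b0; unfold Stp.c; linarith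

lemma Stp.ok.c1 {s : Stp} (h : s.ok) : s.c ≤ 1 := by
  have := h.a1; have := h.b1; unfold Stp.c; linarith

/-- Composition of the chain. -/
def Ps (f : Stp → ℝ) : List Stp → ℝ → ℝ
  | [] => lc
  | s :: L => T (f s) s.v (Ps f L)

/-- The derivative of the midpoint function. -/
def Um : List Stp → ℝ → ℝ
  | [] => tanh
  | s :: L => Ev s.c s.v (Ps Stp.c L) (Um L)

/-- total time -/
def tot : List Stp → ℝ
  | [] => 0
  | s :: L => tot L + s.v

/-- total difference -/
def dif : List Stp → ℝ
  | [] => 0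
  | s :: L => dif L + (s.a - s.b) * s.v

/-- the gain -/
def gain : List Stp → ℝ
  | [] => 0
  | s :: L => gain L + dif L ^ 2 * s.v

def okL (η : ℝ) (L : List Stp) : Prop := ∀ s ∈ L, s.ok ∧ s.v ≤ η

lemma okL.tail {η : ℝ} {s : Stp} {L : List Stp} (h : okL η (s :: L)) : okL η L :=
  fun t ht => h t (List.mem_cons_of_mem _ ht)

lemma okL.head {η : ℝ} {s : Stp} {L : List Stp} (h : okL η (s :: L)) : s.ok ∧ s.v ≤ η :=
  h s List.mem_cons_self

lemma Ps_L1 {f : Stp → ℝ} {L : List Stp} (h : ∀ s ∈ L, 0 ≤ f s) : L1 (Ps f L) := by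
  induction L with
  | nil => exact lc_L1
  | cons s L ih =>
    exact T_L1 (ih fun t ht => h t (List.mem_cons_of_mem _ ht)) (h s List.mem_cons_self) _

lemma okL.A {η : ℝ} {L : List Stp} (h : okL η L) : L1 (Ps Stp.a L) := Ps_L1 fun s hs => (h s hs).1.a0
lemma okL.B {η : ℝ} {L : List Stp} (h : okL η L) : L1 (Ps Stp.b L) := Ps_L1 fun s hs => (h s hs).1.b0

lemma okL.cls {η : ℝ} {L : List Stp} (h : okL η L) : Cls (Ps Stp.c L) (Um L) := by
  induction L with
  | nil => exact Cls_lc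
  | cons s L ih => exact (ih h.tail).step h.head.1.c0 h.head.1.c1 _

lemma okL.tot {η : ℝ} {L : List Stp} (h : okL η L) : 0 ≤ tot L := by
  induction L with
  | nil => exact le_rfl
  | cons s L ih => exact add_nonneg (ih h.tail) h.head.1.v0

lemma okL.dif {η : ℝ} {L : List Stp} (h : okL η L) : |dif L| ≤ PF.tot L := by
  induction L with
  | nil => simp [PF.dif, PF.tot]
  | cons s L ih =>
    have h1 := ih h.tail
    have hs := h.head.1
    have : |(s.a - s.b) * s.v| ≤ s.v := by
      rw [abs_mul, abs_of_nonneg hs.v0]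
      have : |s.a - s.b| ≤ 1 := by
        rw [abs_le]; constructor <;> linarith [hs.a0, hs.a1, hs.b0, hs.b1]
      nlinarith [hs.v0]
    exact (abs_add_le _ _).trans (add_le_add h1 this)

lemma Low.mono {A : ℝ → ℝ} {c c' : ℝ} (h : Low c A) (hc : c' ≤ c) : Low c' A := fun x y hy => by
  refine le_trans ?_ (h x y hy)
  gcongr

lemma okL.low {η : ℝ} {L : List Stp} (h : okL η L) (hη : (6 + C0) * η ≤ 1 / 2) :
    Low (1 / 3 * exp (-(2 * (6 + C0) * PF.tot L))) (Ps Stp.c L) := by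
  have hC := one_le_C0
  induction L with
  | nil => simpa [PF.tot, Ps] using Low_lc
  | cons s L ih =>
    have hs := h.head.1
    have hsv : (6 + C0) * s.v ≤ 1 / 2 := by nlinarith [h.head.2]
    have := T_Low (c := 1 / 3 * exp (-(2 * (6 + C0) * PF.tot L))) (by positivity) h.tail.cls
      (ih h.tail) hs.c0 hs.c1 hs.v0 (by linarith)
    refine this.mono ?_
    set y := (6 + C0) * s.v with hy
    have hy0 : 0 ≤ y := mul_nonneg (by linarith) hs.v0
    have e : exp (-(2 * (6 + C0) * PF.tot (s :: L))) =
        exp (-(2 * (6 + C0) * PF.tot L)) * exp (-(2 * y)) := by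
      rw [← exp_add]; congr 1; simp [PF.tot, hy]; ring
    rw [e, ← mul_assoc]
    refine mul_le_mul_of_nonneg_left ?_ (by positivity)
    rw [exp_neg]
    have h1 : 1 + 2 * y ≤ exp (2 * y) := by linarith [add_one_le_exp (2 * y)]
    rw [inv_le_comm₀ (exp_pos _) (by linarith)]
    refine le_trans ?_ h1
    rw [inv_le_comm₀ (by linarith) (by linarith), inv_le_iff_one_le_mul₀ (by linarith)]
    nlinarith

/-- The doubled functional. -/
def Wf (A B M : ℝ → ℝ) (x z : ℝ) : ℝ := A (x + z / 2) / 2 + B (x - z / 2) / 2 - M x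

lemma EB_Wf {A B M : ℝ → ℝ} (hA : L1 A) (hB : L1 B) (hM : L1 M) (x s z : ℝ) :
    EB (fun g => Wf A B M (x + s * g) z) := by
  have h1 := (hA.EBs (x + z / 2) s).divconst 2
  have h2 := (hB.EBs (x - z / 2) s).divconst 2
  have h3 := hM.EBs x s
  have := (h1.add h2).sub h3
  convert this using 2 with g
  unfold Wf
  congr 3 <;> ring_nf

lemma step_W {A B M u : ℝ → ℝ} (hA : L1 A) (hB : L1 B) (hM : Cls M u) {s : Stp} (hs : s.ok)
    (hv1 : s.v ≤ 1) (x z : ℝ) :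
    (∫ g, Wf A B M (x + s.c * s.v * u x + √s.v * g) (z + (s.a - s.b) * s.v * u x) ∂gam)
      - C0 * s.v ^ 2 ≤ Wf (T s.a s.v A) (T s.b s.v B) (T s.c s.v M) x z := by
  have h1 := ss_lower hA hs.a0 hs.v0 (x + z / 2) (u x)
  have h2 := ss_lower hB hs.b0 hs.v0 (x - z / 2) (u x)
  have h3 := ss_upper hM hs.c0 hs.c1 hs.v0 hv1 x
  have i1 := ((hA.EBs (x + z / 2 + s.a * s.v * u x) (√s.v)).divconst 2).integrable
  have i2 := ((hB.EBs (x - z / 2 + s.b * s.v * u x) (√s.v)).divconst 2).integrable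
  have i3 := (hM.lip.EBs (x + s.c * s.v * u x) (√s.v)).integrable
  have e : (∫ g, Wf A B M (x + s.c * s.v * u x + √s.v * g) (z + (s.a - s.b) * s.v * u x) ∂gam) =
      (∫ g, A (x + z / 2 + s.a * s.v * u x + √s.v * g) ∂gam) / 2 +
      (∫ g, B (x - z / 2 + s.b * s.v * u x + √s.v * g) ∂gam) / 2 -
      ∫ g, M (x + s.c * s.v * u x + √s.v * g) ∂gam := by
    have i12 : Integrable (fun g => A (x + z / 2 + s.a * s.v * u x + √s.v * g) / 2 +
      B (x - z / 2 + s.b * s.v * u x + √s.v * g) / 2) gam := i1.add i2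
    rw [← integral_div, ← integral_div, ← integral_add i1 i2, ← integral_sub i12 i3]
    congr 1; ext g
    simp only [Wf]
    congr 3
    · congr 1; unfold Stp.c; ring
    · congr 1; unfold Stp.c; ring
  rw [e]
  unfold Wf
  have : s.c = (s.a + s.b) / 2 := rfl
  have e2 : s.c * s.v * u x ^ 2 / 2 = (s.a * s.v * u x ^ 2 / 2) / 2 + (s.b * s.v * u x ^ 2 / 2) / 2 := by
    rw [this]; ring
  linarith

lemma var_step {M u : ℝ → ℝ} {c : ℝ} (hc : 0 ≤ c) (h : Cls M u) (hl : Low c M) {m v : ℝ}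
    (hm : 0 ≤ m) (hm1 : m ≤ 1) (hv : 0 ≤ v) (hv1 : v ≤ 1 / 256) (x z D : ℝ) :
    (z + D * ∫ g, u (x + m * v * u x + √v * g) ∂gam) ^ 2 + D ^ 2 * (v * (c ^ 2 / 1296 / cosh x ^ 4)) ≤
      ∫ g, (z + D * u (x + m * v * u x + √v * g)) ^ 2 ∂gam := by
  have hvl := var_lower hc h hl hm hm1 hv hv1 x
  have hf := h.EBu.affine (x + m * v * u x) (√v)
  set f := fun g => u (x + m * v * u x + √v * g) with hfd
  have e : ∀ g, (z + D * f g) ^ 2 = z ^ 2 + 2 * z * D * f g + D ^ 2 * f g ^ 2 := fun g => by ring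
  have : ∫ g, (z + D * f g) ^ 2 ∂gam = z ^ 2 + 2 * z * D * (∫ g, f g ∂gam) + D ^ 2 * ∫ g, f g ^ 2 ∂gam := by
    simp only [e]
    have i1 : Integrable (fun g => z ^ 2 + 2 * z * D * f g) gam :=
      (integrable_const _).add (hf.constmul _).integrable
    rw [integral_add i1 ((hf.pow 2).constmul _).integrable,
      integral_add (integrable_const _) (hf.constmul _).integrable, integral_const_mul, integral_const_mul]
    simp
  rw [this]
  nlinarith [mul_le_mul_of_nonneg_left hvl (sq_nonneg D)]

set_option maxHeartbeats 1000000 in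
/-- Main inductive inequality for chains. -/
lemma chain {η Tm r s b0 κ K : ℝ} (hη : 0 < η) (hη1 : η ≤ 1 / 256) (hη2 : (6 + C0) * η ≤ 1 / 2)
    (hT : 1 ≤ Tm) (hr : 0 ≤ r) (hs : 0 ≤ s) (hb : 0 ≤ b0) (hκ : 0 ≤ κ) (hκ1 : κ ≤ 1)
    (hK : K = (1 / 3 * exp (-(2 * (6 + C0) * Tm))) ^ 2 / 1296)
    (hsK : ∀ x, s * (1 - r * (x ^ 2 + 4)) ≤ K / cosh x ^ 4)
    (hκb : ∀ x z, |z| ≤ Tm → κ * (z ^ 2 - b0 * (x ^ 2 + 4)) ≤ Wf lc lc lc x z)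
    (L : List Stp) (hL : okL η L) : ∀ x z, |z| + tot L ≤ Tm →
    κ * ((z + dif L * Um L x) ^ 2 + s * gain L - 80 * Tm ^ 2 * C0 ^ 2 * √η * tot L
      - (b0 + s * r * Tm ^ 2 * tot L) * exp (tot L) * (x ^ 2 + 4)) - C0 * η * tot L ≤
    Wf (Ps Stp.a L) (Ps Stp.b L) (Ps Stp.c L) x z := by
  have hC := one_le_C0
  induction L with
  | nil =>
    intro x z hz
    simp only [tot, dif, gain, Ps]
    have := hκb x z (by simpa [tot] using hz)
    simpa using this
  | cons t L ih =>
    intro x z hz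
    have hL' := hL.tail
    have ht := hL.head.1
    have htv := hL.head.2
    have hcl := hL'.cls
    have hsq : √t.v ≤ √η := sqrt_le_sqrt htv
    have hv1 : t.v ≤ 1 := by linarith
    have hv0 := ht.v0
    have htot := hL'.tot
    have hdif := hL'.dif
    simp only [tot] at hz
    set v := t.v with hv
    set S := tot L with hS
    set D := dif L with hD
    set G := gain L with hG
    set u := Um L x with hu
    have hub : |u| ≤ 1 := hcl.ub x
    set z' := z + (t.a - t.b) * v * u with hz'
    have hab : |t.a - t.b| ≤ 1 := by
      rw [abs_le]; constructor <;> linarith [ht.a0, ht.a1, ht.b0, ht.b1]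
    have hdvu : |(t.a - t.b) * v * u| ≤ v := by
      rw [abs_mul, abs_mul, abs_of_nonneg hv0]
      calc |t.a - t.b| * v * |u| ≤ 1 * v * 1 := by gcongr
        _ = v := by ring
    have hz1 : |z'| + S ≤ Tm := by
      have : |z'| ≤ |z| + v := (abs_add_le _ _).trans (by linarith)
      linarith
    have hW := step_W hL'.A hL'.B hcl ht hv1 x z
    rw [← hv, ← hu, ← hz'] at hW
    set bL := (b0 + s * r * Tm ^ 2 * S) * exp S with hbL
    have hbL0 : 0 ≤ bL := by positivity
    have ihg : ∀ g, κ * ((z' + D * Um L (x + t.c * v * u + √v * g)) ^ 2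
        + (s * G - 80 * Tm ^ 2 * C0 ^ 2 * √η * S)
        - bL * ((x + t.c * v * u + √v * g) ^ 2 + 4)) - C0 * η * S ≤
        Wf (Ps Stp.a L) (Ps Stp.b L) (Ps Stp.c L) (x + t.c * v * u + √v * g) z' := fun g => by
      have := ih hL' (x + t.c * v * u + √v * g) z' hz1
      convert this using 1
      ring
    have hf := hcl.EBu.affine (x + t.c * v * u) (√v)
    have e1 : EB (fun g => (z' + D * Um L (x + t.c * v * u + √v * g)) ^ 2) :=
      ((EB.const z').add (hf.constmul D)).pow 2
    have e2 : EB (fun g => (x + t.c * v * u + √v * g) ^ 2 + 4) :=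
      (((EB.const (x + t.c * v * u)).add (EB.id.constmul (√v))).pow 2).add (EB.const 4)
    have hIntg := integral_mono
      (((((e1.add (EB.const _)).sub (e2.constmul bL)).constmul κ).sub (EB.const _)).integrable)
      (EB_Wf hL'.A hL'.B hcl.lip (x + t.c * v * u) (√v) z').integrable ihg
    rw [integral_sub (((e1.add (EB.const _)).sub (e2.constmul bL)).constmul κ).integrable
      (integrable_const _), integral_const_mul, integral_sub (e1.add (EB.const _)).integrable
      (e2.constmul bL).integrable, integral_add e1.integrable (integrable_const _),
      integral_const_mul] at hIntg
    simp only [integral_const, probReal_univ, one_smul] at hIntg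
    have hsm := second_moment ht.c0 ht.c1 hv0 hv1 hub x
    have hcs := var_step (by positivity) hcl ((hL'.low hη2).mono (c' := 1 / 3 * exp (-(2 * (6 + C0) * Tm)))
      (by
        have : S ≤ Tm := by linarith [abs_nonneg z']
        gcongr)) ht.c0 ht.c1 hv0 (by linarith) x z' D
    rw [← hK] at hcs
    have hme := mean_err hcl ht.c0 ht.c1 hv0 hv1 x
    have huc := u_step_close hcl ht.c0 ht.c1 hv0 hv1 x
    rw [← hu] at hme huc hcs
    set M := ∫ g, Um L (x + t.c * v * u + √v * g) ∂gam with hM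
    set E := Ev t.c v (Ps Stp.c L) (Um L) x with hE
    have hEb : |E| ≤ 1 := (hL.cls).ub x
    have hDT : |D| ≤ Tm := by linarith [abs_nonneg z']
    set X := z' + D * M with hX
    set Y := z + (D + (t.a - t.b) * v) * E with hY
    have hXY : |Y - X| ≤ 20 * Tm * C0 ^ 2 * √η * v := by
      have e : Y - X = D * (E - M) + (t.a - t.b) * v * (E - u) := by rw [hX, hY, hz']; ring
      rw [e]
      refine (abs_add_le _ _).trans ?_
      rw [abs_mul, abs_mul, abs_mul, abs_of_nonneg hv0]
      calc |D| * |E - M| + |t.a - t.b| * v * |E - u|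
          ≤ Tm * (8 * C0 ^ 2 * (v * √v)) + 1 * v * (12 * C0 ^ 2 * √v) := by gcongr
        _ ≤ Tm * (8 * C0 ^ 2 * (v * √η)) + Tm * v * (12 * C0 ^ 2 * √η) := by gcongr
        _ = _ := by ring
    have hYb : |Y| ≤ 2 * Tm := by
      have h1 : |(D + (t.a - t.b) * v) * E| ≤ Tm := by
        rw [abs_mul]
        have := hL.dif
        simp only [PF.dif, PF.tot] at this
        calc _ ≤ (S + v) * 1 := by gcongr
          _ ≤ Tm := by linarith [abs_nonneg z]
      exact (abs_add_le _ _).trans (by linarith [abs_nonneg z])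
    have hsqc : Y ^ 2 - 80 * Tm ^ 2 * C0 ^ 2 * √η * v ≤ X ^ 2 := by
      have h1 : Y ^ 2 - 2 * |Y| * |Y - X| ≤ X ^ 2 := by
        have : Y * (Y - X) ≤ |Y| * |Y - X| := by rw [← abs_mul]; exact le_abs_self _
        nlinarith [sq_nonneg (Y - X)]
      have h2 : 2 * |Y| * |Y - X| ≤ 2 * (2 * Tm) * (20 * Tm * C0 ^ 2 * √η * v) := by gcongr
      have h3 : 2 * (2 * Tm) * (20 * Tm * C0 ^ 2 * √η * v) = 80 * Tm ^ 2 * C0 ^ 2 * √η * v := by ring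
      linarith
    have hvar : s * D ^ 2 * v - s * r * Tm ^ 2 * v * (x ^ 2 + 4) ≤ D ^ 2 * (v * (K / cosh x ^ 4)) := by
      have h1 := mul_le_mul_of_nonneg_left (hsK x) (mul_nonneg (sq_nonneg D) hv0)
      have h2 : D ^ 2 ≤ Tm ^ 2 := by rw [← sq_abs D]; gcongr
      have h3 : s * r * D ^ 2 * v * (x ^ 2 + 4) ≤ s * r * Tm ^ 2 * v * (x ^ 2 + 4) := by gcongr
      have h4 : D ^ 2 * v * (s * (1 - r * (x ^ 2 + 4))) =
        s * D ^ 2 * v - s * r * D ^ 2 * v * (x ^ 2 + 4) := by ring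
      have h5 : D ^ 2 * v * (K / cosh x ^ 4) = D ^ 2 * (v * (K / cosh x ^ 4)) := by ring
      linarith
    have hbb : bL * (1 + v) + s * r * Tm ^ 2 * v ≤ (b0 + s * r * Tm ^ 2 * (S + v)) * exp (S + v) := by
      have h1 : bL * (1 + v) ≤ bL * exp v := by
        gcongr; linarith [add_one_le_exp v]
      have h2 : s * r * Tm ^ 2 * v * 1 ≤ s * r * Tm ^ 2 * v * exp (S + v) := by
        gcongr; exact one_le_exp (by linarith)
      rw [hbL] at h1 ⊢
      rw [exp_add] at h2 ⊢
      have h3 : (b0 + s * r * Tm ^ 2 * (S + v)) * (exp S * exp v) =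
        (b0 + s * r * Tm ^ 2 * S) * exp S * exp v + s * r * Tm ^ 2 * v * (exp S * exp v) := by ring
      linarith
    have hx4 : 0 ≤ x ^ 2 + 4 := by positivity
    have hbb2 := mul_le_mul_of_nonneg_right hbb hx4
    have hsm2 := mul_le_mul_of_nonneg_left hsm hbL0
    simp only [tot, dif, gain, Ps]
    refine le_trans ?_ hW
    have hv2 : C0 * v ^ 2 ≤ C0 * η * v := by
      have := mul_le_mul_of_nonneg_left htv hv0
      nlinarith
    have key : κ * (Y ^ 2 + s * (G + D ^ 2 * v) - 80 * Tm ^ 2 * C0 ^ 2 * √η * (S + v)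
      - (b0 + s * r * Tm ^ 2 * (S + v)) * exp (S + v) * (x ^ 2 + 4)) ≤
      κ * ((∫ g, (z' + D * Um L (x + t.c * v * u + √v * g)) ^ 2 ∂gam)
        + (s * G - 80 * Tm ^ 2 * C0 ^ 2 * √η * S)
        - bL * ∫ g, ((x + t.c * v * u + √v * g) ^ 2 + 4) ∂gam) := by
      refine mul_le_mul_of_nonneg_left ?_ hκ
      linarith
    have hfin : κ * (Y ^ 2 + s * (G + D ^ 2 * v) - 80 * Tm ^ 2 * C0 ^ 2 * √η * (S + v)
      - (b0 + s * r * Tm ^ 2 * (S + v)) * exp (S + v) * (x ^ 2 + 4)) - C0 * η * (S + v) ≤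
      (∫ g, Wf (Ps Stp.a L) (Ps Stp.b L) (Ps Stp.c L) (x + t.c * v * u + √v * g) z' ∂gam)
        - C0 * v ^ 2 := by
      linarith
    exact hfin

end PF

namespace PF

lemma gain_lower {η Tm : ℝ} (hη : 0 ≤ η) (hη1 : η ≤ 1) (L : List Stp) (hL : okL η L) (hT : tot L ≤ Tm) :
    |dif L| ^ 3 / 3 - (Tm + 1) * η * tot L ≤ gain L := by
  induction L with
  | nil => simp [dif, gain, tot]
  | cons s L ih =>
    have hs := hL.head.1
    have hv0 := hs.v0
    have htv := hL.head.2
    simp only [tot] at hT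
    have h1 := ih hL.tail (by linarith)
    have hd := hL.tail.dif
    have ht0 := hL.tail.tot
    simp only [tot, dif, gain]
    set v := s.v
    have h2 : |dif L + (s.a - s.b) * v| ≤ |dif L| + v := by
      refine (abs_add_le _ _).trans ?_
      have : |(s.a - s.b) * v| ≤ v := by
        rw [abs_mul, abs_of_nonneg hv0]
        have : |s.a - s.b| ≤ 1 := by
          rw [abs_le]; constructor <;> linarith [hs.a0, hs.a1, hs.b0, hs.b1]
        nlinarith
      linarith
    have h3 : |dif L + (s.a - s.b) * v| ^ 3 ≤ (|dif L| + v) ^ 3 := by gcongr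
    set X := |dif L| with hX
    have hX0 : 0 ≤ X := abs_nonneg _
    have hXT : X ≤ Tm := by linarith
    have e : dif L ^ 2 = X ^ 2 := (sq_abs _).symm
    rw [e]
    have h4 : (X + v) ^ 3 = X ^ 3 + 3 * (X ^ 2 * v) + 3 * (X * v * v) + v * v * v := by ring
    have hTm0 : 0 ≤ Tm := by linarith
    have h5 : X * v * v ≤ Tm * η * v := by gcongr
    have h6 : v * v * v ≤ 1 * η * v := by gcongr; linarith
    have h7 : 0 ≤ η * v := by positivity
    nlinarith

lemma gain_append {η : ℝ} (pre L : List Stp) (h : okL η (pre ++ L)) : gain L ≤ gain (pre ++ L) := by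
  induction pre with
  | nil => simp
  | cons s pre ih =>
    have h1 := ih h.tail
    have : 0 ≤ dif (pre ++ L) ^ 2 * s.v := mul_nonneg (sq_nonneg _) h.head.1.v0
    simp only [List.cons_append, gain]
    linarith

/-- subdivision of the steps -/
def refn (n : ℕ) : List Stp → List Stp
  | [] => []
  | s :: L => List.replicate n ⟨s.v / n, s.a, s.b⟩ ++ refn n L

lemma refn_append (n : ℕ) (L L' : List Stp) : refn n (L ++ L') = refn n L ++ refn n L' := by
  induction L with
  | nil => rfl
  | cons s L ih => simp [refn, ih]

lemma tot_rep (n : ℕ) (s : Stp) (L : List Stp) : tot (List.replicate n s ++ L) = tot L + n * s.v := by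
  induction n with
  | zero => simp
  | succ n ih => simp only [List.replicate_succ, List.cons_append, tot, ih]; push_cast; ring

lemma dif_rep (n : ℕ) (s : Stp) (L : List Stp) :
    dif (List.replicate n s ++ L) = dif L + (s.a - s.b) * (n * s.v) := by
  induction n with
  | zero => simp
  | succ n ih => simp only [List.replicate_succ, List.cons_append, dif, ih]; push_cast; ring

lemma Ps_rep (f : Stp → ℝ) (n : ℕ) {s : Stp} (hv : 0 ≤ s.v) {L : List Stp} (hL : L1 (Ps f L)) :
    Ps f (List.replicate n s ++ L) = T (f s) (n * s.v) (Ps f L) := by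
  induction n with
  | zero => simp [T_zerovar']
  | succ n ih =>
    simp only [List.replicate_succ, List.cons_append, Ps, ih]
    ext x
    rw [T_semigroup hL _ hv (by positivity)]
    congr 1; push_cast; ring

lemma tot_refn {n : ℕ} (hn : n ≠ 0) (L : List Stp) : tot (refn n L) = tot L := by
  induction L with
  | nil => rfl
  | cons s L ih => simp only [refn, tot_rep, tot, ih]; field_simp

lemma dif_refn {n : ℕ} (hn : n ≠ 0) (L : List Stp) : dif (refn n L) = dif L := by
  induction L with
  | nil => rfl
  | cons s L ih => simp only [refn, dif_rep, dif, ih]; field_simp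

lemma okL_refn {n : ℕ} {η : ℝ} (L : List Stp) (h : okL η L) : okL (η / n) (refn n L) := by
  induction L with
  | nil => intro s hs; simp [refn] at hs
  | cons s L ih =>
    intro t ht
    simp only [refn, List.mem_append, List.mem_replicate] at ht
    rcases ht with ⟨_, rfl⟩ | ht
    · have := h.head
      have h0 := this.1
      refine ⟨⟨div_nonneg h0.v0 (by positivity), h0.a0, h0.a1, h0.b0, h0.b1⟩, ?_⟩
      show s.v / n ≤ η / n
      gcongr
      exact this.2
    · exact ih h.tail t ht

lemma Ps_refn {f : Stp → ℝ} (hf : ∀ v v' a b, f ⟨v, a, b⟩ = f ⟨v', a, b⟩) {n : ℕ} (hn : n ≠ 0)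
    {η : ℝ} (L : List Stp) (h : okL η L) (hp : ∀ s : Stp, s.ok → 0 ≤ f s) :
    Ps f (refn n L) = Ps f L := by
  induction L with
  | nil => rfl
  | cons s L ih =>
    have h1 : L1 (Ps f (refn n L)) := by
      rw [ih h.tail]; exact Ps_L1 fun s hs => hp s (h.tail s hs).1
    rw [refn, Ps_rep f n (div_nonneg h.head.1.v0 (by positivity)) h1, ih h.tail, Ps,
      hf (s.v / n) s.v s.a s.b]
    congr 1
    field_simp

lemma Wf_lc_nonneg (x z : ℝ) : 0 ≤ Wf lc lc lc x z := by
  unfold Wf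
  have h1 := Cls_lc.sub x (z / 2)
  have h2 := Cls_lc.sub x (-(z / 2))
  rw [← sub_eq_add_neg] at h2
  linarith

lemma cosh_le_of {x R : ℝ} (h : x ^ 2 ≤ R) (hR : 0 ≤ R) : cosh x ≤ cosh (R + 1) := by
  rw [cosh_le_cosh, abs_of_nonneg (by linarith : (0:ℝ) ≤ R + 1)]
  have := sq_abs x
  nlinarith [abs_nonneg x]

lemma choose_s {K r : ℝ} (hK : 0 < K) (hr : 0 < r) :
    ∃ s, 0 < s ∧ ∀ x, s * (1 - r * (x ^ 2 + 4)) ≤ K / cosh x ^ 4 := by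
  refine ⟨K / cosh (1 / r + 1) ^ 4, div_pos hK (pow_pos (cosh_pos _) _), fun x => ?_⟩
  have hc := cosh_pos x
  have hc' := cosh_pos (1 / r + 1)
  by_cases hx : x ^ 2 ≤ 1 / r
  · have h1 := cosh_le_of hx (by positivity)
    have h2 : K / cosh (1 / r + 1) ^ 4 ≤ K / cosh x ^ 4 := by gcongr
    refine le_trans ?_ h2
    have : 0 ≤ r * (x ^ 2 + 4) := by positivity
    have h3 : 0 ≤ K / cosh (1 / r + 1) ^ 4 := by positivity
    nlinarith
  · push Not at hx
    have h1 : 1 ≤ r * (x ^ 2 + 4) := by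
      rw [div_lt_iff₀ hr] at hx
      nlinarith
    have h2 : K / cosh (1 / r + 1) ^ 4 * (1 - r * (x ^ 2 + 4)) ≤ 0 :=
      mul_nonpos_of_nonneg_of_nonpos (by positivity) (by linarith)
    exact h2.trans (by positivity)

lemma choose_k {Tm b0 : ℝ} (hT : 1 ≤ Tm) (hb : 0 < b0) :
    ∃ κ, 0 < κ ∧ κ ≤ 1 ∧ ∀ x z, |z| ≤ Tm → κ * (z ^ 2 - b0 * (x ^ 2 + 4)) ≤ Wf lc lc lc x z := by
  set R := Tm ^ 2 / b0 with hR
  have hc' := cosh_pos (R + 1)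
  have hc1 := one_le_cosh (R + 1)
  refine ⟨1 / (8 * cosh (R + 1) ^ 2 * (1 + sinh Tm ^ 2)), by positivity, ?_, fun x z hz => ?_⟩
  · rw [div_le_one (by positivity)]
    nlinarith [sq_nonneg (sinh Tm), sq_nonneg (cosh (R + 1)), mul_nonneg (sq_nonneg (cosh (R + 1))) (sq_nonneg (sinh Tm))]
  have hc := cosh_pos x
  have hzT : z ^ 2 ≤ Tm ^ 2 := by rw [← sq_abs z]; gcongr
  by_cases hx : x ^ 2 ≤ R
  · have h1 := cosh_le_of hx (by positivity)
    have hg := lc_gap_lower x (z / 2) Tm (by rw [abs_div, abs_two]; linarith [abs_nonneg z])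
    have h2 : (z / 2) ^ 2 / cosh x ^ 2 / (1 + sinh Tm ^ 2) / 2 ≤ Wf lc lc lc x z := by
      unfold Wf; linarith
    refine le_trans ?_ h2
    have h3 : 1 / (8 * cosh (R + 1) ^ 2 * (1 + sinh Tm ^ 2)) * (z ^ 2 - b0 * (x ^ 2 + 4)) ≤
        1 / (8 * cosh (R + 1) ^ 2 * (1 + sinh Tm ^ 2)) * z ^ 2 := by
      gcongr
      have : 0 ≤ b0 * (x ^ 2 + 4) := by positivity
      linarith
    refine h3.trans ?_
    have h4 : (z / 2) ^ 2 / cosh x ^ 2 / (1 + sinh Tm ^ 2) / 2 =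
      1 / (8 * cosh x ^ 2 * (1 + sinh Tm ^ 2)) * z ^ 2 := by
      field_simp; ring
    rw [h4]
    gcongr
  · push Not at hx
    refine le_trans ?_ (Wf_lc_nonneg x z)
    rw [hR, div_lt_iff₀ hb] at hx
    refine mul_nonpos_of_nonneg_of_nonpos (by positivity) ?_
    nlinarith

set_option maxHeartbeats 1000000 in
/-- Quantitative strict convexity along chains. -/
theorem chain_final (h Tm d : ℝ) (hT : 1 ≤ Tm) (hd : 0 < d) : ∃ ε > 0, ∀ pre L : List Stp,
    okL Tm (pre ++ L) → tot (pre ++ L) ≤ Tm → d ≤ |dif L| →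
    ε ≤ Wf (Ps Stp.a (pre ++ L)) (Ps Stp.b (pre ++ L)) (Ps Stp.c (pre ++ L)) h 0 := by
  have hC := one_le_C0
  set K := (1 / 3 * exp (-(2 * (6 + C0) * Tm))) ^ 2 / 1296 with hK
  have hK0 : 0 < K := by positivity
  set H := exp Tm * (h ^ 2 + 4) with hH
  have hH0 : 0 < H := by positivity
  set r := d ^ 3 / 12 / (Tm ^ 3 * H) with hr
  have hr0 : 0 < r := by positivity
  obtain ⟨s, hs0, hs⟩ := choose_s hK0 hr0
  set b0 := s * d ^ 3 / 12 / H with hb0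
  have hb00 : 0 < b0 := by positivity
  obtain ⟨κ, hκ0, hκ1, hκ⟩ := choose_k hT hb00
  refine ⟨κ * (s * d ^ 3 / 6), by positivity, fun pre L hok htot hdL => ?_⟩
  set N := pre ++ L with hN
  set C := κ * (s * (Tm + 1) * Tm + 80 * Tm ^ 2 * C0 ^ 2 * Tm) + C0 * Tm with hCd
  have hCpos : 0 < C := by positivity
  -- bound for every small η
  have main : ∀ η, 0 < η → η ≤ 1 / 256 → (6 + C0) * η ≤ 1 / 2 →
      κ * (s * d ^ 3 / 6) - C * √η ≤ Wf (Ps Stp.a N) (Ps Stp.b N) (Ps Stp.c N) h 0 := by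
    intro η hη hη1 hη2
    obtain ⟨n, hn⟩ := exists_nat_gt (Tm / η)
    have hn0 : (0:ℝ) < n := lt_trans (by positivity) hn
    have hne : n ≠ 0 := by rintro rfl; simp at hn0
    have hok' : okL η (refn n N) := by
      have := okL_refn (n := n) N hok
      intro t ht
      refine ⟨(this t ht).1, (this t ht).2.trans ?_⟩
      rw [div_le_iff₀ hn0]
      rw [div_lt_iff₀ hη] at hn
      linarith
    have hch := chain hη hη1 hη2 hT hr0.le hs0.le hb00.le hκ0.le hκ1 hK hs hκ (refn n N) hok' h 0
      (by rw [tot_refn hne]; simpa using htot)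
    rw [Ps_refn (fun _ _ _ _ => rfl) hne N hok (fun s hs => hs.a0),
      Ps_refn (fun _ _ _ _ => rfl) hne N hok (fun s hs => hs.b0),
      Ps_refn (fun _ _ _ _ => rfl) hne N hok (fun s hs => hs.c0)] at hch
    refine le_trans ?_ hch
    have hgain : d ^ 3 / 3 - (Tm + 1) * η * Tm ≤ gain (refn n N) := by
      have e : refn n N = refn n pre ++ refn n L := refn_append n pre L
      have g1 := gain_append (refn n pre) (refn n L) (e ▸ hok')
      rw [← e] at g1
      have hokL : okL η (refn n L) := fun t ht => hok' t (by rw [e]; exact List.mem_append_right _ ht)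
      have htL : tot (refn n L) ≤ Tm := by
        have : ∀ P : List Stp, okL Tm (P ++ L) → tot L ≤ tot (P ++ L) := by
          intro P
          induction P with
          | nil => intro _; simp
          | cons t P ih =>
            intro hP
            have := ih hP.tail
            have := hP.head.1.v0
            simp only [List.cons_append, tot]; linarith
        rw [tot_refn hne]
        exact (this pre hok).trans htot
      have g2 := gain_lower (Tm := Tm) hη.le (by linarith) (refn n L) hokL htL
      rw [dif_refn hne] at g2
      have g3 : d ^ 3 ≤ |dif L| ^ 3 := by gcongr
      have g4 : (Tm + 1) * η * tot (refn n L) ≤ (Tm + 1) * η * Tm := by gcongr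
      linarith
    rw [tot_refn hne]
    have ht0 := hok.tot
    have hηs : η ≤ √η := by
      rw [le_sqrt' hη]; nlinarith
    have hsq := sqrt_nonneg η
    have t1 : s * (d ^ 3 / 3 - (Tm + 1) * √η * Tm) ≤ s * gain (refn n N) := by
      refine mul_le_mul_of_nonneg_left (le_trans ?_ hgain) hs0.le
      have : (Tm + 1) * η * Tm ≤ (Tm + 1) * √η * Tm := by gcongr
      linarith
    have t2 : 80 * Tm ^ 2 * C0 ^ 2 * √η * tot N ≤ 80 * Tm ^ 2 * C0 ^ 2 * √η * Tm := by gcongr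
    have t3 : C0 * η * tot N ≤ C0 * √η * Tm := by gcongr
    have t4 : (b0 + s * r * Tm ^ 2 * tot N) * exp (tot N) * (h ^ 2 + 4) ≤ s * d ^ 3 / 6 := by
      calc (b0 + s * r * Tm ^ 2 * tot N) * exp (tot N) * (h ^ 2 + 4)
          ≤ (b0 + s * r * Tm ^ 2 * Tm) * exp Tm * (h ^ 2 + 4) := by gcongr
        _ = b0 * H + s * (r * (Tm ^ 3 * H)) := by rw [hH]; ring
        _ = s * d ^ 3 / 12 + s * (d ^ 3 / 12) := by
            rw [hb0, hr, div_mul_cancel₀ _ hH0.ne', div_mul_cancel₀ _ (by positivity)]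
        _ = _ := by ring
    have t5 : 0 ≤ (0 + dif (refn n N) * Um (refn n N) h) ^ 2 := sq_nonneg _
    have t6 : κ * (s * d ^ 3 / 6 - s * (Tm + 1) * √η * Tm - 80 * Tm ^ 2 * C0 ^ 2 * √η * Tm) ≤
      κ * ((0 + dif (refn n N) * Um (refn n N) h) ^ 2 + s * gain (refn n N)
        - 80 * Tm ^ 2 * C0 ^ 2 * √η * tot N
        - (b0 + s * r * Tm ^ 2 * tot N) * exp (tot N) * (h ^ 2 + 4)) := by
      refine mul_le_mul_of_nonneg_left ?_ hκ0.le
      have t8 : s * (d ^ 3 / 3 - (Tm + 1) * √η * Tm) = s * d ^ 3 / 6 + s * d ^ 3 / 6 - s * (Tm + 1) * √η * Tm := by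
        ring
      linarith
    have t7 : C * √η = κ * (s * (Tm + 1) * √η * Tm + 80 * Tm ^ 2 * C0 ^ 2 * √η * Tm) + C0 * √η * Tm := by
      rw [hCd]; ring
    have t9 : κ * (s * d ^ 3 / 6 - s * (Tm + 1) * √η * Tm - 80 * Tm ^ 2 * C0 ^ 2 * √η * Tm) =
      κ * (s * d ^ 3 / 6) - κ * (s * (Tm + 1) * √η * Tm + 80 * Tm ^ 2 * C0 ^ 2 * √η * Tm) := by ring
    linarith
  refine le_of_forall_pos_le_add fun e he => ?_
  set η := min (min (1 / 256) (1 / 2 / (6 + C0))) ((e / C) ^ 2) with hη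
  have h6 : 0 < 6 + C0 := by linarith
  have hη0 : 0 < η := by
    rw [hη]; positivity
  have m1 := main η hη0 ((min_le_left _ _).trans (min_le_left _ _)) (by
    have : η ≤ 1 / 2 / (6 + C0) := (min_le_left _ _).trans (min_le_right _ _)
    rw [le_div_iff₀ h6] at this
    linarith)
  have : √η ≤ e / C := by
    rw [sqrt_le_left (by positivity)]
    exact min_le_right _ _
  rw [le_div_iff₀ hCpos] at this
  linarith

end PF

namespace PF

/-- Sortedness of a list of pairs `(q, m)` from the current state `(q, m)`. -/
def Gd : ℝ → ℝ → List (ℝ × ℝ) → Prop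
  | q, m, [] => q ≤ 1 ∧ m = 1
  | q, m, p :: z => q ≤ p.1 ∧ m ≤ p.2 ∧ Gd p.1 p.2 z

/-- The Parisi recursion along a list of pairs. -/
def Psi (τ : ℝ → ℝ) (E : ℝ) : ℝ → ℝ → List (ℝ × ℝ) → ℝ → ℝ
  | t, m, [] => T m (E - t) lc
  | t, m, p :: z => T m (τ p.1 - t) (Psi τ E (τ p.1) p.2 z)

/-- Integration against the discrete measure. -/
def meas : ℝ → List (ℝ × ℝ) → (ℝ → ℝ) → ℝ
  | _, [], _ => 0
  | m, p :: z, f => (p.2 - m) * f p.1 + meas p.2 z f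

lemma Gd.q_le {q m : ℝ} {z : List (ℝ × ℝ)} (h : Gd q m z) : q ≤ 1 := by
  induction z generalizing q m with
  | nil => exact h.1
  | cons p z ih => exact h.1.trans (ih h.2.2)

lemma Gd.m_le {q m : ℝ} {z : List (ℝ × ℝ)} (h : Gd q m z) : m ≤ 1 := by
  induction z generalizing q m with
  | nil => exact h.2.le
  | cons p z ih => exact h.2.1.trans (ih h.2.2)

lemma Gd.mem {q m : ℝ} {z : List (ℝ × ℝ)} (h : Gd q m z) {p : ℝ × ℝ} (hp : p ∈ z) :
    q ≤ p.1 ∧ p.1 ≤ 1 ∧ m ≤ p.2 ∧ p.2 ≤ 1 := by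
  induction z generalizing q m with
  | nil => simp at hp
  | cons r z ih =>
    rcases List.mem_cons.1 hp with rfl | hp
    · exact ⟨h.1, h.2.2.q_le, h.2.1, h.2.2.m_le⟩
    · have := ih h.2.2 hp
      exact ⟨h.1.trans this.1, this.2.1, h.2.1.trans this.2.2.1, this.2.2.2⟩

lemma Gd.anti {q q' m : ℝ} {z : List (ℝ × ℝ)} (h : Gd q m z) (hq : q' ≤ q) : Gd q' m z := by
  cases z with
  | nil => exact ⟨hq.trans h.1, h.2⟩
  | cons p z => exact ⟨hq.trans h.1, h.2⟩

lemma Psi_L1 (τ : ℝ → ℝ) (E t : ℝ) {m : ℝ} (hm : 0 ≤ m) {z : List (ℝ × ℝ)} (h : ∀ p ∈ z, 0 ≤ p.2) :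
    L1 (Psi τ E t m z) := by
  induction z generalizing t m with
  | nil => exact T_L1 lc_L1 hm _
  | cons p z ih =>
    exact T_L1 (ih _ (h p List.mem_cons_self) fun r hr => h r (List.mem_cons_of_mem _ hr)) hm _

lemma Gd.L1 {q m : ℝ} {z : List (ℝ × ℝ)} (h : Gd q m z) (hm : 0 ≤ m) (τ : ℝ → ℝ) (E t : ℝ) :
    L1 (Psi τ E t m z) := Psi_L1 τ E t hm fun _ hp => hm.trans (h.mem hp).2.2.1

lemma meas_congr {q m : ℝ} {z : List (ℝ × ℝ)} (h : Gd q m z) {f g : ℝ → ℝ}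
    (hfg : ∀ x, q ≤ x → x ≤ 1 → f x = g x) : meas m z f = meas m z g := by
  induction z generalizing q m with
  | nil => rfl
  | cons p z ih =>
    simp only [meas]
    rw [hfg _ h.1 h.2.2.q_le, ih h.2.2 fun x hx => hfg x (h.1.trans hx)]

lemma meas_mono {q m : ℝ} {z : List (ℝ × ℝ)} (h : Gd q m z) {f g : ℝ → ℝ}
    (hfg : ∀ x, q ≤ x → x ≤ 1 → f x ≤ g x) : meas m z f ≤ meas m z g := by
  induction z generalizing q m with
  | nil => exact le_rfl
  | cons p z ih =>
    simp only [meas]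
    exact add_le_add (mul_le_mul_of_nonneg_left (hfg _ h.1 h.2.2.q_le) (sub_nonneg.2 h.2.1))
      (ih h.2.2 fun x hx => hfg x (h.1.trans hx))

lemma meas_add (m : ℝ) (z : List (ℝ × ℝ)) (f g : ℝ → ℝ) :
    meas m z (fun x => f x + g x) = meas m z f + meas m z g := by
  induction z generalizing m with
  | nil => simp [meas]
  | cons p z ih => simp only [meas, ih]; ring

lemma meas_mul (m : ℝ) (z : List (ℝ × ℝ)) (c : ℝ) (f : ℝ → ℝ) :
    meas m z (fun x => c * f x) = c * meas m z f := by
  induction z generalizing m with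
  | nil => simp [meas]
  | cons p z ih => simp only [meas, ih]; ring

lemma meas_sub (m : ℝ) (z : List (ℝ × ℝ)) (f g : ℝ → ℝ) :
    meas m z (fun x => f x - g x) = meas m z f - meas m z g := by
  induction z generalizing m with
  | nil => simp [meas]
  | cons p z ih => simp only [meas, ih]; ring

lemma meas_const {q m : ℝ} {z : List (ℝ × ℝ)} (h : Gd q m z) (c : ℝ) :
    meas m z (fun _ => c) = (1 - m) * c := by
  induction z generalizing q m with
  | nil => simp [meas, h.2]
  | cons p z ih => simp only [meas, ih h.2.2]; ring

/-- Monotone time change. -/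
def Mono01 (τ : ℝ → ℝ) : Prop := ∀ x y, 0 ≤ x → x ≤ y → y ≤ 1 → τ x ≤ τ y

lemma Psi_ins {τ : ℝ → ℝ} (hτ : Mono01 τ) {q m t : ℝ} {z : List (ℝ × ℝ)} (hq : 0 ≤ q) (hm : 0 ≤ m)
    (h : Gd q m z) (ht : t ≤ τ q) :
    Psi τ (τ 1) t m z = T m (τ q - t) (Psi τ (τ 1) (τ q) m z) := by
  cases z with
  | nil =>
    ext x
    simp only [Psi]
    rw [T_semigroup lc_L1 m (by linarith) (by linarith [hτ q 1 hq h.1 le_rfl])]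
    congr 1; ring
  | cons p z =>
    ext x
    simp only [Psi]
    have h1 := hτ q p.1 hq h.1 h.2.2.q_le
    rw [T_semigroup (h.2.2.L1 (hm.trans h.2.1) _ _ _) m (by linarith) (by linarith)]
    congr 1; ring

/-- Merging of two lists. -/
def mrg : ℝ → ℝ → List (ℝ × ℝ) → List (ℝ × ℝ) → List (ℝ × ℝ × ℝ)
  | _, _, [], [] => []
  | _, b, p :: z, [] => (p.1, p.2, b) :: mrg p.2 b z []
  | a, _, [], r :: w => (r.1, a, r.2) :: mrg a r.2 [] w
  | a, b, p :: z, r :: w =>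
    if p.1 ≤ r.1 then (p.1, p.2, b) :: mrg p.2 b z (r :: w)
    else (r.1, a, r.2) :: mrg a r.2 (p :: z) w
termination_by _ _ z w => z.length + w.length

def prA (x : ℝ × ℝ × ℝ) : ℝ × ℝ := (x.1, x.2.1)
def prB (x : ℝ × ℝ × ℝ) : ℝ × ℝ := (x.1, x.2.2)
def prC (x : ℝ × ℝ × ℝ) : ℝ × ℝ := (x.1, (x.2.1 + x.2.2) / 2)

lemma mrg_ind {P : ℝ → ℝ → ℝ → List (ℝ × ℝ) → List (ℝ × ℝ) → List (ℝ × ℝ × ℝ) → Prop}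
    (h0 : ∀ q a b, Gd q a [] → Gd q b [] → P q a b [] [] [])
    (hl : ∀ q a b (p : ℝ × ℝ) z w M, 0 ≤ q → 0 ≤ a → 0 ≤ b → Gd q a (p :: z) → Gd p.1 b w → Gd q b w →
      P p.1 p.2 b z w M → P q a b (p :: z) w ((p.1, p.2, b) :: M))
    (hr : ∀ q a b (r : ℝ × ℝ) z w M, 0 ≤ q → 0 ≤ a → 0 ≤ b → Gd q b (r :: w) → Gd r.1 a z → Gd q a z →
      P r.1 a r.2 z w M → P q a b z (r :: w) ((r.1, a, r.2) :: M)) :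
    ∀ (q a b : ℝ) (z w : List (ℝ × ℝ)), 0 ≤ q → 0 ≤ a → 0 ≤ b → Gd q a z → Gd q b w →
      P q a b z w (mrg a b z w) := by
  intro q a b z w
  induction a, b, z, w using mrg.induct generalizing q with
  | case1 a b =>
    intro _ _ _ h1 h2
    simpa [mrg] using h0 q a b h1 h2
  | case2 a b p z ih =>
    intro hq ha hb h1 h2
    have h3 : Gd p.1 b [] := ⟨h1.2.2.q_le, h2.2⟩
    rw [mrg]
    exact hl q a b p z [] _ hq ha hb h1 h3 h2
      (ih p.1 (hq.trans h1.1) (ha.trans h1.2.1) hb h1.2.2 h3)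
  | case3 a b r w ih =>
    intro hq ha hb h1 h2
    have h3 : Gd r.1 a [] := ⟨h2.2.2.q_le, h1.2⟩
    rw [mrg]
    exact hr q a b r [] w _ hq ha hb h2 h3 h1
      (ih r.1 (hq.trans h2.1) ha (hb.trans h2.2.1) h3 h2.2.2)
  | case4 a b p z r w hle ih =>
    intro hq ha hb h1 h2
    have h3 : Gd p.1 b (r :: w) := ⟨hle, h2.2⟩
    rw [mrg, if_pos hle]
    exact hl q a b p z (r :: w) _ hq ha hb h1 h3 h2
      (ih p.1 (hq.trans h1.1) (ha.trans h1.2.1) hb h1.2.2 h3)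
  | case5 a b p z r w hle ih =>
    intro hq ha hb h1 h2
    have h3 : Gd r.1 a (p :: z) := ⟨(not_le.1 hle).le, h1.2⟩
    rw [mrg, if_neg hle]
    exact hr q a b r (p :: z) w _ hq ha hb h2 h3 h1
      (ih r.1 (hq.trans h2.1) ha (hb.trans h2.2.1) h3 h2.2.2)

lemma mrg_Gd (q a b : ℝ) (z w : List (ℝ × ℝ)) (hq : 0 ≤ q) (ha : 0 ≤ a) (hb : 0 ≤ b)
    (h1 : Gd q a z) (h2 : Gd q b w) : Gd q a ((mrg a b z w).map prA) ∧ Gd q b ((mrg a b z w).map prB) ∧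
      Gd q ((a + b) / 2) ((mrg a b z w).map prC) := by
  refine mrg_ind (P := fun q a b z w M => Gd q a (M.map prA) ∧ Gd q b (M.map prB) ∧
    Gd q ((a + b) / 2) (M.map prC)) ?_ ?_ ?_ q a b z w hq ha hb h1 h2
  · intro q a b h1 h2
    refine ⟨h1, h2, h1.1, ?_⟩
    rw [h1.2, h2.2]; norm_num
  · rintro q a b p z w M _ _ _ h1 _ _ ⟨i1, i2, i3⟩
    refine ⟨⟨h1.1, h1.2.1, i1⟩, ⟨h1.1, le_rfl, i2⟩, ⟨h1.1, ?_, i3⟩⟩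
    have := h1.2.1
    simp only [prC]; linarith
  · rintro q a b p z w M _ _ _ h1 _ _ ⟨i1, i2, i3⟩
    refine ⟨⟨h1.1, le_rfl, i1⟩, ⟨h1.1, h1.2.1, i2⟩, ⟨h1.1, ?_, i3⟩⟩
    have := h1.2.1
    simp only [prC]; linarith

lemma mrg_meas (q a b : ℝ) (z w : List (ℝ × ℝ)) (hq : 0 ≤ q) (ha : 0 ≤ a) (hb : 0 ≤ b)
    (h1 : Gd q a z) (h2 : Gd q b w) (f : ℝ → ℝ) : meas a ((mrg a b z w).map prA) f = meas a z f ∧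
     meas b ((mrg a b z w).map prB) f = meas b w f ∧
      meas ((a + b) / 2) ((mrg a b z w).map prC) f = (meas a z f + meas b w f) / 2 := by
  refine mrg_ind (P := fun q a b z w M => meas a (M.map prA) f = meas a z f ∧
    meas b (M.map prB) f = meas b w f ∧
    meas ((a + b) / 2) (M.map prC) f = (meas a z f + meas b w f) / 2) ?_ ?_ ?_ q a b z w hq ha hb h1 h2
  · intro q a b h1 h2
    simp [meas]
  · rintro q a b p z w M _ _ _ h1 _ _ ⟨i1, i2, i3⟩
    simp only [List.map_cons, meas, prA, prB, prC] at *
    refine ⟨by rw [i1], by rw [i2]; ring, by rw [i3]; ring⟩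
  · rintro q a b p z w M _ _ _ h1 _ _ ⟨i1, i2, i3⟩
    simp only [List.map_cons, meas, prA, prB, prC] at *
    refine ⟨by rw [i1]; ring, by rw [i2], by rw [i3]; ring⟩

lemma mrg_Psi {τ : ℝ → ℝ} (hτ : Mono01 τ) (q a b : ℝ) (z w : List (ℝ × ℝ)) (hq : 0 ≤ q) (ha : 0 ≤ a)
    (hb : 0 ≤ b) (h1 : Gd q a z) (h2 : Gd q b w) : ∀ t, t ≤ τ q →
    Psi τ (τ 1) t a ((mrg a b z w).map prA) = Psi τ (τ 1) t a z ∧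
    Psi τ (τ 1) t b ((mrg a b z w).map prB) = Psi τ (τ 1) t b w := by
  refine mrg_ind (P := fun q a b z w M => ∀ t, t ≤ τ q →
    Psi τ (τ 1) t a (M.map prA) = Psi τ (τ 1) t a z ∧
    Psi τ (τ 1) t b (M.map prB) = Psi τ (τ 1) t b w) ?_ ?_ ?_ q a b z w hq ha hb h1 h2
  · intro q a b h1 h2 t ht
    exact ⟨rfl, rfl⟩
  · intro q a b p z w M hq ha hb h1 h2 h3 ih t ht
    have hle := hτ q p.1 hq h1.1 h1.2.2.q_le
    obtain ⟨i1, i2⟩ := ih _ le_rfl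
    constructor
    · simp only [List.map_cons, Psi, prA]
      rw [← i1]
    · rw [Psi_ins hτ (hq.trans h1.1) hb h2 (ht.trans hle), ← i2]; rfl
  · intro q a b p z w M hq ha hb h1 h2 h3 ih t ht
    have hle := hτ q p.1 hq h1.1 h1.2.2.q_le
    obtain ⟨i1, i2⟩ := ih _ le_rfl
    constructor
    · rw [Psi_ins hτ (hq.trans h1.1) ha h2 (ht.trans hle), ← i1]; rfl
    · simp only [List.map_cons, Psi, prB]
      rw [← i2]

/-- Steps attached to a merged list. -/
def stps (τ : ℝ → ℝ) (E : ℝ) : ℝ → ℝ → ℝ → List (ℝ × ℝ × ℝ) → List Stp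
  | t, a, b, [] => [⟨E - t, a, b⟩]
  | t, a, b, x :: M => ⟨τ x.1 - t, a, b⟩ :: stps τ E (τ x.1) x.2.1 x.2.2 M

lemma Ps_stps (τ : ℝ → ℝ) (E t a b : ℝ) (M : List (ℝ × ℝ × ℝ)) :
    Ps Stp.a (stps τ E t a b M) = Psi τ E t a (M.map prA) ∧
    Ps Stp.b (stps τ E t a b M) = Psi τ E t b (M.map prB) ∧
    Ps Stp.c (stps τ E t a b M) = Psi τ E t ((a + b) / 2) (M.map prC) := by
  induction M generalizing t a b with
  | nil => exact ⟨rfl, rfl, rfl⟩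
  | cons x M ih =>
    obtain ⟨i1, i2, i3⟩ := ih (τ x.1) x.2.1 x.2.2
    simp only [stps, Ps, List.map_cons, Psi, i1, i2, i3]
    exact ⟨rfl, rfl, rfl⟩

lemma stps_tot (τ : ℝ → ℝ) (E t a b : ℝ) (M : List (ℝ × ℝ × ℝ)) : tot (stps τ E t a b M) = E - t := by
  induction M generalizing t a b with
  | nil => simp [stps, tot]
  | cons x M ih => simp only [stps, tot, ih]; ring

lemma stps_dif (τ : ℝ → ℝ) (E t : ℝ) {q a b : ℝ} {M : List (ℝ × ℝ × ℝ)} (h1 : Gd q a (M.map prA))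
    (h2 : Gd q b (M.map prB)) : dif (stps τ E t a b M) =
      (b - a) * t + meas b (M.map prB) τ - meas a (M.map prA) τ := by
  induction M generalizing q t a b with
  | nil =>
    have e1 : a = 1 := h1.2
    have e2 : b = 1 := h2.2
    simp [stps, dif, meas, e1, e2]
  | cons x M ih =>
    simp only [stps, dif, List.map_cons, meas]
    have := ih (τ x.1) h1.2.2 h2.2.2
    simp only [prA, prB] at this ⊢
    rw [this]; ring

/-- nonneg differences only, with upper bound ignored -/
def okS (L : List Stp) : Prop := ∀ s ∈ L, s.ok

lemma stps_ok {τ : ℝ → ℝ} (hτ : Mono01 τ) {q t a b : ℝ} {M : List (ℝ × ℝ × ℝ)} (hq : 0 ≤ q)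
    (ha : 0 ≤ a) (hb : 0 ≤ b) (ht : t ≤ τ q) (h1 : Gd q a (M.map prA))
    (h2 : Gd q b (M.map prB)) : okS (stps τ (τ 1) t a b M) := by
  induction M generalizing q t a b with
  | nil =>
    intro s hs
    simp only [stps, List.mem_singleton] at hs
    subst hs
    have := hτ q 1 hq h1.1 le_rfl
    exact ⟨by simp only; linarith, ha, h1.m_le, hb, h2.m_le⟩
  | cons x M ih =>
    intro s hs
    simp only [stps, List.mem_cons] at hs
    have h3 : q ≤ x.1 := h1.1
    have h4 := hτ q x.1 hq h3 h1.2.2.q_le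
    rcases hs with rfl | hs
    · exact ⟨by simp only; linarith, ha, h1.m_le, hb, h2.m_le⟩
    · exact ih (hq.trans h3) (ha.trans h1.2.1) (hb.trans h2.2.1) le_rfl h1.2.2 h2.2.2 s hs

lemma split {τ : ℝ → ℝ} (hτ : Mono01 τ) {q t a b x : ℝ} {M : List (ℝ × ℝ × ℝ)} (hq : 0 ≤ q)
    (ha : 0 ≤ a) (hb : 0 ≤ b) (ht : t ≤ τ q) (h1 : Gd q a (M.map prA))
    (h2 : Gd q b (M.map prB)) (hx : t ≤ x) (hx1 : x ≤ τ 1) : ∃ pre suf : List Stp,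
    okS (pre ++ suf) ∧ tot (pre ++ suf) = τ 1 - t ∧
    (∀ f : Stp → ℝ, (∀ v v' a b, f ⟨v, a, b⟩ = f ⟨v', a, b⟩) → (∀ s : Stp, s.ok → 0 ≤ f s) →
      Ps f (pre ++ suf) = Ps f (stps τ (τ 1) t a b M)) ∧
    dif suf = (b - a) * x + meas b (M.map prB) (fun y => max x (τ y))
      - meas a (M.map prA) (fun y => max x (τ y)) := by
  induction M generalizing q t a b with
  | nil =>
    have e1 : a = 1 := h1.2
    have e2 : b = 1 := h2.2
    refine ⟨[⟨x - t, a, b⟩], [⟨τ 1 - x, a, b⟩], ?_, ?_, ?_, ?_⟩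
    · intro s hs
      simp only [List.cons_append, List.nil_append, List.mem_cons, List.not_mem_nil, or_false] at hs
      rcases hs with rfl | rfl
      · exact ⟨by simp only; linarith, ha, e1.le, hb, e2.le⟩
      · exact ⟨by simp only; linarith, ha, e1.le, hb, e2.le⟩
    · simp [tot]
    · intro f hf hp
      ext y
      simp only [List.cons_append, List.nil_append, Ps, stps]
      rw [hf (x - t) (τ 1 - t), hf (τ 1 - x) (τ 1 - t), T_semigroup lc_L1 _ (by linarith) (by linarith)]
      congr 1; ring
    · simp [dif, meas, e1, e2]
  | cons p M ih =>
    have h3 : q ≤ p.1 := h1.1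
    have h3' : p.1 ≤ 1 := h1.2.2.q_le
    have h4 := hτ q p.1 hq h3 h3'
    have hok := stps_ok hτ hq ha hb ht h1 h2
    by_cases hxs : x ≤ τ p.1
    · refine ⟨[⟨x - t, a, b⟩], ⟨τ p.1 - x, a, b⟩ :: stps τ (τ 1) (τ p.1) p.2.1 p.2.2 M, ?_, ?_, ?_, ?_⟩
      · intro s hs
        simp only [List.cons_append, List.nil_append, List.mem_cons] at hs
        rcases hs with rfl | rfl | hs
        · exact ⟨by simp only; linarith, ha, h1.m_le, hb, h2.m_le⟩
        · exact ⟨by simp only; linarith, ha, h1.m_le, hb, h2.m_le⟩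
        · exact hok s (by simp only [stps]; exact List.mem_cons_of_mem _ hs)
      · simp only [List.cons_append, List.nil_append, tot, stps_tot]; ring
      · intro f hf hp
        ext y
        simp only [List.cons_append, List.nil_append, Ps, stps]
        rw [hf (x - t) (τ p.1 - t), hf (τ p.1 - x) (τ p.1 - t), T_semigroup (Ps_L1 fun s hs =>
          hp s (hok s (by simp only [stps]; exact List.mem_cons_of_mem _ hs))) _ (by linarith) (by linarith)]
        congr 1; ring
      · simp only [dif]
        have hsd := stps_dif τ (τ 1) (τ p.1) h1.2.2 h2.2.2
        simp only [List.map_cons, meas]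
        have e : ∀ y, p.1 ≤ y → y ≤ 1 → τ y = max x (τ y) := fun y hy hy1 =>
          (max_eq_right (hxs.trans (hτ _ _ (hq.trans h3) hy hy1))).symm
        have e1 := meas_congr h1.2.2 e
        have e2 := meas_congr h2.2.2 e
        simp only [prA, prB] at e1 e2 hsd ⊢
        rw [hsd, ← e1, ← e2, max_eq_right hxs]
        ring
    · push Not at hxs
      obtain ⟨pre, suf, i1, i2, i3, i4⟩ := ih (hq.trans h3) (ha.trans h1.2.1) (hb.trans h2.2.1) le_rfl
        h1.2.2 h2.2.2 hxs.le
      refine ⟨⟨τ p.1 - t, a, b⟩ :: pre, suf, ?_, ?_, ?_, ?_⟩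
      · intro s hs
        simp only [List.cons_append, List.mem_cons] at hs
        rcases hs with rfl | hs
        · exact ⟨by simp only; linarith, ha, h1.m_le, hb, h2.m_le⟩
        · exact i1 s hs
      · simp only [List.cons_append, tot]
        rw [i2]; ring
      · intro f hf hp
        simp only [List.cons_append, Ps, stps]
        rw [i3 f hf hp]
        rfl
      · rw [i4]
        simp only [List.map_cons, meas, prA, prB]
        rw [max_eq_left hxs.le]; ring

lemma tot_nonneg {L : List Stp} (h : okS L) : 0 ≤ tot L := by
  induction L with
  | nil => exact le_rfl
  | cons s L ih =>
    exact add_nonneg (ih fun t ht => h t (List.mem_cons_of_mem _ ht)) (h s List.mem_cons_self).v0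

lemma okS.okL {L : List Stp} (h : okS L) {Tm : ℝ} (hT : tot L ≤ Tm) : okL Tm L := by
  induction L with
  | nil => intro s hs; simp at hs
  | cons s L ih =>
    have h' : okS L := fun t ht => h t (List.mem_cons_of_mem _ ht)
    have hs := h s List.mem_cons_self
    have h0 := hs.v0
    have h1 := tot_nonneg h'
    simp only [tot] at hT
    intro t ht
    rcases List.mem_cons.1 ht with rfl | ht
    · exact ⟨hs, by linarith⟩
    · exact ih h' (by linarith) t ht

/-- Strict convexity for order parameters given as lists. -/
theorem strict_conv (h Tm d : ℝ) (hT : 1 ≤ Tm) (hd : 0 < d) : ∃ ε > 0, ∀ τ : ℝ → ℝ, Mono01 τ → 0 ≤ τ 0 →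
    τ 1 ≤ Tm → ∀ z w, Gd 0 0 z → Gd 0 0 w → ∀ x, 0 ≤ x → x ≤ τ 1 →
    d ≤ |meas 0 z (fun y => max x (τ y)) - meas 0 w (fun y => max x (τ y))| →
    ε ≤ (Psi τ (τ 1) 0 0 z h + Psi τ (τ 1) 0 0 w h) / 2
      - Psi τ (τ 1) 0 0 ((mrg 0 0 z w).map prC) h := by
  obtain ⟨ε, hε, H⟩ := chain_final h Tm d hT hd
  refine ⟨ε, hε, fun τ hτ h0 h1 z w hz hw x hx hx1 hdd => ?_⟩
  obtain ⟨g1, g2, g3⟩ := mrg_Gd 0 0 0 z w le_rfl le_rfl le_rfl hz hw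
  obtain ⟨pre, suf, s1, s2, s3, s4⟩ := split hτ le_rfl le_rfl le_rfl h0 g1 g2 hx hx1
  obtain ⟨p1, p2⟩ := mrg_Psi hτ 0 0 0 z w le_rfl le_rfl le_rfl hz hw 0 h0
  obtain ⟨q1, q2, q3⟩ := Ps_stps τ (τ 1) 0 0 0 (mrg 0 0 z w)
  have m1 := (mrg_meas 0 0 0 z w le_rfl le_rfl le_rfl hz hw (fun y => max x (τ y))).1
  have m2 := (mrg_meas 0 0 0 z w le_rfl le_rfl le_rfl hz hw (fun y => max x (τ y))).2.1
  have htot : tot (pre ++ suf) ≤ Tm := by rw [s2]; linarith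
  have := H pre suf (s1.okL htot) htot (by
    rw [s4, m1, m2, sub_self, zero_mul, zero_add, abs_sub_comm]; exact hdd)
  rw [s3 _ (fun _ _ _ _ => rfl) (fun s hs => hs.a0), s3 _ (fun _ _ _ _ => rfl) (fun s hs => hs.b0),
    s3 _ (fun _ _ _ _ => rfl) (fun s hs => hs.c0), q1, q2, q3, p1, p2] at this
  simp only [Wf] at this
  norm_num at this
  linarith

end PF

namespace PF

variable {S : Finset ℕ} {β : ℕ → ℝ}

lemma xi'_cont (S : Finset ℕ) (β : ℕ → ℝ) : Continuous (xiFn' S β) := by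
  unfold xiFn'; fun_prop

lemma xi_cont (S : Finset ℕ) (β : ℕ → ℝ) : Continuous (xiFn S β) := by
  unfold xiFn; fun_prop

lemma theta_cont (S : Finset ℕ) (β : ℕ → ℝ) : Continuous (thetaFn S β) := by
  have := xi'_cont S β
  have := xi_cont S β
  unfold thetaFn; fun_prop

lemma xi'_mono (S : Finset ℕ) (β : ℕ → ℝ) : Mono01 (xiFn' S β) := by
  intro x y hx hxy hy
  unfold xiFn'
  gcongr

lemma xi'_nonneg (S : Finset ℕ) (β : ℕ → ℝ) {x : ℝ} (hx : 0 ≤ x) : 0 ≤ xiFn' S β x :=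
  Finset.sum_nonneg fun p _ => by positivity

/-- The Parisi functional for lists. -/
def FF (S : Finset ℕ) (h : ℝ) (β : ℕ → ℝ) (z : List (ℝ × ℝ)) : ℝ :=
  Psi (xiFn' S β) (xiFn' S β 1) 0 0 z h - 1 / 2 * (thetaFn S β 1 - meas 0 z (thetaFn S β))

/-- segment of a sequence -/
def tl (x : ℕ → ℝ × ℝ) : ℕ → ℕ → List (ℝ × ℝ)
  | _, 0 => []
  | l, j + 1 => x (l + 1) :: tl x (l + 1) j

lemma tl_length (x : ℕ → ℝ × ℝ) (l j : ℕ) : (tl x l j).length = j := by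
  induction j generalizing l with
  | zero => rfl
  | succ j ih => simp [tl, ih]

lemma tl_congr {x y : ℕ → ℝ × ℝ} (l j : ℕ) (h : ∀ i, l < i → i ≤ l + j → x i = y i) :
    tl x l j = tl y l j := by
  induction j generalizing l with
  | zero => rfl
  | succ j ih =>
    simp only [tl]
    rw [h (l + 1) (by omega) (by omega), ih (l + 1) fun i h1 h2 => h i (by omega) (by omega)]

/-- sequence attached to an order parameter -/
def sq {k : ℕ} (op : OrderParam k) (i : ℕ) : ℝ × ℝ := (op.q i, op.m i)

lemma op_m_nonneg {k : ℕ} (op : OrderParam k) {l : ℕ} (hl : l ≤ k) : 0 ≤ op.m l := by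
  rcases Nat.eq_zero_or_pos l with rfl | h
  · exact op.m_zero.ge
  · exact (op.m_pos l h hl).le

lemma op_Gd {k : ℕ} (op : OrderParam k) (l j : ℕ) (h : l + j = k) :
    Gd (op.q l) (op.m l) (tl (sq op) l j) := by
  induction j generalizing l with
  | zero =>
    have : l = k := by omega
    subst this
    exact ⟨op.q_last ▸ op.q_mono l le_rfl, op.m_last⟩
  | succ j ih =>
    exact ⟨op.q_mono l (by omega), op.m_mono l (by omega), ih (l + 1) (by omega)⟩

lemma op_Gd0 {k : ℕ} (op : OrderParam k) : Gd 0 0 (tl (sq op) 0 k) := by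
  have := op_Gd op 0 k (by omega)
  rwa [op.q_zero, op.m_zero] at this

lemma T_eq {m v : ℝ} (hm : m ≠ 0) {A : ℝ → ℝ} (hA : L1 A) (x : ℝ) :
    (1 / m) * log (∫ y, exp (m * A (x + y)) ∂(gauss v)) = T m v A x := by
  rw [T_ne hm, Zt, integral_gauss]
  exact ((hA.measurable.comp (measurable_const.add measurable_id)).const_mul m).exp

lemma parisiB_eq {k : ℕ} (op : OrderParam k) (j : ℕ) (hj : j < k) :
    parisiB op.m (opVar S β op) k (j + 1) =
      Psi (xiFn' S β) (xiFn' S β 1) (xiFn' S β (op.q (k - j))) (op.m (k - j)) (tl (sq op) (k - j) j) := by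
  induction j with
  | zero =>
    ext x
    have hk : 0 < k := hj
    simp only [parisiB, tl, Psi, Nat.sub_zero]
    rw [← T_eq (op.m_pos k hk le_rfl).ne' lc_L1]
    simp only [opVar, hk.ne', if_false, op.q_last]
    rfl
  | succ j ih =>
    ext x
    have ih' := ih (by omega)
    obtain ⟨l, hl⟩ : ∃ l, k = l + (j + 1) := ⟨k - (j + 1), by omega⟩
    have hl0 : 0 < l := by omega
    have e1 : k - (j + 1) = l := by omega
    have e2 : k - j = l + 1 := by omega
    rw [parisiB, e1]
    rw [e2] at ih'
    rw [ih', T_eq (op.m_pos l hl0 (by omega)).ne' ((op_Gd op (l + 1) j (by omega)).L1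
      (op_m_nonneg op (by omega)) _ _ _)]
    simp only [tl, Psi, sq, opVar, hl0.ne', if_false]

lemma sum_Icc_range (f : ℕ → ℝ) (k : ℕ) : ∑ l ∈ Finset.Icc 1 k, f l = ∑ i ∈ Finset.range k, f (i + 1) := by
  induction k with
  | zero => simp
  | succ k ih => rw [Finset.sum_Icc_succ_top (by omega), ih, Finset.sum_range_succ]

lemma meas_tl (x : ℕ → ℝ × ℝ) (f : ℝ → ℝ) (l j : ℕ) : meas (x l).2 (tl x l j) f =
    ∑ i ∈ Finset.range j, ((x (l + i + 1)).2 - (x (l + i)).2) * f (x (l + i + 1)).1 := by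
  induction j generalizing l with
  | zero => simp [tl, meas]
  | succ j ih =>
    rw [Finset.sum_range_succ']
    simp only [tl, meas]
    rw [ih (l + 1), add_comm]
    congr 1
    refine Finset.sum_congr rfl fun i _ => ?_
    rw [show l + 1 + i = l + (i + 1) by ring]

lemma meas_op {k : ℕ} (op : OrderParam k) (f : ℝ → ℝ) :
    ∑ l ∈ Finset.Icc 1 k, (op.m l - op.m (l - 1)) * f (op.q l) = meas 0 (tl (sq op) 0 k) f := by
  have := meas_tl (sq op) f 0 k
  have e : (sq op 0).2 = 0 := op.m_zero
  rw [e] at this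
  rw [this, sum_Icc_range]
  refine Finset.sum_congr rfl fun i _ => ?_
  simp [sq]

lemma parisiP_eq (h : ℝ) {k : ℕ} (hk : 1 ≤ k) (op : OrderParam k) :
    parisiP S h β op = FF S h β (tl (sq op) 0 k) := by
  unfold parisiP FF
  congr 1
  · obtain ⟨j, rfl⟩ : ∃ j, k = j + 1 := ⟨k - 1, by omega⟩
    have e := parisiB_eq (S := S) (β := β) op j (by omega)
    have e1 : j + 1 - j = 1 := by omega
    rw [e1] at e
    have hL := (op_Gd op 1 j (by omega)).L1 (op_m_nonneg op (by omega)) (xiFn' S β) (xiFn' S β 1)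
      (xiFn' S β (op.q 1))
    rw [e, integral_gauss (f := fun y => Psi (xiFn' S β) (xiFn' S β 1) (xiFn' S β (op.q 1)) (op.m 1)
      (tl (sq op) 1 j) (h + y)) (hL.measurable.comp (measurable_const.add measurable_id))]
    simp only [tl, Psi, T_zero, sq, opVar, if_true, sub_zero, zero_add]
  · congr 1
    rw [← meas_op op]
    have key : ∀ j, ∑ l ∈ Finset.Icc 1 j, op.m l * (thetaFn S β (op.q (l + 1)) - thetaFn S β (op.q l)) +
        ∑ l ∈ Finset.Icc 1 j, (op.m l - op.m (l - 1)) * thetaFn S β (op.q l) =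
        op.m j * thetaFn S β (op.q (j + 1)) - op.m 0 * thetaFn S β (op.q 1) := by
      intro j
      induction j with
      | zero => simp
      | succ j ih =>
        rw [Finset.sum_Icc_succ_top (by omega), Finset.sum_Icc_succ_top (by omega)]
        have : j + 1 - 1 = j := by omega
        rw [this]
        linarith
    have := key k
    rw [op.m_zero, op.m_last, op.q_last] at this
    linarith

/-- Removal of vanishing weights. -/
lemma zero_removal {q0 : ℝ} (hq0 : 0 ≤ q0) {z : List (ℝ × ℝ)} (h : Gd q0 0 z) : ∃ z' : List (ℝ × ℝ),
    z'.length = z.length ∧ Gd q0 0 z' ∧ (∀ p ∈ z', 0 < p.2) ∧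
    (∀ τ, Mono01 τ → ∀ t, t ≤ τ q0 → Psi τ (τ 1) t 0 z' = Psi τ (τ 1) t 0 z) ∧
    ∀ f, meas 0 z' f = meas 0 z f := by
  induction z generalizing q0 with
  | nil => exact absurd h.2 (by norm_num)
  | cons p z ih =>
    rcases h.2.1.eq_or_lt with hp | hp
    · have hg := h.2.2
      rw [← hp] at hg
      obtain ⟨z', i1, i2, i3, i4, i5⟩ := ih (hq0.trans h.1) hg
      cases z' with
      | nil => exact absurd i2.2 (by norm_num)
      | cons r w =>
        have hr := i3 r List.mem_cons_self
        refine ⟨r :: r :: w, by simpa using i1, ⟨h.1.trans i2.1, i2.2.1, le_rfl, le_rfl, i2.2.2⟩,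
          fun s hs => ?_, fun τ hτ t ht => ?_, fun f => ?_⟩
        · rcases List.mem_cons.1 hs with rfl | hs
          · exact hr
          · exact i3 s hs
        · have h4 := i4 τ hτ (τ p.1) le_rfl
          have h5 := hτ q0 p.1 hq0 h.1 h.2.2.q_le
          have h6 := hτ p.1 r.1 (hq0.trans h.1) i2.1 i2.2.2.q_le
          simp only [Psi] at h4 ⊢
          rw [sub_self, T_zerovar', ← hp, ← h4]
          ext x
          rw [T_semigroup (i2.2.2.L1 hr.le _ _ _) 0 (by linarith) (by linarith)]
          congr 1; ring
        · have := i5 f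
          simp only [meas] at this ⊢
          rw [← hp, ← this]; ring
    · exact ⟨p :: z, rfl, h, fun r hr => by
        rcases List.mem_cons.1 hr with rfl | hr
        · exact hp
        · exact hp.trans_le (h.2.2.mem hr).2.2.1, fun _ _ _ _ => rfl, fun _ => rfl⟩

/-- The `n`-th element with junk. -/
def nthz (z : List (ℝ × ℝ)) (i : ℕ) : ℝ × ℝ :=
  if i = 0 then (0, 0) else z.getD (i - 1) (1, 1)

lemma tl_getD (z : List (ℝ × ℝ)) (x : ℕ → ℝ × ℝ) (l : ℕ)
    (hx : ∀ i, x (l + 1 + i) = z.getD i (1, 1)) : tl x l z.length = z := by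
  induction z generalizing l with
  | nil => rfl
  | cons p z ih =>
    simp only [List.length_cons, tl]
    congr 1
    · have := hx 0; simpa using this
    · exact ih (l + 1) fun i => by
        have := hx (i + 1)
        simp only [List.getD_cons_succ] at this
        rw [← this]; congr 1; ring

lemma nthz_step {q m : ℝ} {z : List (ℝ × ℝ)} (h : Gd q m z) (i : ℕ) :
    (z.getD i (1, 1)).1 ≤ (z.getD (i + 1) (1, 1)).1 ∧ (z.getD i (1, 1)).2 ≤ (z.getD (i + 1) (1, 1)).2 := by
  induction z generalizing q m i with
  | nil => simp
  | cons p z ih =>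
    cases i with
    | zero =>
      cases z with
      | nil => simp [h.2.2.1, h.2.2.2]
      | cons r w => simpa using ⟨h.2.2.1, h.2.2.2.1⟩
    | succ i => simpa using ih h.2.2 i

lemma getD_pos {z : List (ℝ × ℝ)} (h : ∀ p ∈ z, 0 < p.2) (i : ℕ) : 0 < (z.getD i (1, 1)).2 := by
  rw [List.getD_eq_getElem?_getD]
  cases hz : z[i]? with
  | none => simp
  | some a => simpa using h a (List.mem_of_getElem? hz)

lemma getD_last {q m : ℝ} {z : List (ℝ × ℝ)} (h : Gd q m z) (hz : z ≠ []) :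
    (z.getD (z.length - 1) (1, 1)).2 = 1 := by
  induction z generalizing q m with
  | nil => exact absurd rfl hz
  | cons p z ih =>
    cases z with
    | nil => simpa using h.2.2.2
    | cons r w => simpa using ih h.2.2 (by simp)

/-- From lists to order parameters. -/
lemma exists_op {k : ℕ} {z : List (ℝ × ℝ)} (hz : Gd 0 0 z) (hl : z.length = k + 1) :
    ∃ op : OrderParam (k + 1), (∀ S h β, parisiP S h β op = FF S h β z) ∧
      ∀ f, meas 0 (tl (sq op) 0 (k + 1)) f = meas 0 z f := by
  obtain ⟨z', i1, i2, i3, i4, i5⟩ := zero_removal le_rfl hz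
  have hl' : z'.length = k + 1 := i1.trans hl
  have hne : z' ≠ [] := by rintro rfl; simp at hl'
  have hsucc : ∀ i, nthz z' (i + 1) = z'.getD i (1, 1) := fun i => by simp [nthz]
  let op : OrderParam (k + 1) :=
    { m := fun i => (nthz z' i).2
      q := fun i => (nthz z' i).1
      m_zero := rfl
      m_last := by
        rw [hsucc]
        have := getD_last i2 hne
        rwa [hl', Nat.add_sub_cancel] at this
      m_mono := fun l hl => by
        cases l with
        | zero => rw [hsucc]; exact (getD_pos i3 _).le
        | succ l => rw [hsucc, hsucc]; exact (nthz_step i2 l).2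
      m_pos := fun l h1 h2 => by
        obtain ⟨i, rfl⟩ : ∃ i, l = i + 1 := ⟨l - 1, by omega⟩
        rw [hsucc]; exact getD_pos i3 _
      q_zero := rfl
      q_last := by
        rw [hsucc, List.getD_eq_default _ _ (by omega)]
      q_mono := fun l hl => by
        cases l with
        | zero =>
          rw [hsucc]
          cases z' with
          | nil => exact absurd rfl hne
          | cons p w => exact i2.1
        | succ l => rw [hsucc, hsucc]; exact (nthz_step i2 l).1 }
  have e : tl (sq op) 0 (k + 1) = z' := by
    have e0 := tl_getD z' (sq op) 0 fun i => by
      have e1 : 0 + 1 + i = i + 1 := by omega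
      rw [e1]
      exact hsucc i
    rwa [hl'] at e0
  refine ⟨op, fun S h β => ?_, fun f => by rw [e, i5]⟩
  rw [parisiP_eq h (by omega), e]
  unfold FF
  rw [i4 _ (xi'_mono S β) 0 (xi'_nonneg S β le_rfl), i5]

lemma Psi_nonneg (τ : ℝ → ℝ) (E t : ℝ) {m : ℝ} (hm : 0 ≤ m) {z : List (ℝ × ℝ)} (h : ∀ p ∈ z, 0 ≤ p.2)
    (x : ℝ) : 0 ≤ Psi τ E t m z x := by
  have key : ∀ {A : ℝ → ℝ} (_ : L1 A) (_ : ∀ y, 0 ≤ A y) {m : ℝ} (_ : 0 ≤ m) (v x : ℝ), 0 ≤ T m v A x :=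
    by
      intro A hA hp m hm v x
      refine le_trans ?_ (T_zero_le hA hm v x)
      rw [T_zero]
      exact integral_nonneg fun g => hp _
  induction z generalizing t m x with
  | nil => exact key lc_L1 lc_nonneg hm _ _
  | cons p z ih =>
    have h1 := h p List.mem_cons_self
    have h2 : ∀ r ∈ z, 0 ≤ r.2 := fun r hr => h r (List.mem_cons_of_mem _ hr)
    exact key (Psi_L1 τ E _ h1 h2) (fun y => ih _ h1 h2 y) hm _ _

lemma theta_nonneg (hS : ∀ p ∈ S, 0 < p) (β : ℕ → ℝ) {x : ℝ} (hx : 0 ≤ x) : 0 ≤ thetaFn S β x := by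
  unfold thetaFn xiFn' xiFn
  rw [Finset.mul_sum, ← Finset.sum_sub_distrib]
  refine Finset.sum_nonneg fun p hp => ?_
  obtain ⟨n, rfl⟩ : ∃ n, p = n + 1 := ⟨p - 1, by have := hS p hp; omega⟩
  have : x * (β (n + 1) ^ 2 * ((n + 1 : ℕ) : ℝ) * x ^ (n + 1 - 1)) - β (n + 1) ^ 2 * x ^ (n + 1) =
    β (n + 1) ^ 2 * n * x ^ (n + 1) := by
    push_cast; simp only [pow_succ]; ring
  rw [this]; positivity

lemma FF_lower (hS : ∀ p ∈ S, 0 < p) (h : ℝ) (β : ℕ → ℝ) {z : List (ℝ × ℝ)} (hz : Gd 0 0 z) :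
    -(1 / 2 * thetaFn S β 1) ≤ FF S h β z := by
  unfold FF
  have h1 := Psi_nonneg (xiFn' S β) (xiFn' S β 1) 0 le_rfl (fun p hp => (hz.mem hp).2.2.1) h
  have h2 : 0 ≤ meas 0 z (thetaFn S β) := by
    have := meas_mono (f := fun _ => 0) hz fun x hx _ => theta_nonneg hS β hx
    rwa [meas_const hz, mul_zero] at this
  linarith

lemma parisiF_le (hS : ∀ p ∈ S, 0 < p) (h : ℝ) (β : ℕ → ℝ) {z : List (ℝ × ℝ)} (hz : Gd 0 0 z) :
    parisiF S h β ≤ FF S h β z := by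
  refine csInf_le ⟨-(1 / 2 * thetaFn S β 1), ?_⟩ ?_
  · rintro x ⟨k, hk, op, rfl⟩
    rw [parisiP_eq h hk]
    exact FF_lower hS h β (op_Gd0 op)
  · have : z.length ≠ 0 := by
      intro h0
      rw [List.length_eq_zero_iff] at h0
      subst h0
      exact absurd hz.2 (by norm_num)
    obtain ⟨k, hk⟩ := Nat.exists_eq_succ_of_ne_zero this
    obtain ⟨op, ho, _⟩ := exists_op hz hk
    exact ⟨k + 1, by omega, op, (ho S h β).symm⟩

lemma exists_FF_lt (S : Finset ℕ) (h : ℝ) (β : ℕ → ℝ) {c : ℝ} (hc : parisiF S h β < c) :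
    ∃ z, Gd 0 0 z ∧ FF S h β z < c := by
  have hne : {x : ℝ | ∃ k : ℕ, 1 ≤ k ∧ ∃ op : OrderParam k, x = parisiP S h β op}.Nonempty := by
    obtain ⟨op, _⟩ := exists_op (k := 0) (z := [(0, 1)])
      (show Gd 0 0 [(0, 1)] from ⟨le_rfl, by norm_num, by norm_num, rfl⟩) rfl
    exact ⟨_, 1, le_rfl, op, rfl⟩
  obtain ⟨x, ⟨k, hk, op, rfl⟩, hx⟩ := exists_lt_of_csInf_lt hne hc
  exact ⟨_, op_Gd0 op, by rwa [← parisiP_eq h hk]⟩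

/-- Near-minimizers are close. -/
theorem near_min_close (hS : ∀ p ∈ S, 0 < p) (h : ℝ) (β : ℕ → ℝ) {d : ℝ} (hd : 0 < d) :
    ∃ ε > 0, ∀ z w, Gd 0 0 z → Gd 0 0 w → FF S h β z ≤ parisiF S h β + ε →
      FF S h β w ≤ parisiF S h β + ε → ∀ x, 0 ≤ x → x ≤ xiFn' S β 1 →
      |meas 0 z (fun y => max x (xiFn' S β y)) - meas 0 w (fun y => max x (xiFn' S β y))| ≤ d := by
  obtain ⟨ε, hε, H⟩ := strict_conv h (max 1 (xiFn' S β 1)) d (le_max_left _ _) hd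
  refine ⟨ε / 2, by positivity, fun z w hz hw h1 h2 x hx hx1 => ?_⟩
  by_contra hcon
  push Not at hcon
  have := H (xiFn' S β) (xi'_mono S β) (xi'_nonneg S β le_rfl) (le_max_right _ _) z w hz hw x hx hx1 hcon.le
  have hg := (mrg_Gd 0 0 0 z w le_rfl le_rfl le_rfl hz hw).2.2
  have hm := (mrg_meas 0 0 0 z w le_rfl le_rfl le_rfl hz hw (thetaFn S β)).2.2
  rw [show ((0:ℝ) + 0) / 2 = 0 by norm_num] at hg hm
  have h3 := parisiF_le hS h β hg
  unfold FF at h1 h2 h3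
  rw [hm] at h3
  linarith

end PF

namespace PF

/-- Compact space of sequences. -/
abbrev XX := ℕ → (Set.Icc (0:ℝ) 1) × (Set.Icc (0:ℝ) 1)

/-- Coercion to real sequences. -/
def sx (x : XX) (i : ℕ) : ℝ × ℝ := ((x i).1, (x i).2)

lemma sx1_cont (i : ℕ) : Continuous fun x : XX => (sx x i).1 := by unfold sx; fun_prop
lemma sx2_cont (i : ℕ) : Continuous fun x : XX => (sx x i).2 := by unfold sx; fun_prop

lemma tl_sx_nonneg (x : XX) (l j : ℕ) : ∀ p ∈ tl (sx x) l j, 0 ≤ p.2 := by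
  induction j generalizing l with
  | zero => simp [tl]
  | succ j ih =>
    intro p hp
    simp only [tl] at hp
    rcases List.mem_cons.1 hp with rfl | hp
    · exact (x (l + 1)).2.2.1
    · exact ih _ p hp

lemma Psi_cont {τ : ℝ → ℝ} (hτ : Continuous τ) (E : ℝ) (j : ℕ) : ∀ (l : ℕ) (t m : XX → ℝ), Continuous t →
    Continuous m → (∀ x, 0 ≤ m x) → (∀ x, m x ≤ 1) → ∀ y,
    Continuous fun x => Psi τ E (t x) (m x) (tl (sx x) l j) y := by
  induction j with
  | zero =>
    intro l t m ht hm h0 h1 y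
    refine continuous_iff_continuousAt.2 fun x => ?_
    exact T_tendsto h0 h1 (fun _ => lc_L1) lc_L1 hm.continuousAt
      (continuous_const.sub ht).continuousAt tendsto_const_nhds fun y => tendsto_const_nhds
  | succ j ih =>
    intro l t m ht hm h0 h1 y
    refine continuous_iff_continuousAt.2 fun x => ?_
    have c1 : Continuous fun x : XX => τ (sx x (l + 1)).1 := hτ.comp (sx1_cont _)
    exact T_tendsto (A := fun x => Psi τ E (τ (sx x (l + 1)).1) (sx x (l + 1)).2 (tl (sx x) (l + 1) j))
      h0 h1 (fun x => Psi_L1 _ _ _ (x (l + 1)).2.2.1 (tl_sx_nonneg x _ _))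
      (Psi_L1 _ _ _ (x (l + 1)).2.2.1 (tl_sx_nonneg x _ _)) hm.continuousAt
      (c1.sub ht).continuousAt tendsto_const_nhds fun y =>
        (ih (l + 1) _ _ c1 (sx2_cont _) (fun x => (x (l + 1)).2.2.1) (fun x => (x (l + 1)).2.2.2) y).continuousAt

lemma meas_cont {f : ℝ → ℝ} (hf : Continuous f) (j : ℕ) : ∀ (l : ℕ) (m : XX → ℝ), Continuous m →
    Continuous fun x => meas (m x) (tl (sx x) l j) f := by
  induction j with
  | zero => intro l m _; exact continuous_const
  | succ j ih =>
    intro l m hm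
    exact (((sx2_cont _).sub hm).mul (hf.comp (sx1_cont _))).add (ih (l + 1) _ (sx2_cont _))

lemma Gd_closed (j : ℕ) : ∀ (l : ℕ) (q m : XX → ℝ), Continuous q → Continuous m →
    IsClosed {x | Gd (q x) (m x) (tl (sx x) l j)} := by
  induction j with
  | zero =>
    intro l q m hq hm
    exact (isClosed_le hq continuous_const).inter (isClosed_eq hm continuous_const)
  | succ j ih =>
    intro l q m hq hm
    exact (isClosed_le hq (sx1_cont (l + 1))).inter ((isClosed_le hm (sx2_cont (l + 1))).inter
      (ih (l + 1) _ _ (sx1_cont _) (sx2_cont _)))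

lemma FF_cont (S : Finset ℕ) (h : ℝ) (β : ℕ → ℝ) (k : ℕ) :
    Continuous fun x : XX => FF S h β (tl (sx x) 0 k) := by
  unfold FF
  exact (Psi_cont (xi'_cont S β) _ k 0 (fun _ => 0) (fun _ => 0) continuous_const continuous_const
    (fun _ => le_rfl) (fun _ => zero_le_one) h).sub (continuous_const.mul (continuous_const.sub
    (meas_cont (theta_cont S β) k 0 (fun _ => 0) continuous_const)))

lemma exists_seq {w : List (ℝ × ℝ)} (hw : Gd 0 0 w) : ∃ x : XX, tl (sx x) 0 w.length = w := by
  have hb : ∀ i, (w.getD i (1, 1)).1 ∈ Set.Icc (0:ℝ) 1 ∧ (w.getD i (1, 1)).2 ∈ Set.Icc (0:ℝ) 1 := by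
    intro i
    rw [List.getD_eq_getElem?_getD]
    cases hz : w[i]? with
    | none => simp
    | some a =>
      have := hw.mem (List.mem_of_getElem? hz)
      exact ⟨⟨this.1, this.2.1⟩, this.2.2⟩
  refine ⟨fun i => (⟨_, (hb (i - 1)).1⟩, ⟨_, (hb (i - 1)).2⟩), tl_getD w _ 0 fun i => ?_⟩
  simp only [sx]
  rw [show 0 + 1 + i - 1 = i by omega]

lemma pad {S : Finset ℕ} (h : ℝ) (β : ℕ → ℝ) (n : ℕ) : ∀ {w : List (ℝ × ℝ)}, Gd 0 0 w →
    ∃ w', Gd 0 0 w' ∧ w'.length = w.length + n ∧ FF S h β w' = FF S h β w := by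
  induction n with
  | zero => exact fun {w} hw => ⟨w, hw, rfl, rfl⟩
  | succ n ih =>
    intro w hw
    obtain ⟨u, h1, h2, h3⟩ := ih hw
    cases u with
    | nil => exact absurd h1.2 (by norm_num)
    | cons p u =>
      refine ⟨p :: p :: u, ⟨h1.1, h1.2.1, le_rfl, le_rfl, h1.2.2⟩, by simp at h2 ⊢; omega, ?_⟩
      rw [← h3]
      unfold FF
      simp only [Psi, meas, sub_self, T_zerovar', zero_mul, zero_add]

lemma exists_min (S : Finset ℕ) (h : ℝ) (β : ℕ → ℝ) (k : ℕ) : ∃ z, Gd 0 0 z ∧ z.length = k + 1 ∧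
    ∀ w, Gd 0 0 w → w.length = k + 1 → FF S h β z ≤ FF S h β w := by
  have hne : {x : XX | Gd 0 0 (tl (sx x) 0 (k + 1))}.Nonempty := by
    obtain ⟨w, h1, h2, _⟩ := pad (S := S) h β k (w := [(0, 1)])
      (show Gd 0 0 [(0, 1)] from ⟨le_rfl, by norm_num, by norm_num, rfl⟩)
    obtain ⟨x, hx⟩ := exists_seq h1
    refine ⟨x, ?_⟩
    rw [h2] at hx
    simp only [List.length_singleton] at hx
    rw [add_comm] at hx
    rw [Set.mem_setOf_eq, hx]; exact h1
  obtain ⟨x, hx, hm⟩ := ((Gd_closed (k + 1) 0 (fun _ => 0) (fun _ => 0) continuous_const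
    continuous_const).isCompact).exists_isMinOn hne (FF_cont S h β (k + 1)).continuousOn
  refine ⟨_, hx, tl_length _ _ _, fun w hw hl => ?_⟩
  obtain ⟨y, hy⟩ := exists_seq hw
  rw [hl] at hy
  have := hm (show y ∈ {x : XX | Gd 0 0 (tl (sx x) 0 (k + 1))} by rw [Set.mem_setOf_eq, hy]; exact hw)
  simpa [hy] using this

/-- The sequence of minimizers. -/
theorem exists_minimizers {S : Finset ℕ} (hS : ∀ p ∈ S, 0 < p) (h : ℝ) (β : ℕ → ℝ) :
    ∃ op : (k : ℕ) → OrderParam (k + 1),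
      (∀ k, ∀ op' : OrderParam (k + 1), parisiP S h β (op k) ≤ parisiP S h β op') ∧
      Tendsto (fun k => parisiP S h β (op k)) atTop (𝓝 (parisiF S h β)) := by
  choose z hz hl hmin using exists_min S h β
  choose op ho _ using fun k => exists_op (hz k) (hl k)
  refine ⟨op, fun k op' => ?_, ?_⟩
  · rw [ho, parisiP_eq h (by omega) op']
    exact hmin k _ (op_Gd0 op') (tl_length _ _ _)
  · rw [Metric.tendsto_atTop]
    intro ε hε
    obtain ⟨w, hw, hlt⟩ := exists_FF_lt S h β (c := parisiF S h β + ε) (by linarith)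
    refine ⟨w.length, fun k hk => ?_⟩
    obtain ⟨w', h1, h2, h3⟩ := pad (S := S) h β (k + 1 - w.length) hw
    have h4 := hmin k w' h1 (by omega)
    have h5 := parisiF_le hS h β (hz k)
    rw [ho, Real.dist_eq, abs_lt]
    constructor <;> linarith

end PF

namespace PF

/-- The unit interval. -/
abbrev II := Set.Icc (0:ℝ) 1

/-- projection onto the unit interval -/
def pj (x : ℝ) : II := Set.projIcc 0 1 zero_le_one x

lemma pj_coe {x : ℝ} (h0 : 0 ≤ x) (h1 : x ≤ 1) : (pj x : ℝ) = x := by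
  unfold pj; rw [Set.projIcc_of_mem _ ⟨h0, h1⟩]

/-- The discrete measure. -/
def mz : ℝ → List (ℝ × ℝ) → Measure II
  | _, [] => 0
  | m, p :: z => ENNReal.ofReal (p.2 - m) • Measure.dirac (pj p.1) + mz p.2 z

lemma mz_univ {q m : ℝ} {z : List (ℝ × ℝ)} (h : Gd q m z) : mz m z Set.univ = ENNReal.ofReal (1 - m) := by
  induction z generalizing q m with
  | nil => simp [mz, h.2]
  | cons p z ih =>
    simp only [mz, Measure.add_apply, Measure.smul_apply, ih h.2.2, measure_univ, smul_eq_mul, mul_one]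
    rw [← ENNReal.ofReal_add (by linarith [h.2.1]) (by linarith [h.2.2.m_le])]
    congr 1; ring

lemma mz_integral {q m : ℝ} (hq : 0 ≤ q) {z : List (ℝ × ℝ)} (h : Gd q m z) (f : ℝ → ℝ) :
    Integrable (fun x : II => f x) (mz m z) ∧ ∫ x : II, f x ∂(mz m z) = meas m z f := by
  induction z generalizing q m with
  | nil => simp [mz, meas]
  | cons p z ih =>
    obtain ⟨i1, i2⟩ := ih (hq.trans h.1) h.2.2
    have i3 : Integrable (fun x : II => f x) (ENNReal.ofReal (p.2 - m) • Measure.dirac (pj p.1)) :=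
      (integrable_dirac (by simp)).smul_measure ENNReal.ofReal_ne_top
    refine ⟨i3.add_measure i1, ?_⟩
    simp only [mz]
    rw [integral_add_measure i3 i1, i2, integral_smul_measure, integral_dirac,
      pj_coe (hq.trans h.1) h.2.2.q_le, ENNReal.toReal_ofReal (by linarith [h.2.1])]
    rfl

/-- Good lists. -/
abbrev GdL := {z : List (ℝ × ℝ) // Gd 0 0 z}

/-- Probability measure attached to a good list. -/
def Pz (z : GdL) : ProbabilityMeasure II :=
  ⟨mz 0 z.1, ⟨by rw [mz_univ z.2]; simp⟩⟩

lemma Pz_int (z : GdL) (f : ℝ → ℝ) : ∫ x : II, f x ∂(Pz z : Measure II) = meas 0 z.1 f :=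
  (mz_integral le_rfl z.2 f).2

/-- The filter of near minimizers. -/
def nm (S : Finset ℕ) (h : ℝ) (β : ℕ → ℝ) : Filter GdL :=
  comap (fun z : GdL => FF S h β z.1) (𝓝 (parisiF S h β))

lemma nm_mem {S : Finset ℕ} (hS : ∀ p ∈ S, 0 < p) (h : ℝ) (β : ℕ → ℝ) {s : Set GdL} :
    s ∈ nm S h β ↔ ∃ ε > 0, ∀ z : GdL, FF S h β z.1 ≤ parisiF S h β + ε → z ∈ s := by
  unfold nm
  rw [((Metric.nhds_basis_closedBall).comap _).mem_iff]
  refine exists_congr fun ε => and_congr_right fun _ => ?_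
  constructor
  · intro H z hz
    refine H ?_
    have := parisiF_le hS h β z.2
    rw [Set.mem_preimage, Metric.mem_closedBall, Real.dist_eq, abs_le]
    constructor <;> linarith
  · intro H z hz
    refine H z ?_
    rw [Set.mem_preimage, Metric.mem_closedBall, Real.dist_eq, abs_le] at hz
    linarith [hz.2]

instance nm_neBot {S : Finset ℕ} [hS : Fact (∀ p ∈ S, 0 < p)] (h : ℝ) (β : ℕ → ℝ) : (nm S h β).NeBot := by
  refine forall_mem_nonempty_iff_neBot.1 fun s hs => ?_
  obtain ⟨ε, hε, H⟩ := (nm_mem hS.1 h β).1 hs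
  obtain ⟨w, hw, hlt⟩ := exists_FF_lt S h β (c := parisiF S h β + ε) (by linarith)
  exact ⟨⟨w, hw⟩, H _ hlt.le⟩

lemma xi'_strict {S : Finset ℕ} {β : ℕ → ℝ} (hβ : ∃ p ∈ S, 2 ≤ p ∧ β p ≠ 0) {x y : ℝ} (hx : 0 ≤ x)
    (hxy : x < y) : xiFn' S β x < xiFn' S β y := by
  obtain ⟨p, hp, hp2, hb⟩ := hβ
  refine Finset.sum_lt_sum (fun i _ => by gcongr) ⟨p, hp, ?_⟩
  have : 0 < p - 1 := by omega
  have : x ^ (p - 1) < y ^ (p - 1) := pow_lt_pow_left₀ hxy hx (by omega)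
  have h3 : 0 < β p ^ 2 * p := by
    have : (0:ℝ) < p := by exact_mod_cast (by omega : 0 < p)
    positivity
  exact mul_lt_mul_of_pos_left this h3

lemma quot_lim (x t : ℝ) : Tendsto (fun n : ℕ => ((n:ℝ) + 1) * (max (x + ((n:ℝ) + 1)⁻¹) t - max x t)) atTop
    (𝓝 (if t ≤ x then 1 else 0)) := by
  have hpos : ∀ n : ℕ, (0:ℝ) < (n:ℝ) + 1 := fun n => by positivity
  split_ifs with h
  · refine tendsto_const_nhds.congr fun n => ?_
    have := inv_pos.2 (hpos n)
    rw [max_eq_left h, max_eq_left (by linarith), add_sub_cancel_left, mul_inv_cancel₀ (hpos n).ne']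
  · push Not at h
    have h0 : Tendsto (fun n : ℕ => ((n:ℝ) + 1)⁻¹) atTop (𝓝 0) := by
      simpa [one_div] using tendsto_one_div_add_atTop_nhds_zero_nat (𝕜 := ℝ)
    refine tendsto_const_nhds.congr' ?_
    filter_upwards [h0.eventually (gt_mem_nhds (sub_pos.2 h))] with n hn
    rw [max_eq_right h.le, max_eq_right (by linarith), sub_self, mul_zero]

lemma eq_of_max {S : Finset ℕ} {β : ℕ → ℝ} (hβ : ∃ p ∈ S, 2 ≤ p ∧ β p ≠ 0) (μ ν : ProbabilityMeasure II)
    (H : ∀ x, 0 ≤ x → x ≤ xiFn' S β 1 → ∫ q : II, max x (xiFn' S β q) ∂(μ : Measure II) =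
      ∫ q : II, max x (xiFn' S β q) ∂(ν : Measure II)) : μ = ν := by
  refine Subtype.ext (Measure.ext_of_Iic (μ : Measure II) (ν : Measure II) fun a => ?_)
  rcases a.2.2.eq_or_lt with ha | ha
  · have : Set.Iic a = Set.univ := by
      ext b; simp only [Set.mem_Iic, Set.mem_univ, iff_true]
      exact Subtype.coe_le_coe.1 (b.2.2.trans ha.ge)
    rw [this, measure_univ, measure_univ]
  · have hlt := xi'_strict hβ a.2.1 ha
    have hset : ∀ b : II, xiFn' S β b ≤ xiFn' S β a ↔ b ∈ Set.Iic a := by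
      intro b
      constructor
      · intro hb
        by_contra hc
        simp only [Set.mem_Iic, not_le] at hc
        exact absurd (xi'_strict hβ a.2.1 (Subtype.coe_lt_coe.2 hc)) (not_lt.2 hb)
      · intro hb
        exact xi'_mono S β _ _ b.2.1 hb a.2.2
    have hx0 := xi'_nonneg S β a.2.1
    have hc : ∀ x, Continuous fun q : II => max x (xiFn' S β q) := fun x =>
      continuous_const.max ((xi'_cont S β).comp continuous_subtype_val)
    have hIntg : ∀ (ρ : ProbabilityMeasure II) x, Integrable (fun q : II => max x (xiFn' S β q)) (ρ : Measure II) :=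
      fun ρ x => (hc x).integrable_of_hasCompactSupport (HasCompactSupport.of_compactSpace _)
    have key : ∀ ρ : ProbabilityMeasure II, Tendsto (fun n : ℕ => ((n:ℝ) + 1) *
        ((∫ q : II, max (xiFn' S β a + ((n:ℝ) + 1)⁻¹) (xiFn' S β q) ∂(ρ : Measure II)) -
          ∫ q : II, max (xiFn' S β a) (xiFn' S β q) ∂(ρ : Measure II))) atTop
        (𝓝 ((ρ : Measure II).real (Set.Iic a))) := by
      intro ρ
      have e : (ρ : Measure II).real (Set.Iic a) = ∫ q : II, (if xiFn' S β q ≤ xiFn' S β a then (1:ℝ) else 0) ∂(ρ : Measure II) := by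
        rw [← integral_indicator_one measurableSet_Iic]
        refine integral_congr_ae (Eventually.of_forall fun q => ?_)
        simp only [Set.indicator, hset, Pi.one_apply]
      rw [e]
      have h2 : Tendsto (fun n : ℕ => ∫ q : II, ((n:ℝ) + 1) * (max (xiFn' S β a + ((n:ℝ) + 1)⁻¹) (xiFn' S β q) -
          max (xiFn' S β a) (xiFn' S β q)) ∂(ρ : Measure II)) atTop
          (𝓝 (∫ q : II, (if xiFn' S β q ≤ xiFn' S β a then (1:ℝ) else 0) ∂(ρ : Measure II))) := by
        refine tendsto_integral_of_dominated_convergence (fun _ => 1) (fun n => ?_) (integrable_const _)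
          (fun n => Eventually.of_forall fun q => ?_) (Eventually.of_forall fun q => quot_lim _ _)
        · exact (continuous_const.mul ((hc _).sub (hc _))).aestronglyMeasurable
        · have hp : (0:ℝ) < (n:ℝ) + 1 := by positivity
          rw [Real.norm_eq_abs, abs_mul, abs_of_pos hp]
          have := abs_max_sub_max_le_abs (xiFn' S β a + ((n:ℝ) + 1)⁻¹) (xiFn' S β a) (xiFn' S β q)
          rw [add_sub_cancel_left, abs_of_pos (inv_pos.2 hp)] at this
          calc _ ≤ ((n:ℝ) + 1) * ((n:ℝ) + 1)⁻¹ := by gcongr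
            _ = 1 := mul_inv_cancel₀ hp.ne'
      refine h2.congr fun n => ?_
      rw [integral_const_mul, integral_sub (hIntg _ _) (hIntg _ _)]
    have h0 : Tendsto (fun n : ℕ => ((n:ℝ) + 1)⁻¹) atTop (𝓝 0) := by
      simpa [one_div] using tendsto_one_div_add_atTop_nhds_zero_nat (𝕜 := ℝ)
    have : (μ : Measure II).real (Set.Iic a) = (ν : Measure II).real (Set.Iic a) := by
      refine tendsto_nhds_unique (key μ) ((key ν).congr' ?_)
      filter_upwards [h0.eventually (gt_mem_nhds (sub_pos.2 hlt))] with n hn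
      have hp : (0:ℝ) < ((n:ℝ) + 1)⁻¹ := by positivity
      rw [H _ hx0 hlt.le, H _ (by linarith) (by linarith)]
    exact (measureReal_eq_measureReal_iff).1 this

/-- The Parisi measure. -/
theorem exists_parisi_measure {S : Finset ℕ} (hS : ∀ p ∈ S, 0 < p) (h : ℝ) {β : ℕ → ℝ}
    (hβ : ∃ p ∈ S, 2 ≤ p ∧ β p ≠ 0) : ∃ μ : Measure ℝ, IsProbabilityMeasure μ ∧
      μ (Set.Icc (0 : ℝ) 1)ᶜ = 0 ∧ ∀ f : ℝ → ℝ, Continuous f →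
        Tendsto (fun z : GdL => meas 0 z.1 f) (nm S h β) (𝓝 (∫ q, f q ∂μ)) := by
  have : Fact (∀ p ∈ S, 0 < p) := ⟨hS⟩
  have hcont : ∀ f : ℝ → ℝ, Continuous f → Continuous fun μ : ProbabilityMeasure II =>
      ∫ q : II, f q ∂(μ : Measure II) := fun f hf =>
    ProbabilityMeasure.continuous_integral_boundedContinuousFunction
      (BoundedContinuousFunction.mkOfCompact ⟨fun q : II => f q, hf.comp continuous_subtype_val⟩)
  obtain ⟨μ, hμ⟩ := exists_clusterPt_of_compactSpace (map Pz (nm S h β))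
  have huniq : ∀ ν, ClusterPt ν (map Pz (nm S h β)) → ν = μ := by
    intro ν hν
    refine eq_of_max hβ ν μ fun x hx hx1 => ?_
    refine eq_of_forall_dist_le fun d hd => ?_
    obtain ⟨ε, hε, H⟩ := near_min_close hS h β (d := d / 3) (by positivity)
    set g : ℝ → ℝ := fun q => max x (xiFn' S β q)
    have hg : Continuous g := continuous_const.max (xi'_cont S β)
    have hmem : {z : GdL | FF S h β z.1 ≤ parisiF S h β + ε} ∈ nm S h β :=
      (nm_mem hS h β).2 ⟨ε, hε, fun z hz => hz⟩
    have get : ∀ ρ, ClusterPt ρ (map Pz (nm S h β)) → ∃ z : GdL, FF S h β z.1 ≤ parisiF S h β + ε ∧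
        |meas 0 z.1 g - ∫ q : II, g q ∂(ρ : Measure II)| < d / 3 := by
      intro ρ hρ
      have hU : {σ : ProbabilityMeasure II | dist (∫ q : II, g q ∂(σ : Measure II)) (∫ q : II, g q ∂(ρ : Measure II)) < d / 3} ∈ 𝓝 ρ :=
        (hcont g hg).continuousAt (Metric.ball_mem_nhds _ (by positivity))
      have hV : Pz '' {z : GdL | FF S h β z.1 ≤ parisiF S h β + ε} ∈ map Pz (nm S h β) := image_mem_map hmem
      obtain ⟨σ, h1, z, h2, rfl⟩ := clusterPt_iff_nonempty.1 hρ hU hV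
      refine ⟨z, h2, ?_⟩
      have h1' : dist (∫ q : II, g q ∂(Pz z : Measure II)) (∫ q : II, g q ∂(ρ : Measure II)) < d / 3 := h1
      rwa [Pz_int, Real.dist_eq] at h1'
    obtain ⟨z, z1, z2⟩ := get ν hν
    obtain ⟨w, w1, w2⟩ := get μ hμ
    have h3 := H z.1 w.1 z.2 w.2 z1 w1 x hx hx1
    change |meas 0 z.1 g - meas 0 w.1 g| ≤ d / 3 at h3
    change dist (∫ q : II, g q ∂(ν : Measure II)) (∫ q : II, g q ∂(μ : Measure II)) ≤ d
    rw [Real.dist_eq]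
    rw [abs_lt] at z2 w2
    rw [abs_le] at h3 ⊢
    constructor <;> linarith [z2.1, z2.2, w2.1, w2.2, h3.1, h3.2]
  have hlim : Tendsto Pz (nm S h β) (𝓝 μ) := le_nhds_of_unique_clusterPt huniq
  refine ⟨(μ : Measure II).map Subtype.val, Measure.isProbabilityMeasure_map (by fun_prop), ?_, fun f hf => ?_⟩
  · rw [Measure.map_apply measurable_subtype_coe measurableSet_Icc.compl]
    have : (Subtype.val : II → ℝ) ⁻¹' (Set.Icc (0:ℝ) 1)ᶜ = ∅ := by
      ext q; simpa using q.2
    rw [this, measure_empty]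
  · rw [integral_map (by fun_prop) hf.aestronglyMeasurable]
    refine (((hcont f hf).tendsto μ).comp hlim).congr fun z => ?_
    exact Pz_int z f

end PF

namespace PF

lemma EB_expmul (s : ℝ) : EB fun g => exp (s * g) :=
  EB.exp (by fun_prop) 0 |s| (abs_nonneg _) fun g => by
    rw [zero_add, ← abs_mul]; exact le_abs_self _

lemma int_mix (x s : ℝ) : ∫ g, ((1 + tanh x) / 2 * exp (s * g) + (1 - tanh x) / 2 * exp (-s * g)) ∂gam =
    exp (s ^ 2 / 2) := by
  rw [integral_add ((EB_expmul s).constmul _).integrable ((EB_expmul (-s)).constmul _).integrable,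
    integral_const_mul, integral_const_mul, integral_exp_gam, integral_exp_gam]
  rw [neg_sq]; ring

lemma T_one_lc {v : ℝ} (hv : 0 ≤ v) (x : ℝ) : T 1 v lc x = lc x + v / 2 := by
  have h1 := exp_T lc_L1 one_ne_zero v x
  rw [one_mul] at h1
  apply exp_injective
  rw [h1, Zt, exp_add, exp_lc]
  have h2 := int_mix x (√v)
  rw [sq_sqrt hv] at h2
  rw [← h2, ← integral_const_mul]
  refine integral_congr_ae (Eventually.of_forall fun g => ?_)
  simp only [one_mul, exp_lc]
  rw [cosh_add_ratio, neg_mul]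

lemma T_lc_ge {m v : ℝ} (h0 : 0 ≤ m) (h1 : m ≤ 1) (hv : 0 ≤ v) (x : ℝ) : lc x + m * v / 2 ≤ T m v lc x := by
  have ht := abs_le.1 (abs_tanh_le x)
  rcases h0.eq_or_lt with rfl | hm
  · rw [T_zero, zero_mul, zero_div, add_zero]
    have h2 : ∀ g, lc x + tanh x * √v * g ≤ lc (x + √v * g) := fun g => by
      have := lc_sub x (√v * g)
      linarith
    have e : ∫ g, (lc x + tanh x * √v * g) ∂gam = lc x := by
      rw [integral_add (EB.const _).integrable (EB.id.constmul _).integrable, integral_const_mul,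
        integral_id_gam]
      simp
    rw [← e]
    exact integral_mono ((EB.const _).add (EB.id.constmul _)).integrable (lc_L1.EBs x _).integrable h2
  · have e := exp_T lc_L1 hm.ne' v x
    have h2 := int_mix x (m * √v)
    rw [mul_pow, sq_sqrt hv] at h2
    have h3 : exp (m * lc x) * exp (m ^ 2 * v / 2) ≤ Zt m v lc x := by
      rw [← h2, ← integral_const_mul, Zt]
      refine integral_mono ((((EB_expmul _).constmul _).add ((EB_expmul _).constmul _)).constmul _).integrable
        (lc_L1.EBe m x _).integrable fun g => ?_
      have hc := (Real.concaveOn_rpow h0 h1).2 (Set.mem_Ici.2 (exp_pos (√v * g)).le)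
        (Set.mem_Ici.2 (exp_pos (-(√v * g))).le) (show 0 ≤ (1 + tanh x) / 2 by linarith)
        (show 0 ≤ (1 - tanh x) / 2 by linarith) (by ring)
      simp only [smul_eq_mul, ← exp_mul] at hc
      have e2 : exp (m * lc (x + √v * g)) = exp (m * lc x) * ((1 + tanh x) / 2 * exp (√v * g) +
          (1 - tanh x) / 2 * exp (-(√v * g))) ^ m := by
        have hp : 0 ≤ (1 + tanh x) / 2 * exp (√v * g) + (1 - tanh x) / 2 * exp (-(√v * g)) :=
          add_nonneg (mul_nonneg (by linarith) (exp_pos _).le) (mul_nonneg (by linarith) (exp_pos _).le)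
        rw [mul_comm m, exp_mul, exp_lc, cosh_add_ratio, Real.mul_rpow (cosh_pos x).le hp, mul_comm m,
          exp_mul (lc x) m, exp_lc]
      simp only
      rw [e2]
      refine mul_le_mul_of_nonneg_left (le_trans (le_of_eq ?_) hc) (exp_pos _).le
      congr 3 <;> ring_nf
    rw [← e, ← exp_add, exp_le_exp] at h3
    have : m * (lc x + m * v / 2) ≤ m * T m v lc x := by linarith
    exact le_of_mul_le_mul_left this hm

/-- Lower clipping. -/
lemma low_clip {τ : ℝ → ℝ} (hτ : Mono01 τ) {t0 : ℝ} (ht0 : t0 ≤ τ 1) {z : List (ℝ × ℝ)} :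
    ∀ {q m : ℝ}, 0 ≤ q → 0 ≤ m → Gd q m z → ∀ {t}, t ≤ τ q → ∀ x,
    T 0 (max t t0 - t) (Psi (fun q => max (τ q) t0) (τ 1) (max t t0) m z) x ≤ Psi τ (τ 1) t m z x := by
  induction z with
  | nil =>
    intro q m hq hm hz t ht x
    have h1 := hτ q 1 hq hz.1 le_rfl
    simp only [Psi]
    have h2 : max t t0 ≤ τ 1 := max_le (ht.trans h1) ht0
    have h3 := le_max_left t t0
    refine (T_zero_le (T_L1 lc_L1 hm _) hm _ x).trans (le_of_eq ?_)
    rw [T_semigroup lc_L1 m (by linarith) (by linarith)]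
    congr 1; ring
  | cons p z ih =>
    intro q m hq hm hz t ht x
    have hp0 := hq.trans hz.1
    have hpm := hm.trans hz.2.1
    have h1 := hτ q p.1 hq hz.1 hz.2.2.q_le
    have ih' := ih hp0 hpm hz.2.2 (le_refl (τ p.1))
    simp only [Psi]
    have hB := hz.2.2.L1 hpm (fun q => max (τ q) t0) (τ 1) (max (τ p.1) t0)
    set B := Psi (fun q => max (τ q) t0) (τ 1) (max (τ p.1) t0) p.2 z
    have hA := hz.2.2.L1 hpm τ (τ 1) (τ p.1)
    refine le_trans ?_ (T_mono (T_L1 hB le_rfl _) hA hm _ x ih')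
    rcases le_total t0 (τ p.1) with h2 | h2
    · rw [max_eq_left h2, sub_self, T_zerovar']
      have h3 : max t t0 ≤ τ p.1 := max_le (ht.trans h1) h2
      have h4 := le_max_left t t0
      refine (T_zero_le (T_L1 hB hm _) hm _ x).trans (le_of_eq ?_)
      rw [T_semigroup hB m (by linarith) (by linarith)]
      congr 1; ring
    · have h3 : t ≤ t0 := (ht.trans h1).trans h2
      rw [max_eq_right h2, max_eq_right h3, sub_self, T_zerovar']
      refine le_trans (le_of_eq ?_) (T_zero_le (T_L1 hB le_rfl _) hm _ x)
      rw [T_semigroup hB 0 (by linarith) (by linarith)]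
      congr 1; ring

/-- After the upper clip all variances vanish. -/
lemma Psi_flat {τ : ℝ → ℝ} (hτ : Mono01 τ) {E : ℝ} {z : List (ℝ × ℝ)} : ∀ {q m : ℝ}, 0 ≤ q → Gd q m z →
    E ≤ τ q → Psi (fun q => min (τ q) E) E E m z = lc := by
  induction z with
  | nil => intro q m _ _ _; simp only [Psi, sub_self, T_zerovar']
  | cons p z ih =>
    intro q m hq hz hE
    have h1 := hE.trans (hτ q p.1 hq hz.1 hz.2.2.q_le)
    simp only [Psi, min_eq_right h1, sub_self, T_zerovar']
    exact ih (hq.trans hz.1) hz.2.2 h1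

/-- Upper clipping. -/
lemma up_clip {τ : ℝ → ℝ} (hτ : Mono01 τ) {E : ℝ} {z : List (ℝ × ℝ)} :
    ∀ {q m : ℝ}, 0 ≤ q → 0 ≤ m → Gd q m z → ∀ {t}, t ≤ τ q → ∀ x,
    Psi (fun q => min (τ q) E) E (min t E) m z x +
      1 / 2 * (τ 1 - m * max t E - meas m z (fun q => max (τ q) E)) ≤ Psi τ (τ 1) t m z x := by
  induction z with
  | nil =>
    intro q m hq hm hz t ht x
    have h1 := hτ q 1 hq hz.1 le_rfl
    simp only [Psi, meas, hz.2]
    rw [T_one_lc (sub_nonneg.2 (min_le_right t E)), T_one_lc (by linarith)]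
    have := min_add_max t E
    linarith
  | cons p z ih =>
    intro q m hq hm hz t ht x
    have hp0 := hq.trans hz.1
    have hpm := hm.trans hz.2.1
    have h1 := ht.trans (hτ q p.1 hq hz.1 hz.2.2.q_le)
    have ih' := ih hp0 hpm hz.2.2 (le_refl (τ p.1))
    simp only [Psi, meas]
    have hB := hz.2.2.L1 hpm (fun q => min (τ q) E) E (min (τ p.1) E)
    have hA := hz.2.2.L1 hpm τ (τ 1) (τ p.1)
    have h2 := T_mono (hB.addconst _) hA hm (τ p.1 - t) x ih'
    rw [T_addconst hB] at h2
    refine le_trans ?_ h2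
    suffices hs : T m (min (τ p.1) E - min t E) (Psi (fun q => min (τ q) E) E (min (τ p.1) E) p.2 z) x +
        1 / 2 * (m * (max (τ p.1) E - max t E)) ≤
        T m (τ p.1 - t) (Psi (fun q => min (τ q) E) E (min (τ p.1) E) p.2 z) x by linarith
    rcases le_total (τ p.1) E with h3 | h3
    · rw [min_eq_left h3, min_eq_left (h1.trans h3), max_eq_right h3, max_eq_right (h1.trans h3)]
      simp
    · rw [min_eq_right h3, max_eq_left h3, Psi_flat hτ hp0 hz.2.2 h3]
      have h4 : max t E ≤ τ p.1 := max_le h1 h3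
      have h5 := min_add_max t E
      have h6 : τ p.1 - t = (E - min t E) + (τ p.1 - max t E) := by linarith
      have h7 := min_le_right t E
      rw [h6, ← T_semigroup lc_L1 m (by linarith) (by linarith)]
      have h8 := T_mono (lc_L1.addconst (m * (τ p.1 - max t E) / 2)) (T_L1 lc_L1 hm _) hm (E - min t E) x
        (fun y => T_lc_ge hm (hz.2.1.trans hz.2.2.m_le) (sub_nonneg.2 h4) y)
      rw [T_addconst lc_L1] at h8
      linarith

lemma pow_tangent (n : ℕ) {x y : ℝ} (hx : 0 ≤ x) (hy : 0 ≤ y) :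
    (n + 1) * y ^ n * x - n * y ^ (n + 1) ≤ x ^ (n + 1) := by
  induction n with
  | zero => simp
  | succ n ih =>
    have h1 := mul_le_mul_of_nonneg_right ih hx
    have h2 : 0 ≤ ((n:ℝ) + 1) * y ^ n * (x - y) ^ 2 := by positivity
    push_cast
    have e1 : x ^ (n + 1) * x = x ^ (n + 1 + 1) := (pow_succ _ _).symm
    have e2 : y ^ (n + 1 + 1) = y ^ n * y ^ 2 := by ring
    have e3 : y ^ (n + 1) = y ^ n * y := pow_succ _ _
    rw [e1] at h1
    rw [e3] at h1 ⊢
    rw [e2]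
    nlinarith

lemma theta_young {S : Finset ℕ} (hS : ∀ p ∈ S, 0 < p) (β : ℕ → ℝ) {x y : ℝ} (hx : 0 ≤ x) (hy : 0 ≤ y) :
    x * xiFn' S β y - xiFn S β x ≤ thetaFn S β y := by
  have : 0 ≤ ∑ p ∈ S, β p ^ 2 * (x ^ p - y ^ p - p * y ^ (p - 1) * (x - y)) := by
    refine Finset.sum_nonneg fun p hp => mul_nonneg (sq_nonneg _) ?_
    obtain ⟨n, rfl⟩ : ∃ n, p = n + 1 := ⟨p - 1, by have := hS p hp; omega⟩
    have := pow_tangent n hx hy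
    have e3 : y ^ (n + 1) = y ^ n * y := pow_succ _ _
    rw [e3] at this ⊢
    simp only [Nat.add_sub_cancel]
    push_cast
    nlinarith
  have e : ∑ p ∈ S, β p ^ 2 * (x ^ p - y ^ p - p * y ^ (p - 1) * (x - y)) =
      xiFn S β x - xiFn S β y - (x - y) * xiFn' S β y := by
    unfold xiFn xiFn'
    rw [Finset.mul_sum, ← Finset.sum_sub_distrib, ← Finset.sum_sub_distrib]
    exact Finset.sum_congr rfl fun p _ => by ring
  unfold thetaFn
  rw [e] at this
  linarith

end PF

namespace PF

/-- Change of the location of the atoms. -/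
def mp (φ : ℝ → ℝ) (p : ℝ × ℝ) : ℝ × ℝ := (φ p.1, p.2)

lemma Psi_map (τ φ : ℝ → ℝ) (E t m : ℝ) (z : List (ℝ × ℝ)) :
    Psi τ E t m (z.map (mp φ)) = Psi (fun q => τ (φ q)) E t m z := by
  induction z generalizing t m with
  | nil => rfl
  | cons p z ih => simp only [List.map_cons, Psi, mp, ih]

lemma Psi_congr {τ σ : ℝ → ℝ} (E t : ℝ) {q m : ℝ} {z : List (ℝ × ℝ)} (h : Gd q m z)
    (hts : ∀ x, q ≤ x → x ≤ 1 → τ x = σ x) : Psi τ E t m z = Psi σ E t m z := by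
  induction z generalizing q m t with
  | nil => rfl
  | cons p z ih =>
    simp only [Psi]
    rw [hts _ h.1 h.2.2.q_le, ih _ h.2.2 fun x hx => hts x (h.1.trans hx)]

lemma meas_map (φ : ℝ → ℝ) (m : ℝ) (z : List (ℝ × ℝ)) (f : ℝ → ℝ) :
    meas m (z.map (mp φ)) f = meas m z (fun q => f (φ q)) := by
  induction z generalizing m with
  | nil => rfl
  | cons p z ih => simp only [List.map_cons, meas, mp, ih]

lemma Gd_map {φ : ℝ → ℝ} (hφ : Mono01 φ) (h1 : φ 1 ≤ 1) {q m : ℝ} (hq : 0 ≤ q) {z : List (ℝ × ℝ)}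
    (h : Gd q m z) : Gd (φ q) m (z.map (mp φ)) := by
  induction z generalizing q m with
  | nil => exact ⟨(hφ q 1 hq h.1 le_rfl).trans h1, h.2⟩
  | cons p z ih =>
    exact ⟨hφ q p.1 hq h.1 h.2.2.q_le, h.2.1, ih (hq.trans h.1) h.2.2⟩

/-- Top level consequence of the two clippings. -/
lemma clip_top {τ : ℝ → ℝ} (hτ : Mono01 τ) (hτ0 : 0 ≤ τ 0) {t0 E : ℝ} (ht0 : 0 ≤ t0) (h0E : t0 ≤ E)
    (ht1 : t0 ≤ τ 1) {z : List (ℝ × ℝ)} (hz : Gd 0 0 z) (x : ℝ) :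
    Psi (fun q => min (max (τ q) t0) E) E 0 0 z x + 1 / 2 * (τ 1 - meas 0 z (fun q => max (τ q) E)) ≤
      Psi τ (τ 1) 0 0 z x := by
  have hσ : Mono01 fun q => max (τ q) t0 := fun x y hx hxy hy => max_le_max (hτ x y hx hxy hy) le_rfl
  have h1 := low_clip hτ ht1 le_rfl le_rfl hz hτ0 x
  rw [max_eq_right ht0, sub_zero] at h1
  have h2 := up_clip hσ (E := E) le_rfl le_rfl hz (t := 0) (ht0.trans (le_max_right _ _)) x
  rw [min_eq_left (ht0.trans h0E), zero_mul, sub_zero] at h2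
  simp only [max_assoc, max_eq_left ht1, max_eq_right h0E] at h2
  refine h2.trans (le_trans (le_of_eq ?_) h1)
  cases z with
  | nil => exact absurd hz.2 (by norm_num)
  | cons p z =>
    simp only [Psi]
    rw [T_semigroup (hz.2.2.L1 hz.2.1 _ _ _) 0 ht0 (by linarith [le_max_right (τ p.1) t0])]
    congr 1; ring

/-- Transfer of lists between parameters. -/
theorem transfer {S : Finset ℕ} (hS : ∀ p ∈ S, 0 < p) (h : ℝ) (β β' : ℕ → ℝ)
    (hβ' : ∃ p ∈ S, 2 ≤ p ∧ β' p ≠ 0) (ht : xiFn' S β' 0 ≤ xiFn' S β 1) : ∃ φ : ℝ → ℝ,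
    (∀ q, 0 ≤ q → q ≤ 1 → 0 ≤ φ q ∧ φ q ≤ 1 ∧
      |xiFn' S β' (φ q) - xiFn' S β q| ≤ |xiFn' S β' q - xiFn' S β q|) ∧
    ∀ z, Gd 0 0 z → Gd 0 0 (z.map (mp φ)) ∧
      FF S h β' (z.map (mp φ)) ≤ FF S h β z + 1 / 2 * ((xiFn S β' 1 - xiFn S β 1) -
        meas 0 (z.map (mp φ)) (fun q => xiFn S β' q - xiFn S β q)) := by
  set τ := xiFn' S β with hτd
  set τ' := xiFn' S β' with hτd'
  have hm' := xi'_mono S β'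
  have hm := xi'_mono S β
  have h01 : τ' 0 ≤ τ' 1 := hm' 0 1 le_rfl zero_le_one le_rfl
  have hex : ∀ q : ℝ, ∃ r, 0 ≤ r ∧ r ≤ 1 ∧ τ' r = min (max (τ q) (τ' 0)) (τ' 1) := by
    intro q
    have := intermediate_value_Icc (zero_le_one (α := ℝ)) (xi'_cont S β').continuousOn
    obtain ⟨r, hr, hr2⟩ := this (show min (max (τ q) (τ' 0)) (τ' 1) ∈ Set.Icc (τ' 0) (τ' 1) from
      ⟨le_min (le_max_right _ _) h01, min_le_right _ _⟩)
    exact ⟨r, hr.1, hr.2, hr2⟩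
  choose φ φ0 φ1 hφ using hex
  have hinj : ∀ a b, 0 ≤ a → 0 ≤ b → τ' a ≤ τ' b → a ≤ b := by
    intro a b ha hb hab
    by_contra hc
    exact absurd (xi'_strict hβ' hb (not_le.1 hc)) (not_lt.2 hab)
  have hmono : Mono01 φ := by
    intro x y hx hxy hy
    refine hinj _ _ (φ0 x) (φ0 y) ?_
    rw [hφ, hφ]
    exact min_le_min (max_le_max (hm x y hx hxy hy) le_rfl) le_rfl
  refine ⟨φ, fun q hq0 hq1 => ⟨φ0 q, φ1 q, ?_⟩, fun z hz => ⟨?_, ?_⟩⟩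
  · rw [hφ]
    have a1 := hm' 0 q le_rfl hq0 hq1
    have a2 := hm' q 1 hq0 hq1 le_rfl
    change τ' 0 ≤ τ' q at a1
    change τ' q ≤ τ' 1 at a2
    rcases le_total (τ q) (τ' 0) with c | c
    · rw [max_eq_right c, min_eq_left h01, abs_of_nonneg (by linarith), abs_of_nonneg (by linarith)]
      linarith
    · rw [max_eq_left c]
      rcases le_total (τ q) (τ' 1) with c2 | c2
      · rw [min_eq_left c2, sub_self, abs_zero]; exact abs_nonneg _
      · rw [min_eq_right c2, abs_of_nonpos (by linarith), abs_of_nonpos (by linarith)]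
        linarith
  · exact (Gd_map hmono (φ1 1) le_rfl hz).anti (φ0 0)
  · have h1 := clip_top hm (xi'_nonneg S β le_rfl) (xi'_nonneg S β' le_rfl) h01 ht hz h
    have e1 : Psi τ' (τ' 1) 0 0 (z.map (mp φ)) h =
        Psi (fun q => min (max (τ q) (τ' 0)) (τ' 1)) (τ' 1) 0 0 z h := by
      rw [Psi_map, Psi_congr _ _ hz fun x _ _ => hφ x]
    unfold FF
    rw [← hτd, ← hτd', e1, meas_map, meas_map]
    have h2 : meas 0 z (fun q => max (τ q) (τ' 1) - τ' 1 + (thetaFn S β' (φ q) - thetaFn S β q)) ≤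
        meas 0 z (fun q => 0 - (xiFn S β' (φ q) - xiFn S β (φ q))) := by
      refine meas_mono hz fun q hq0 hq1 => ?_
      have hy := theta_young hS β (φ0 q) hq0
      rw [← hτd] at hy
      have e2 : thetaFn S β' (φ q) = φ q * min (max (τ q) (τ' 0)) (τ' 1) - xiFn S β' (φ q) := by
        unfold thetaFn; rw [← hτd', hφ]
      rw [e2]
      suffices hs : max (τ q) (τ' 1) - τ' 1 + φ q * (min (max (τ q) (τ' 0)) (τ' 1) - τ q) ≤ 0 by linarith
      rcases le_total (τ q) (τ' 0) with c | c
      · have : φ q = 0 := le_antisymm (hinj _ _ (φ0 q) le_rfl (by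
          rw [hφ, max_eq_right c, min_eq_left h01])) (φ0 q)
        rw [this, max_eq_right (c.trans h01)]; simp
      · rw [max_eq_left c]
        rcases le_total (τ q) (τ' 1) with c2 | c2
        · rw [min_eq_left c2, max_eq_right c2]; simp
        · have : φ q = 1 := le_antisymm (φ1 q) (hinj _ _ zero_le_one (φ0 q) (by
            rw [hφ, max_eq_left c, min_eq_right c2]))
          rw [this, min_eq_right c2, max_eq_left c2]; linarith
    rw [meas_add, meas_sub, meas_sub 0 z (fun q => thetaFn S β' (φ q)),
      meas_sub 0 z (fun _ => (0:ℝ)), meas_const hz, meas_const hz] at h2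
    have e3 : thetaFn S β 1 = τ 1 - xiFn S β 1 := by unfold thetaFn; rw [one_mul]
    have e4 : thetaFn S β' 1 = τ' 1 - xiFn S β' 1 := by unfold thetaFn; rw [one_mul]
    rw [e3, e4]
    linarith

lemma xi_update {S : Finset ℕ} (β : ℕ → ℝ) {p : ℕ} (hp : p ∈ S) (s x : ℝ) :
    xiFn S (Function.update β p s) x = xiFn S β x + (s ^ 2 - β p ^ 2) * x ^ p := by
  unfold xiFn
  rw [← Finset.add_sum_erase S _ hp, ← Finset.add_sum_erase S (fun p => β p ^ 2 * x ^ p) hp]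
  rw [Finset.sum_congr rfl fun i hi => by rw [Function.update_of_ne (Finset.ne_of_mem_erase hi)]]
  rw [Function.update_self]; ring

lemma xi'_update {S : Finset ℕ} (β : ℕ → ℝ) {p : ℕ} (hp : p ∈ S) (s x : ℝ) :
    xiFn' S (Function.update β p s) x = xiFn' S β x + (s ^ 2 - β p ^ 2) * (p * x ^ (p - 1)) := by
  unfold xiFn'
  rw [← Finset.add_sum_erase S _ hp, ← Finset.add_sum_erase S (fun p => β p ^ 2 * p * x ^ (p - 1)) hp]
  rw [Finset.sum_congr rfl fun i hi => by rw [Function.update_of_ne (Finset.ne_of_mem_erase hi)]]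
  rw [Function.update_self]; ring

lemma modulus {S : Finset ℕ} {β : ℕ → ℝ} (hβ : ∃ p ∈ S, 2 ≤ p ∧ β p ≠ 0) (p : ℕ) {e : ℝ} (he : 0 < e) :
    ∃ η > 0, ∀ a b : ℝ, 0 ≤ a → a ≤ 1 → 0 ≤ b → b ≤ 1 → |xiFn' S β a - xiFn' S β b| < η →
      |a ^ p - b ^ p| ≤ e := by
  have hcl : IsCompact ((Set.Icc (0:ℝ) 1 ×ˢ Set.Icc (0:ℝ) 1) ∩ {x : ℝ × ℝ | e ≤ |x.1 ^ p - x.2 ^ p|}) :=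
    (isCompact_Icc.prod isCompact_Icc).inter_right (isClosed_le continuous_const (by fun_prop))
  rcases ((Set.Icc (0:ℝ) 1 ×ˢ Set.Icc (0:ℝ) 1) ∩ {x : ℝ × ℝ | e ≤ |x.1 ^ p - x.2 ^ p|}).eq_empty_or_nonempty
    with h | h
  · refine ⟨1, one_pos, fun a b ha ha1 hb hb1 _ => ?_⟩
    by_contra hc
    have : (a, b) ∈ ((Set.Icc (0:ℝ) 1 ×ˢ Set.Icc (0:ℝ) 1) ∩ {x : ℝ × ℝ | e ≤ |x.1 ^ p - x.2 ^ p|}) :=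
      ⟨⟨⟨ha, ha1⟩, ⟨hb, hb1⟩⟩, (not_le.1 hc).le⟩
    rw [h] at this
    exact this
  · have hc : Continuous fun x : ℝ × ℝ => |xiFn' S β x.1 - xiFn' S β x.2| := by
      have := xi'_cont S β
      fun_prop
    obtain ⟨x, hx, hmin⟩ := hcl.exists_isMinOn h hc.continuousOn
    refine ⟨|xiFn' S β x.1 - xiFn' S β x.2|, ?_, fun a b ha ha1 hb hb1 hab => ?_⟩
    · refine abs_pos.2 (sub_ne_zero.2 fun heq => ?_)
      have hx2 : e ≤ |x.1 ^ p - x.2 ^ p| := hx.2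
      rcases lt_trichotomy x.1 x.2 with c | c | c
      · exact absurd heq (xi'_strict hβ hx.1.1.1 c).ne
      · rw [c, sub_self, abs_zero] at hx2; linarith
      · exact absurd heq (xi'_strict hβ hx.1.2.1 c).ne'
    · by_contra hc
      have : (a, b) ∈ ((Set.Icc (0:ℝ) 1 ×ˢ Set.Icc (0:ℝ) 1) ∩ {x : ℝ × ℝ | e ≤ |x.1 ^ p - x.2 ^ p|}) :=
        ⟨⟨⟨ha, ha1⟩, ⟨hb, hb1⟩⟩, (not_le.1 hc).le⟩
      exact absurd (hmin this) (not_le.2 hab)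

end PF

namespace PF

/-- Second order expansion of the Parisi formula in the variable `s ^ 2`. -/
lemma expansion {S : Finset ℕ} (hS : ∀ p ∈ S, 0 < p) (h : ℝ) {β : ℕ → ℝ}
    (hβ : ∃ p ∈ S, 2 ≤ p ∧ β p ≠ 0) {p : ℕ} (hp : p ∈ S) {I : ℝ}
    (hI : Tendsto (fun z : GdL => meas 0 z.1 (fun q => q ^ p)) (nm S h β) (𝓝 I)) {e : ℝ} (he : 0 < e) :
    ∀ᶠ s in 𝓝 (β p), |parisiF S h (Function.update β p s) - parisiF S h β -
      1 / 2 * (s ^ 2 - β p ^ 2) * (1 - I)| ≤ e * |s ^ 2 - β p ^ 2| := by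
  obtain ⟨ε, hε, Hε⟩ := (nm_mem hS h β).1 (hI (Metric.closedBall_mem_nhds I he))
  have Hε' : ∀ z, Gd 0 0 z → FF S h β z ≤ parisiF S h β + ε → |meas 0 z (fun q => q ^ p) - I| ≤ e :=
    fun z hz hF => Hε ⟨z, hz⟩ hF
  obtain ⟨η, hη, Hη⟩ := modulus hβ p he
  have hgap : 0 < xiFn' S β 1 - xiFn' S β 0 := sub_pos.2 (xi'_strict hβ le_rfl one_pos)
  have hD : Tendsto (fun s : ℝ => |s ^ 2 - β p ^ 2|) (𝓝 (β p)) (𝓝 0) := by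
    have : Continuous fun s : ℝ => |s ^ 2 - β p ^ 2| := by fun_prop
    simpa using this.tendsto (β p)
  have hDp : Tendsto (fun s : ℝ => |s ^ 2 - β p ^ 2| * p) (𝓝 (β p)) (𝓝 0) := by
    simpa using hD.mul_const (p:ℝ)
  have hDK : Tendsto (fun s : ℝ => |s ^ 2 - β p ^ 2| * (|1 - I| + e + 1)) (𝓝 (β p)) (𝓝 0) := by
    simpa using hD.mul_const (|1 - I| + e + 1)
  have hnz : ∀ᶠ s in 𝓝 (β p), ∃ r ∈ S, 2 ≤ r ∧ Function.update β p s r ≠ 0 := by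
    obtain ⟨r, hr, hr2, hrb⟩ := hβ
    by_cases hrp : r = p
    · subst hrp
      filter_upwards [isOpen_ne.mem_nhds hrb] with s hs
      exact ⟨r, hr, hr2, by rw [Function.update_self]; exact hs⟩
    · exact Eventually.of_forall fun s => ⟨r, hr, hr2, by rw [Function.update_of_ne hrp]; exact hrb⟩
  filter_upwards [hnz, hDp.eventually (gt_mem_nhds (half_pos hη)), hDp.eventually (gt_mem_nhds hgap),
    hDK.eventually (gt_mem_nhds (half_pos hε))] with s hs1 hs2 hs3 hs4
  set D := s ^ 2 - β p ^ 2 with hDd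
  have hclose : ∀ x, 0 ≤ x → x ≤ 1 → |xiFn' S (Function.update β p s) x - xiFn' S β x| ≤ |D| * p := by
    intro x hx hx1
    rw [xi'_update β hp, add_sub_cancel_left, abs_mul, abs_mul, abs_of_nonneg (pow_nonneg hx _),
      Nat.abs_cast]
    have := pow_le_one₀ hx hx1 (n := p - 1)
    have h2 : (p:ℝ) * x ^ (p - 1) ≤ p * 1 := mul_le_mul_of_nonneg_left this (Nat.cast_nonneg _)
    rw [mul_one] at h2
    exact mul_le_mul_of_nonneg_left h2 (abs_nonneg _)
  have c0 := abs_le.1 (hclose 0 le_rfl zero_le_one)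
  have c1 := abs_le.1 (hclose 1 zero_le_one le_rfl)
  -- upper bound
  have hup : parisiF S h (Function.update β p s) ≤ parisiF S h β + 1 / 2 * D * (1 - I) + e * |D| := by
    obtain ⟨φ, hφ, Hφ⟩ := transfer hS h β (Function.update β p s) hs1 (by linarith [c0.2])
    refine le_of_forall_pos_le_add fun δ hδ => ?_
    obtain ⟨z, hz, hzF⟩ := exists_FF_lt S h β (c := parisiF S h β + min δ ε)
      (by linarith [lt_min hδ hε])
    obtain ⟨g1, g2⟩ := Hφ z hz
    have g3 := parisiF_le hS h (Function.update β p s) g1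
    have g4 := abs_le.1 (Hε' z hz (by linarith [min_le_right δ ε]))
    simp only [xi_update β hp, add_sub_cancel_left] at g2
    rw [meas_mul, meas_map, one_pow] at g2
    have g5 : meas 0 z (fun q => φ q ^ p) ≤ meas 0 z (fun q => q ^ p + e) := by
      refine meas_mono hz fun q hq0 hq1 => ?_
      obtain ⟨f0, f1, f2⟩ := hφ q hq0 hq1
      have f3 := hclose q hq0 hq1
      have f4 := hclose (φ q) f0 f1
      have := (abs_le.1 (Hη (φ q) q f0 f1 hq0 hq1 (by
        have f5 := abs_le.1 (f2.trans f3)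
        have f6 := abs_le.1 f4
        rw [abs_lt]
        constructor <;> linarith [f5.1, f5.2, f6.1, f6.2]))).2
      linarith
    have g6 : meas 0 z (fun q => q ^ p - e) ≤ meas 0 z (fun q => φ q ^ p) := by
      refine meas_mono hz fun q hq0 hq1 => ?_
      obtain ⟨f0, f1, f2⟩ := hφ q hq0 hq1
      have f3 := hclose q hq0 hq1
      have f4 := hclose (φ q) f0 f1
      have := (abs_le.1 (Hη (φ q) q f0 f1 hq0 hq1 (by
        have f5 := abs_le.1 (f2.trans f3)
        have f6 := abs_le.1 f4
        rw [abs_lt]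
        constructor <;> linarith [f5.1, f5.2, f6.1, f6.2]))).1
      linarith
    rw [meas_add, meas_const hz] at g5
    rw [meas_sub, meas_const hz] at g6
    have g7 : |meas 0 z (fun q => φ q ^ p) - I| ≤ 2 * e := by
      rw [abs_le]; constructor <;> linarith [g4.1, g4.2]
    have g8 : D * (I - meas 0 z (fun q => φ q ^ p)) ≤ |D| * (2 * e) := by
      refine (le_abs_self _).trans ?_
      rw [abs_mul, abs_sub_comm I]
      exact mul_le_mul_of_nonneg_left g7 (abs_nonneg _)
    linarith [min_le_left δ ε]
  -- lower bound
  have hlow : parisiF S h β + 1 / 2 * D * (1 - I) - e * |D| ≤ parisiF S h (Function.update β p s) := by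
    obtain ⟨φ, hφ, Hφ⟩ := transfer hS h (Function.update β p s) β hβ (by linarith [c1.1])
    refine le_of_forall_pos_le_add fun δ hδ => ?_
    obtain ⟨z, hz, hzF⟩ := exists_FF_lt S h (Function.update β p s)
      (c := parisiF S h (Function.update β p s) + min δ (ε / 2)) (by linarith [lt_min hδ (half_pos hε)])
    obtain ⟨g1, g2⟩ := Hφ z hz
    have g3 := parisiF_le hS h β g1
    have e1 : ∀ x, xiFn S β x - xiFn S (Function.update β p s) x = (-D) * x ^ p := by
      intro x; rw [xi_update β hp]; ring
    simp only [e1] at g2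
    rw [meas_mul, one_pow] at g2
    set w := z.map (mp φ)
    have b1 : 0 ≤ meas 0 w (fun q => q ^ p) := by
      have := meas_mono (f := fun _ => 0) (g := fun q => q ^ p) g1 fun q hq _ => pow_nonneg hq _
      rwa [meas_const g1, mul_zero] at this
    have b2 : meas 0 w (fun q => q ^ p) ≤ 1 := by
      have := meas_mono (f := fun q => q ^ p) (g := fun _ => 1) g1 fun q hq hq1 => pow_le_one₀ hq hq1
      rw [meas_const g1] at this; linarith
    have b3 : (-D) * (1 - meas 0 w (fun q => q ^ p)) ≤ |D| := by
      refine (le_abs_self _).trans ?_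
      rw [abs_mul, abs_neg]
      exact mul_le_of_le_one_right (abs_nonneg _) (abs_le.2 ⟨by linarith, by linarith⟩)
    have b4 : D * (1 - I) ≤ |D| * |1 - I| := by
      rw [← abs_mul]; exact le_abs_self _
    have b5 := abs_nonneg D
    have b6 : 0 ≤ |D| * |1 - I| := by positivity
    have g4 := abs_le.1 (Hε' w g1 (by linarith [min_le_right δ (ε / 2)]))
    have g8 : D * (meas 0 w (fun q => q ^ p) - I) ≤ |D| * e := by
      refine (le_abs_self _).trans ?_
      rw [abs_mul]
      exact mul_le_mul_of_nonneg_left (abs_le.2 g4) (abs_nonneg _)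
    have b7 : 0 ≤ e * |D| := by positivity
    linarith [min_le_left δ (ε / 2)]
  rw [abs_le]
  constructor <;> linarith

lemma deriv_main {S : Finset ℕ} (hS : ∀ p ∈ S, 0 < p) (h : ℝ) {β : ℕ → ℝ}
    (hβ : ∃ p ∈ S, 2 ≤ p ∧ β p ≠ 0) {p : ℕ} (hp : p ∈ S) {I : ℝ}
    (hI : Tendsto (fun z : GdL => meas 0 z.1 (fun q => q ^ p)) (nm S h β) (𝓝 I)) :
    HasDerivAt (fun s : ℝ => parisiF S h (Function.update β p s)) (β p * (1 - I)) (β p) := by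
  have h1 : HasDerivAt (fun s : ℝ => parisiF S h (Function.update β p s) - 1 / 2 * s ^ 2 * (1 - I)) 0 (β p) := by
    rw [hasDerivAt_iff_isLittleO, Asymptotics.isLittleO_iff]
    intro c hc
    have hK : 0 < 2 * |β p| + 1 := by positivity
    filter_upwards [expansion hS h hβ hp hI (div_pos hc hK), Metric.ball_mem_nhds (β p) one_pos] with s hs hs2
    rw [Function.update_eq_self, smul_zero, sub_zero, Real.norm_eq_abs, Real.norm_eq_abs]
    rw [Metric.mem_ball, Real.dist_eq] at hs2
    have e1 : |s ^ 2 - β p ^ 2| ≤ (2 * |β p| + 1) * |s - β p| := by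
      rw [sq_sub_sq, abs_mul]
      refine mul_le_mul_of_nonneg_right ?_ (abs_nonneg _)
      have : s + β p = 2 * β p + (s - β p) := by ring
      rw [this]
      refine (abs_add_le _ _).trans ?_
      rw [abs_mul, abs_two]; linarith
    calc _ = |parisiF S h (Function.update β p s) - parisiF S h β - 1 / 2 * (s ^ 2 - β p ^ 2) * (1 - I)| := by
          congr 1; ring
      _ ≤ _ := hs
      _ ≤ c / (2 * |β p| + 1) * ((2 * |β p| + 1) * |s - β p|) := by gcongr
      _ = _ := by field_simp
  have h2 : HasDerivAt (fun s : ℝ => 1 / 2 * s ^ 2 * (1 - I)) (β p * (1 - I)) (β p) := by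
    have := (((hasDerivAt_id (β p)).pow 2).const_mul (1 / 2)).mul_const (1 - I)
    refine this.congr_deriv ?_
    simp
  have h3 := h1.add h2
  rw [zero_add] at h3
  refine h3.congr_of_eventuallyEq (Eventually.of_forall fun s => ?_)
  simp

end PF

theorem parisiF_deriv_via_parisi_measure
    (S : Finset ℕ) (hS : ∀ p ∈ S, 0 < p) (h : ℝ) (β : ℕ → ℝ)
    (hβ : ∃ p ∈ S, 2 ≤ p ∧ β p ≠ 0) :
    ∃ μ : Measure ℝ, IsProbabilityMeasure μ ∧ μ (Set.Icc (0 : ℝ) 1)ᶜ = 0 ∧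
      ∃ op : (k : ℕ) → OrderParam (k + 1),
        (∀ k, ∀ op' : OrderParam (k + 1), parisiP S h β (op k) ≤ parisiP S h β op') ∧
        (∀ f : BoundedContinuousFunction ℝ ℝ,
          Tendsto (fun k => ∑ l ∈ Finset.Icc 1 (k + 1),
              ((op k).m l - (op k).m (l - 1)) * f ((op k).q l)) atTop
            (𝓝 (∫ q, f q ∂μ))) ∧
        Tendsto (fun k => parisiP S h β (op k)) atTop (𝓝 (parisiF S h β)) ∧
        ∀ p ∈ S,
          HasDerivAt (fun s : ℝ => parisiF S h (Function.update β p s))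
            (β p * (1 - ∫ q, q ^ p ∂μ)) (β p) := by
  obtain ⟨μ, h1, h2, h3⟩ := PF.exists_parisi_measure hS h hβ
  obtain ⟨op, h4, h5⟩ := PF.exists_minimizers hS h β
  refine ⟨μ, h1, h2, op, h4, fun f => ?_, h5, fun p hp => ?_⟩
  · have h6 : Tendsto (fun k => (⟨_, PF.op_Gd0 (op k)⟩ : PF.GdL)) atTop (PF.nm S h β) := by
      rw [PF.nm, tendsto_comap_iff]
      refine h5.congr fun k => ?_
      exact PF.parisiP_eq h (by omega) (op k)
    refine ((h3 f f.continuous).comp h6).congr fun k => ?_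
    exact (PF.meas_op (op k) f).symm
  · exact PF.deriv_main hS h hβ hp (h3 _ (continuous_pow p))
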